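/- arXiv:math/0607598 — 4 statements merged into one kernel-verified Lean document; each statement's English description precedes it below -/
import Mathlib

section
/- Let f be a quasiperiodically forced circle homeomorphism over an irrational ω, and suppose f is semi-conjugate to the irrational torus translation R(θ,x) := (θ+ω, x+ρ): there is a continuous surjective map h : T¹×T¹ → T¹×T¹ with π₁∘h = π₁ and h∘f = R∘h, whose fiber maps h_θ are monotone circle maps of degree one (h admits a lift H(θ,x) = (θ, H_θ(x)) with each H_θ : ℝ → ℝ continuous, nondecreasing and H_θ(x+1) = H_θ(x)+1), and assume ω, ρ and 1 are rationally independent. Then μ(A) := λ²(h(A)) (Lebesgue–Haar outer measure on T¹×T¹ of the image set), defined for Borel sets A ⊆ T¹×T¹, is an f-invariant ergodic Borel probability measure; moreover μ(A) = ∫_{T¹} μ_θ(A_θ) dθ where μ_θ(B) := λ(h_θ(B)) for Borel B ⊆ T¹, each μ_θ is an atomless Borel probability measure on T¹, and (f_θ)_* μ_θ = μ_{θ+ω} for every θ. -/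
open Filter Topology MeasureTheory
open scoped ENNReal

noncomputable section

/-- The circle `T¹ = ℝ/ℤ`. -/
abbrev T1 := AddCircle (1 : ℝ)

/-- Fiberwise iterate of the skew product: `fiberIter ω F n θ x = F^n_θ(x)`. -/
def fiberIter (ω : ℝ) (F : T1 → ℝ → ℝ) : ℕ → T1 → ℝ → ℝ
  | 0, _, x => x
  | n + 1, θ, x => fiberIter ω F n (θ + (ω : T1)) (F θ x)

/-- `F` is (the fiber part of) a lift of a quasiperiodically forced circle homeomorphism
over `ω`: `F(θ,x) = (θ+ω, F_θ(x))`, each `F_θ` a strictly increasing homeomorphism of `ℝ`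
commuting with `x ↦ x+1`. -/
structure IsQpfLift (ω : ℝ) (F : T1 → ℝ → ℝ) : Prop where
  cont : Continuous fun p : T1 × ℝ => F p.1 p.2
  mono : ∀ θ, StrictMono (F θ)
  surj : ∀ θ, Function.Surjective (F θ)
  per  : ∀ θ x, F θ (x + 1) = F θ x + 1

/-- `ρ` is the fibered rotation number of the lift `F`. -/
def HasRotNum (ω : ℝ) (F : T1 → ℝ → ℝ) (ρ : ℝ) : Prop :=
  ∀ θ x, Tendsto (fun n : ℕ => (fiberIter ω F n θ x - x) / n) atTop (𝓝 ρ)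

/-!
A monotone circle map of degree one has at most countably many values that it takes more than once,
since the corresponding level sets of its lift are disjoint nondegenerate intervals. By Fubini's
theorem the semiconjugacy `h` is therefore injective off the preimage of a null set, so that
`A ↦ λ²(h(A))` is countably additive and `h` becomes an isomorphism modulo null sets from this
measure to Lebesgue measure. Invariance, ergodicity and disintegration are transported from the
torus translation `R` to `f` along `h`. Ergodicity of `R` is a consequence of its unique ergodicity:
for an invariant measure, the Fourier coefficient at a nonzero frequency is multiplied by a number
other than `1` under `R`, hence vanishes.
-/

section AEEmbedding

variable {X Y : Type*}

/-- The values that `h` takes at two or more points, i.e. the obstruction to inverting `h`. -/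
def multipleValues (h : X → Y) : Set Y :=
  {y | (h ⁻¹' {y}).Nontrivial}

lemma mem_multipleValues_of_ne {h : X → Y} {x x' : X} (hne : x ≠ x') (heq : h x = h x') :
    h x ∈ multipleValues h :=
  ⟨x, rfl, x', heq.symm, hne⟩

lemma image_inter_image_subset_multipleValues (h : X → Y) {A B : Set X} (hAB : Disjoint A B) :
    h '' A ∩ h '' B ⊆ multipleValues h := by
  rintro _ ⟨⟨x, hx, rfl⟩, x', hx', heq⟩
  exact mem_multipleValues_of_ne (hAB.ne_of_mem hx hx') heq.symm

lemma injOn_compl_preimage_multipleValues (h : X → Y) :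
    Set.InjOn h (h ⁻¹' multipleValues h)ᶜ :=
  fun _ hx _ _ heq ↦ by_contra fun hne ↦ hx (mem_multipleValues_of_ne hne heq)

lemma multipleValues_eq_image (h : X → Y) :
    multipleValues h =
      (fun z : X × X ↦ h z.1) '' ((Set.diagonal X)ᶜ ∩ {z | h z.1 = h z.2}) := by
  ext y
  constructor
  · rintro ⟨x, rfl, x', heq, hne⟩
    exact ⟨(x, x'), ⟨hne, Eq.symm heq⟩, rfl⟩
  · rintro ⟨⟨x, x'⟩, ⟨hne, heq⟩, rfl⟩
    exact mem_multipleValues_of_ne hne heq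

variable [MeasurableSpace X] [MeasurableSpace Y]

/-- A map which is injective outside a null set of values and has null measurable images of
measurable sets. This is what is needed for `A ↦ ν (h '' A)` to be countably additive on the
measurable sets, see `IsAEEmbedding.comap`. -/
structure IsAEEmbedding (h : X → Y) (ν : Measure Y) : Prop where
  nullMeasurableSet_image : ∀ ⦃A : Set X⦄, MeasurableSet A → NullMeasurableSet (h '' A) ν
  measure_multipleValues : ν (multipleValues h) = 0

namespace IsAEEmbedding

variable {h : X → Y} {ν : Measure Y}

lemma aedisjoint_image (hh : IsAEEmbedding h ν) {A B : Set X} (hAB : Disjoint A B) :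
    AEDisjoint ν (h '' A) (h '' B) :=
  measure_mono_null (image_inter_image_subset_multipleValues h hAB) hh.measure_multipleValues

/-- The measure `A ↦ ν (h '' A)`. Unlike Mathlib's `MeasureTheory.Measure.comap`, which is zero by
convention unless `h` is injective, it allows for a null set of multiple values. -/
def comap (hh : IsAEEmbedding h ν) : Measure X :=
  Measure.ofMeasurable (fun A _ ↦ ν (h '' A)) (by simp) fun A hA hdisj ↦ by
    rw [Set.image_iUnion]
    exact measure_iUnion₀ (fun i j hij ↦ hh.aedisjoint_image (hdisj hij))
      fun i ↦ hh.nullMeasurableSet_image (hA i)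

lemma comap_apply (hh : IsAEEmbedding h ν) {A : Set X} (hA : MeasurableSet A) :
    hh.comap A = ν (h '' A) :=
  Measure.ofMeasurable_apply A hA

lemma isProbabilityMeasure_comap [IsProbabilityMeasure ν] (hh : IsAEEmbedding h ν)
    (hs : Function.Surjective h) : IsProbabilityMeasure hh.comap :=
  ⟨by rw [hh.comap_apply .univ, Set.image_univ, hs.range_eq, measure_univ]⟩

lemma comap_singleton [MeasurableSingletonClass X] [NullSingletonClass ν]
    (hh : IsAEEmbedding h ν) (x : X) : hh.comap {x} = 0 := by
  rw [hh.comap_apply (measurableSet_singleton x), Set.image_singleton, measure_singleton]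

section Semiconj

variable {X' Y' : Type*} [MeasurableSpace X'] [MeasurableSpace Y'] {h' : X' → Y'} {ν' : Measure Y'}
  {f : X → X'} {R : Y → Y'}

omit [MeasurableSpace X] in
lemma image_preimage_ae_eq (hh' : IsAEEmbedding h' ν') (hs : Function.Surjective h)
    (hR : Measure.QuasiMeasurePreserving R ν ν') (hsemi : ∀ x, h' (f x) = R (h x)) (A : Set X') :
    h '' (f ⁻¹' A) =ᵐ[ν] R ⁻¹' (h' '' A) := by
  have image_subset : h '' (f ⁻¹' A) ⊆ R ⁻¹' (h' '' A) := by
    rintro _ ⟨x, hx, rfl⟩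
    exact ⟨f x, hx, hsemi x⟩
  have diff_subset : R ⁻¹' (h' '' A) \ h '' (f ⁻¹' A) ⊆ R ⁻¹' multipleValues h' := by
    rintro y ⟨⟨a, ha, hay⟩, hy⟩
    obtain ⟨x, rfl⟩ := hs y
    have hne : f x ≠ a := fun hfx ↦ hy ⟨x, by rwa [← hfx] at ha, rfl⟩
    rw [Set.mem_preimage, ← hsemi]
    exact mem_multipleValues_of_ne hne ((hsemi x).trans hay.symm)
  refine ae_eq_set.2 ⟨by rw [Set.sdiff_eq_empty.2 image_subset, measure_empty], ?_⟩
  exact measure_mono_null diff_subset (hR.preimage_null hh'.measure_multipleValues)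

lemma measurePreserving_comap (hh : IsAEEmbedding h ν) (hh' : IsAEEmbedding h' ν')
    (hs : Function.Surjective h) (hf : Measurable f) (hR : MeasurePreserving R ν ν')
    (hsemi : ∀ x, h' (f x) = R (h x)) : MeasurePreserving f hh.comap hh'.comap := by
  refine ⟨hf, Measure.ext fun A hA ↦ ?_⟩
  calc hh.comap.map f A = ν (h '' (f ⁻¹' A)) := by
        rw [Measure.map_apply hf hA, hh.comap_apply (hf hA)]
    _ = ν (R ⁻¹' (h' '' A)) :=
      measure_congr (hh'.image_preimage_ae_eq hs hR.quasiMeasurePreserving hsemi A)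
    _ = ν' (h' '' A) := hR.measure_preimage (hh'.nullMeasurableSet_image hA)
    _ = hh'.comap A := (hh'.comap_apply hA).symm

end Semiconj

lemma ergodic_comap {f : X → X} {R : Y → Y} (hh : IsAEEmbedding h ν) (hs : Function.Surjective h)
    (hf : Measurable f) (hR : Ergodic R ν) (hsemi : Function.Semiconj h f R) :
    Ergodic f hh.comap := by
  refine ⟨hh.measurePreserving_comap hh hs hf hR.toMeasurePreserving hsemi, ⟨fun A hA hinv ↦ ?_⟩⟩
  have image_invariant : R ⁻¹' (h '' A) =ᵐ[ν] h '' A := by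
    simpa only [hinv] using (hh.image_preimage_ae_eq hs
      hR.toMeasurePreserving.quasiMeasurePreserving hsemi A).symm
  rw [eventuallyConst_set', ae_eq_empty, ae_eq_univ, hh.comap_apply hA, hh.comap_apply hA.compl]
  refine (hR.quasiErgodic.ae_empty_or_univ₀ (hh.nullMeasurableSet_image hA) image_invariant).imp
    ae_eq_empty.1 fun image_eq_univ ↦ ?_
  calc ν (h '' Aᶜ) = ν (h '' Aᶜ ∩ h '' A) := by
        rw [measure_congr ((ae_eq_refl (h '' Aᶜ)).inter image_eq_univ), Set.inter_univ]
    _ = 0 := hh.aedisjoint_image disjoint_compl_left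

end IsAEEmbedding

end AEEmbedding

section Continuous

variable {X Y : Type*} [TopologicalSpace X] [TopologicalSpace Y] [T2Space Y]
  {h : X → Y}

lemma isSigmaCompact_multipleValues [SigmaCompactSpace X] [TopologicalSpace.MetrizableSpace X]
    (hc : Continuous h) : IsSigmaCompact (multipleValues h) := by
  let := TopologicalSpace.metrizableSpaceMetric X
  obtain ⟨F, hF, -, hFU, -⟩ :=
    (isClosed_diagonal (X := X)).isOpen_compl.exists_iUnion_isClosed
  have level_closed : IsClosed {z : X × X | h z.1 = h z.2} :=
    isClosed_eq (by fun_prop) (by fun_prop)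
  rw [multipleValues_eq_image, ← hFU, Set.iUnion_inter]
  refine IsSigmaCompact.image (by fun_prop) (isSigmaCompact_iUnion _ fun n ↦ ?_)
  exact isSigmaCompact_univ.of_isClosed_subset ((hF n).inter level_closed) (Set.subset_univ _)

lemma measurableSet_of_isSigmaCompact [MeasurableSpace Y] [OpensMeasurableSpace Y] {s : Set Y}
    (hs : IsSigmaCompact s) : MeasurableSet s := by
  obtain ⟨K, hK, rfl⟩ := hs
  exact .iUnion fun n ↦ (hK n).measurableSet

variable [SigmaCompactSpace X] [MeasurableSpace Y]

lemma measurableSet_multipleValues [TopologicalSpace.MetrizableSpace X] [OpensMeasurableSpace Y]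
    (hc : Continuous h) : MeasurableSet (multipleValues h) :=
  measurableSet_of_isSigmaCompact (isSigmaCompact_multipleValues hc)

lemma isAEEmbedding_of_continuous [PolishSpace X] [MeasurableSpace X] [BorelSpace X]
    [BorelSpace Y] {ν : Measure Y} (hc : Continuous h) (h0 : ν (multipleValues h) = 0) :
    IsAEEmbedding h ν where
  nullMeasurableSet_image A hA := by
    have off_multipleValues : MeasurableSet (h '' (A \ h ⁻¹' multipleValues h)) :=
      (hA.diff (hc.measurable (measurableSet_multipleValues hc))).image_of_continuousOn_injOn
        hc.continuousOn ((injOn_compl_preimage_multipleValues h).mono fun _ hx ↦ hx.2)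
    rw [Set.image_sdiff_preimage] at off_multipleValues
    exact off_multipleValues.nullMeasurableSet.congr (sdiff_null_ae_eq_self h0)
  measure_multipleValues := h0

end Continuous

section FiberMap

variable {Θ Θ' X Y : Type*}

/-- The fiber map `f_θ` of a map `f : Θ × X → Θ' × Y`, of interest when the first coordinate of
`f (θ, x)` depends on `θ` only. -/
def fiberMap (f : Θ × X → Θ' × Y) (θ : Θ) (x : X) : Y :=
  (f (θ, x)).2

variable {h : Θ × X → Θ × Y}

lemma preimage_mk_image (hfst : ∀ p, (h p).1 = p.1) (A : Set (Θ × X)) (θ : Θ) :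
    Prod.mk θ ⁻¹' (h '' A) = fiberMap h θ '' (Prod.mk θ ⁻¹' A) := by
  ext y
  constructor
  · rintro ⟨⟨θ', x⟩, hx, heq⟩
    obtain rfl : θ' = θ := (hfst _).symm.trans (congrArg Prod.fst heq)
    exact ⟨x, hx, congrArg Prod.snd heq⟩
  · rintro ⟨x, hx, rfl⟩
    exact ⟨(θ, x), hx, Prod.ext (hfst _) rfl⟩

lemma preimage_singleton_mk (hfst : ∀ p, (h p).1 = p.1) (θ : Θ) (y : Y) :
    h ⁻¹' {(θ, y)} = Prod.mk θ '' (fiberMap h θ ⁻¹' {y}) := by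
  ext ⟨θ', x⟩
  constructor
  · intro heq
    obtain rfl : θ' = θ := (hfst _).symm.trans (congrArg Prod.fst heq)
    exact ⟨x, congrArg Prod.snd heq, rfl⟩
  · rintro ⟨x', rfl, heq⟩
    rw [← heq]
    exact Prod.ext (hfst _) rfl

lemma preimage_mk_multipleValues (hfst : ∀ p, (h p).1 = p.1) (θ : Θ) :
    Prod.mk θ ⁻¹' multipleValues h = multipleValues (fiberMap h θ) := by
  ext y
  change (h ⁻¹' {(θ, y)}).Nontrivial ↔ _
  rw [preimage_singleton_mk hfst]
  exact ⟨Set.nontrivial_of_image _ _, fun hy ↦ hy.image (Prod.mk_right_injective θ)⟩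

lemma surjective_fiberMap (hfst : ∀ p, (h p).1 = p.1) (hs : Function.Surjective h) (θ : Θ) :
    Function.Surjective (fiberMap h θ) := by
  have image_univ := preimage_mk_image hfst Set.univ θ
  simp only [Set.image_univ, hs.range_eq, Set.preimage_univ] at image_univ
  exact Set.range_eq_univ.1 image_univ.symm

lemma continuous_fiberMap [TopologicalSpace Θ] [TopologicalSpace Θ'] [TopologicalSpace X]
    [TopologicalSpace Y] {f : Θ × X → Θ' × Y} (hf : Continuous f) (θ : Θ) :
    Continuous (fiberMap f θ) :=
  hf.snd.comp (by fun_prop)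

variable [MeasurableSpace Θ] [MeasurableSpace Θ'] [MeasurableSpace X] [MeasurableSpace Y]

lemma measurable_fiberMap {f : Θ × X → Θ' × Y} (hf : Measurable f) (θ : Θ) :
    Measurable (fiberMap f θ) :=
  hf.snd.comp measurable_prodMk_left

lemma prod_apply_of_nullMeasurableSet {κ : Measure Θ} {τ : Measure Y} [SFinite τ]
    {s : Set (Θ × Y)} (hs : NullMeasurableSet s (κ.prod τ)) :
    κ.prod τ s = ∫⁻ θ, τ (Prod.mk θ ⁻¹' s) ∂κ := by
  obtain ⟨t, -, ht, hts⟩ := hs.exists_measurable_superset_ae_eq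
  rw [← measure_congr hts, Measure.prod_apply ht]
  refine lintegral_congr_ae ?_
  filter_upwards [Measure.ae_ae_of_ae_prod hts] with θ hθ
  exact measure_congr hθ

lemma comap_prod_apply {κ : Measure Θ} {τ : Measure Y} [SFinite τ] (hfst : ∀ p, (h p).1 = p.1)
    (hh : IsAEEmbedding h (κ.prod τ)) (hfib : ∀ θ, IsAEEmbedding (fiberMap h θ) τ)
    {A : Set (Θ × X)} (hA : MeasurableSet A) :
    hh.comap A = ∫⁻ θ, (hfib θ).comap (Prod.mk θ ⁻¹' A) ∂κ := by
  rw [hh.comap_apply hA, prod_apply_of_nullMeasurableSet (hh.nullMeasurableSet_image hA)]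
  refine lintegral_congr fun θ ↦ ?_
  rw [preimage_mk_image hfst, (hfib θ).comap_apply (measurable_prodMk_left hA)]

end FiberMap

lemma isAEEmbedding_prod_of_continuous {Θ X Y : Type*}
    [TopologicalSpace Θ] [PolishSpace Θ] [SigmaCompactSpace Θ] [MeasurableSpace Θ] [BorelSpace Θ]
    [TopologicalSpace X] [PolishSpace X] [SigmaCompactSpace X] [MeasurableSpace X] [BorelSpace X]
    [TopologicalSpace Y] [T2Space Y] [MeasurableSpace Y] [BorelSpace Y]
    {κ : Measure Θ} {τ : Measure Y} [SFinite τ] {h : Θ × X → Θ × Y} (hc : Continuous h)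
    (hfst : ∀ p, (h p).1 = p.1) (h0 : ∀ᵐ θ ∂κ, τ (multipleValues (fiberMap h θ)) = 0) :
    IsAEEmbedding h (κ.prod τ) := by
  refine isAEEmbedding_of_continuous hc ?_
  rw [Measure.measure_prod_null (measurableSet_multipleValues hc)]
  simp only [preimage_mk_multipleValues hfst]
  exact h0

section Circle

instance isProbabilityMeasure_volume_T1 : IsProbabilityMeasure (volume : Measure T1) :=
  ⟨by rw [AddCircle.measure_univ, ENNReal.ofReal_one]⟩

instance nullSingletonClass_volume_addCircle (T : ℝ) [Fact (0 < T)] :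
    NullSingletonClass (volume : Measure (AddCircle T)) :=
  ⟨fun x ↦ by rw [← Metric.closedBall_zero, AddCircle.volume_closedBall]; simp⟩

lemma countable_multipleValues_of_circleDeg1Lift (H : CircleDeg1Lift) {g : T1 → T1}
    (hg : ∀ x : ℝ, g x = (H x : ℝ)) : (multipleValues g).Countable := by
  refine (H.monotone.countable_setOfPred_two_preimages.image ((↑) : ℝ → T1)).mono ?_
  rintro _ ⟨p, rfl, q, hpq, hne⟩
  -- For lifts `a < b < a + 1` of `p` and `q`, the integer `H b - H a` is `0` or `1`. Hence `H` is
  -- constant on `[a, b]` or on `[b, a + 1]`.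
  obtain ⟨a, rfl⟩ := QuotientAddGroup.mk_surjective p
  obtain ⟨b, ⟨hab, hba⟩, rfl⟩ := (AddCircle.coe_image_Ico_eq (1 : ℝ) a).ge (Set.mem_univ q)
  have hlt : a < b := hab.lt_of_ne fun heq ↦ hne (congrArg _ heq)
  obtain ⟨n, hn⟩ : ∃ n : ℤ, (n : ℝ) = H b - H a := by
    have sub_eq_zero : ((H b - H a : ℝ) : T1) = 0 := by
      rw [AddCircle.coe_sub, ← hg, ← hg, sub_eq_zero]; exact hpq
    simpa using (AddCircle.coe_eq_zero_iff (1 : ℝ)).1 sub_eq_zero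
  have hn0 : 0 ≤ n := by exact_mod_cast hn ▸ sub_nonneg.2 (H.monotone hab)
  have hn1 : n ≤ 1 := by
    have hab1 := H.monotone hba.le
    rw [H.map_add_one] at hab1
    exact_mod_cast (by linarith : (n : ℝ) ≤ 1)
  obtain rfl | rfl : n = 0 ∨ n = 1 := by omega
  · exact ⟨H a, ⟨a, b, hlt, rfl, by push_cast at hn; linarith⟩, (hg a).symm⟩
  · refine ⟨H b, ⟨b, a + 1, hba, rfl, ?_⟩, (hg b).symm.trans hpq⟩
    rw [H.map_add_one]
    push_cast at hn
    linarith

end Circle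

section Torus

lemma ergodic_of_forall_invariant_eq_smul {X : Type*} [MeasurableSpace X] {f : X → X}
    {μ : Measure X} [IsFiniteMeasure μ] (hf : MeasurePreserving f μ μ)
    (huniq : ∀ ν : Measure X, IsFiniteMeasure ν → MeasurePreserving f ν ν → ∃ c : ℝ≥0∞, ν = c • μ) :
    Ergodic f μ := by
  refine ⟨hf, ⟨fun A hA hinv ↦ ?_⟩⟩
  obtain ⟨c, hc⟩ := huniq (μ.restrict A) inferInstance
    (by simpa only [hinv] using hf.restrict_preimage hA)
  have mul_compl_eq_zero : c * μ Aᶜ = 0 := by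
    rw [← smul_eq_mul, ← Measure.smul_apply, ← hc, Measure.restrict_apply hA.compl,
      Set.compl_inter_self, measure_empty]
  rw [eventuallyConst_set', ae_eq_empty, ae_eq_univ]
  refine (mul_eq_zero.1 mul_compl_eq_zero).imp_left fun hc0 ↦ ?_
  rw [← Measure.restrict_apply_univ A, hc, hc0, zero_smul, Measure.coe_zero, Pi.zero_apply]

open UnitAddTorus

variable {d : Type*} [Fintype d]

lemma mFourier_eq_toCircle_sum (n : d → ℤ) (x : UnitAddTorus d) :
    mFourier n x = AddCircle.toCircle (∑ i, n i • x i) :=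
  (map_prod (Circle.coeHom.comp (AddCircle.toCircle_addChar (T := 1)).toMonoidHom)
    (fun i ↦ Multiplicative.ofAdd (n i • x i)) Finset.univ).symm

lemma mFourier_apply_add (n : d → ℤ) (x y : UnitAddTorus d) :
    mFourier n (x + y) = mFourier n x * mFourier n y := by
  simp only [mFourier_eq_toCircle_sum, Pi.add_apply, smul_add, Finset.sum_add_distrib,
    AddCircle.toCircle_add, Circle.coe_mul]

lemma mFourier_coe_ne_one {a : d → ℝ}
    (hind : ∀ (n : d → ℤ) (m : ℤ), ∑ i, n i * a i + m = 0 → n = 0) {n : d → ℤ} (hn : n ≠ 0) :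
    mFourier n (fun i ↦ (a i : UnitAddCircle)) ≠ 1 := by
  intro heq
  rw [mFourier_eq_toCircle_sum, Circle.coe_eq_one, ← AddCircle.toCircle_zero] at heq
  have sum_eq_zero : ((∑ i, n i * a i : ℝ) : UnitAddCircle) = 0 := by
    simpa using AddCircle.injective_toCircle one_ne_zero heq
  obtain ⟨m, hm⟩ := (AddCircle.coe_eq_zero_iff (1 : ℝ)).1 sum_eq_zero
  exact hn (hind n (-m) (by rw [← hm, zsmul_one, Int.cast_neg, add_neg_cancel]))

lemma measure_ext_of_integral_mFourier {μ ν : Measure (UnitAddTorus d)} [IsFiniteMeasure μ]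
    [IsFiniteMeasure ν] (heq : ∀ n, ∫ x, mFourier n x ∂μ = ∫ x, mFourier n x ∂ν) : μ = ν := by
  have integral_eq : ∀ g ∈ Submodule.span ℂ (Set.range (mFourier (d := d))),
      ∫ x, g x ∂μ = ∫ x, g x ∂ν := by
    have integrable (ξ : Measure (UnitAddTorus d)) [IsFiniteMeasure ξ] (g : C(UnitAddTorus d, ℂ)) :
        Integrable g ξ := (BoundedContinuousFunction.mkOfCompact g).integrable ξ
    intro g hg
    induction hg using Submodule.span_induction with
    | mem g hg => obtain ⟨n, rfl⟩ := hg; exact heq n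
    | zero => simp
    | add g g' _ _ hg hg' =>
      simp only [ContinuousMap.add_apply, integral_add (integrable _ g) (integrable _ g'), hg, hg']
    | smul c g _ hg => simp only [ContinuousMap.smul_apply, integral_smul, hg]
  rw [← mFourierSubalgebra_coe] at integral_eq
  refine ext_of_forall_mem_subalgebra_integral_eq_of_polish (𝕜 := ℂ)
    (A := (mFourierSubalgebra d).comap (BoundedContinuousFunction.toContinuousMapStarₐ ℂ)) ?_
    fun g hg ↦ integral_eq _ hg
  intro x y hxy
  obtain ⟨_, ⟨g, hg, rfl⟩, hne⟩ := mFourierSubalgebra_separatesPoints hxy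
  exact ⟨g, ⟨g, ⟨BoundedContinuousFunction.mkOfCompact g, hg, rfl⟩, rfl⟩, hne⟩

variable {a : UnitAddTorus d}

lemma integral_mFourier_eq_zero_of_invariant {ν : Measure (UnitAddTorus d)}
    (hν : MeasurePreserving (· + a) ν ν) {n : d → ℤ} (hn : mFourier n a ≠ 1) :
    ∫ x, mFourier n x ∂ν = 0 := by
  have invariance : ∫ x, mFourier n x ∂ν = (∫ x, mFourier n x ∂ν) * mFourier n a := by
    conv_lhs => rw [← hν.integral_comp (measurableEmbedding_addRight a)]
    simp only [mFourier_apply_add, integral_mul_const]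
  exact (mul_right_eq_self₀.1 invariance.symm).resolve_left hn

lemma eq_smul_volume_of_invariant (ha : ∀ n ≠ 0, mFourier n a ≠ 1)
    {ν : Measure (UnitAddTorus d)} [IsFiniteMeasure ν] (hν : MeasurePreserving (· + a) ν ν) :
    ν = ν Set.univ • volume := by
  have : IsFiniteMeasure (ν Set.univ • (volume : Measure (UnitAddTorus d))) :=
    Measure.smul_finite _ (measure_ne_top _ _)
  refine measure_ext_of_integral_mFourier fun n ↦ ?_
  rw [integral_smul_measure]
  obtain rfl | hn := eq_or_ne n 0
  · simp [mFourier_zero, Measure.real]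
  · rw [integral_mFourier_eq_zero_of_invariant hν (ha n hn),
      integral_mFourier_eq_zero_of_invariant (measurePreserving_add_right volume a) (ha n hn),
      smul_zero]

lemma ergodic_add_right_of_mFourier_ne_one (ha : ∀ n ≠ 0, mFourier n a ≠ 1) :
    Ergodic (· + a) (volume : Measure (UnitAddTorus d)) :=
  ergodic_of_forall_invariant_eq_smul (measurePreserving_add_right volume a)
    fun ν _ hν ↦ ⟨ν Set.univ, eq_smul_volume_of_invariant ha hν⟩

end Torus

lemma ergodic_add_right_of_rationally_independent {ω ρ : ℝ}
    (hind : ∀ a b c : ℤ, (a : ℝ) * ω + (b : ℝ) * ρ + (c : ℝ) = 0 → a = 0 ∧ b = 0 ∧ c = 0) :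
    Ergodic (fun p : T1 × T1 ↦ (p.1 + (ω : T1), p.2 + (ρ : T1))) volume := by
  have pair_independent (n : Fin 2 → ℤ) (m : ℤ) (hnm : ∑ i, n i * ![ω, ρ] i + m = 0) : n = 0 := by
    obtain ⟨h0, h1, -⟩ := hind (n 0) (n 1) m (by simpa [Fin.sum_univ_two] using hnm)
    ext i
    fin_cases i
    exacts [h0, h1]
  have ergodic_pi := ergodic_add_right_of_mFourier_ne_one
    (fun n hn ↦ mFourier_coe_ne_one pair_independent hn)
  exact (volume_preserving_finTwoArrow T1).ergodic_conjugate_iff.2 ergodic_pi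

theorem semiconjugacy_measure_construction_general {Θ : Type*} [TopologicalSpace Θ] [PolishSpace Θ]
    [SigmaCompactSpace Θ] [MeasurableSpace Θ] [BorelSpace Θ] {κ : Measure Θ}
    [IsProbabilityMeasure κ] {S : Θ → Θ} {ρ : Θ → T1}
    (hR : Ergodic (fun p : Θ × T1 ↦ (S p.1, p.2 + ρ p.1)) (κ.prod volume))
    {f : Θ × T1 → Θ × T1} (hf : Measurable f) {h : Θ × T1 → Θ × T1} (hc : Continuous h)
    (hs : Function.Surjective h)
    (hsemi : Function.Semiconj h f fun p ↦ (S p.1, p.2 + ρ p.1))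
    (H : Θ → CircleDeg1Lift) (hH : ∀ θ (x : ℝ), h (θ, (x : T1)) = (θ, ((H θ x : ℝ) : T1))) :
    ∃ μ : Measure (Θ × T1),
      (∀ A, MeasurableSet A → μ A = κ.prod volume (h '' A)) ∧
      IsProbabilityMeasure μ ∧ MeasurePreserving f μ μ ∧ Ergodic f μ ∧
      ∃ μθ : Θ → Measure T1,
        (∀ θ B, MeasurableSet B → μθ θ B = volume (fiberMap h θ '' B)) ∧
        (∀ θ, IsProbabilityMeasure (μθ θ)) ∧
        (∀ θ x, μθ θ {x} = 0) ∧
        (∀ A, MeasurableSet A → μ A = ∫⁻ θ, μθ θ (Prod.mk θ ⁻¹' A) ∂κ) ∧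
        (∀ θ, (μθ θ).map (fiberMap f θ) = μθ (S θ)) := by
  have hfst (p : Θ × T1) : (h p).1 = p.1 := by
    obtain ⟨θ, x⟩ := p
    obtain ⟨a, rfl⟩ := QuotientAddGroup.mk_surjective x
    rw [hH]
  have hf_eq (θ : Θ) (x : T1) : f (θ, x) = (S θ, fiberMap f θ x) := by
    refine Prod.ext ?_ rfl
    rw [← hfst, hsemi.eq, hfst]
  have fiber_null (θ : Θ) : volume (multipleValues (fiberMap h θ)) = 0 :=
    (countable_multipleValues_of_circleDeg1Lift (H θ)
      fun x ↦ congrArg Prod.snd (hH θ x)).measure_zero _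
  have hh : IsAEEmbedding h (κ.prod volume) :=
    isAEEmbedding_prod_of_continuous hc hfst (.of_forall fiber_null)
  have hfib (θ : Θ) : IsAEEmbedding (fiberMap h θ) volume :=
    isAEEmbedding_of_continuous (continuous_fiberMap hc θ) (fiber_null θ)
  have fiber_semiconj (θ : Θ) (x : T1) :
      fiberMap h (S θ) (fiberMap f θ x) = fiberMap h θ x + ρ θ := by
    have snd_eq := congrArg Prod.snd (hsemi.eq (θ, x))
    rwa [hf_eq, hfst] at snd_eq
  have fiber_surjective (θ : Θ) : Function.Surjective (fiberMap h θ) :=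
    surjective_fiberMap hfst hs θ
  have ergodic : Ergodic f hh.comap := hh.ergodic_comap hs hf hR hsemi
  exact ⟨hh.comap, fun A hA ↦ hh.comap_apply hA, hh.isProbabilityMeasure_comap hs,
    ergodic.toMeasurePreserving, ergodic, fun θ ↦ (hfib θ).comap,
    fun θ B hB ↦ (hfib θ).comap_apply hB,
    fun θ ↦ (hfib θ).isProbabilityMeasure_comap (fiber_surjective θ),
    fun θ x ↦ (hfib θ).comap_singleton x,
    fun A hA ↦ comap_prod_apply hfst hh hfib hA,
    fun θ ↦ ((hfib θ).measurePreserving_comap (hfib (S θ)) (fiber_surjective θ)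
      (measurable_fiberMap hf θ) (measurePreserving_add_right volume (ρ θ))
      (fiber_semiconj θ)).map_eq⟩

/-- the push-forward construction `μ(A) := λ²(h(A))` along a
fiber-respecting semi-conjugacy `h` to an irrational torus translation yields an
`f`-invariant ergodic probability measure that disintegrates into the atomless fiber
measures `μ_θ(B) := λ(h_θ(B))`, which are moved to one another by the fiber maps of `f`. -/
theorem semiconjugacy_measure_construction
    (ω : ℝ) (hω : Irrational ω)
    (F : T1 → ℝ → ℝ) (hF : IsQpfLift ω F)
    (f : T1 × T1 → T1 × T1) (hfc : Continuous f)
    (hfproj : ∀ (θ : T1) (x : ℝ), f (θ, (x : T1)) = (θ + (ω : T1), ((F θ x : ℝ) : T1)))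
    (ρ : ℝ)
    (h : T1 × T1 → T1 × T1) (hhc : Continuous h) (hhs : Function.Surjective h)
    (hπ : ∀ p : T1 × T1, (h p).1 = p.1)
    (hsemi : ∀ p : T1 × T1, h (f p) = ((h p).1 + (ω : T1), (h p).2 + (ρ : T1)))
    (H : T1 → ℝ → ℝ)
    (hHc : ∀ θ, Continuous (H θ)) (hHm : ∀ θ, Monotone (H θ))
    (hHper : ∀ (θ : T1) (x : ℝ), H θ (x + 1) = H θ x + 1)
    (hHproj : ∀ (θ : T1) (x : ℝ), h (θ, (x : T1)) = (θ, ((H θ x : ℝ) : T1)))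
    (hind : ∀ a b c : ℤ, (a : ℝ) * ω + (b : ℝ) * ρ + (c : ℝ) = 0 → a = 0 ∧ b = 0 ∧ c = 0) :
    ∃ μ : Measure (T1 × T1),
      (∀ A : Set (T1 × T1), MeasurableSet A → μ A = volume (h '' A)) ∧
      IsProbabilityMeasure μ ∧ MeasurePreserving f μ μ ∧ Ergodic f μ ∧
      ∃ μθ : T1 → Measure T1,
        (∀ (θ : T1) (B : Set T1), MeasurableSet B →
          μθ θ B = volume ((fun x : T1 => (h (θ, x)).2) '' B)) ∧
        (∀ θ, IsProbabilityMeasure (μθ θ)) ∧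
        (∀ (θ : T1) (x : T1), μθ θ {x} = 0) ∧
        (∀ A : Set (T1 × T1), MeasurableSet A →
          μ A = ∫⁻ θ, μθ θ {x : T1 | (θ, x) ∈ A}) ∧
        (∀ θ : T1, (μθ θ).map (fun x => (f (θ, x)).2) = μθ (θ + (ω : T1))) := by
  exact semiconjugacy_measure_construction_general (κ := volume) (ρ := fun _ ↦ ρ)
    (ergodic_add_right_of_rationally_independent hind) hfc.measurable hhc hhs hsemi
    (fun θ ↦ ⟨⟨H θ, hHm θ⟩, hHper θ⟩) hHproj
end
end

section
/- Let f be a quasiperiodically forced circle homeomorphism over an irrational ω with lift F whose fibered rotation number is 0, and suppose there exists an F-invariant strip. (i) If for some ε > 0 the fibered rotation number of F_ε equals 0, then there exist a continuous curve γ⁺ : T¹ → ℝ and an integer N ≥ 1 such that F^N_θ(γ⁺(θ)) < γ⁺(θ+Nω) for every θ, i.e. γ⁺ is mapped strictly below itself by the N-th iterate of F. (ii) If for some ε > 0 the fibered rotation number of F_{−ε} equals 0, then there exist a continuous curve γ⁻ : T¹ → ℝ and an integer N ≥ 1 such that F^N_θ(γ⁻(θ)) > γ⁻(θ+Nω) for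 every θ. -/
open Filter Topology MeasureTheory
open scoped ENNReal

noncomputable section

/-- The skew-product map on `T¹ × ℝ` induced by the (fiber part of the) lift. -/
def skew (ω : ℝ) (F : T1 → ℝ → ℝ) : T1 × ℝ → T1 × ℝ :=
  fun p => (p.1 + (ω : T1), F p.1 p.2)

/-- An `F`-invariant strip: a compact invariant set all of whose fibers are nonempty
compact intervals. -/
def IsInvStrip (ω : ℝ) (F : T1 → ℝ → ℝ) (A : Set (T1 × ℝ)) : Prop :=
  IsCompact A ∧ skew ω F '' A = A ∧
    ∀ θ : T1, ∃ a b : ℝ, a ≤ b ∧ {x : ℝ | (θ, x) ∈ A} = Set.Icc a b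

/-!
Let `T h` be the function whose graph is the image of the graph of `h`, let `T_ε` belong to the
perturbed map in the same way, and let `φ` be the lower boundary of the strip, so that
`φ ≤ T φ ≤ T_ε φ`. Minimality of the base keeps the increasing sequence `T_ε^n φ` bounded: otherwise
some iterate would exceed `φ` by `1` everywhere, and the perturbed rotation number would be
positive. Its supremum `ψ` is lower semicontinuous with `T ψ + ε ≤ ψ`, and the upper semicontinuous
envelope `g` of `ψ` inherits `T g + ε ≤ g`. Where `ψ` is nearly maximal, `T g ≤ g - ε < ψ`; this
strict inequality holds on an open set, and minimality spreads it to `T^N g < ψ` everywhere. Any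
continuous `γ` with `T^N g < γ < ψ` then satisfies `T^N γ ≤ T^N g < γ`. Reflecting the fibres gives
the curves mapped above themselves.
-/

section Minimality

variable {X : Type*} [TopologicalSpace X] [CompactSpace X]

theorem exists_forall_exists_le_iterate_mem {f : X → X} (hf : Continuous f)
    (hmin : ∀ x, DenseRange fun n : ℕ => f^[n] x) {U : Set X} (hU : IsOpen U)
    (hne : U.Nonempty) : ∃ N : ℕ, ∀ x, ∃ j ≤ N, f^[j] x ∈ U := by
  have hcover : (Set.univ : Set X) ⊆ ⋃ n : ℕ, f^[n] ⁻¹' U := fun x _ =>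
    Set.mem_iUnion.2 ((hmin x).exists_mem_open hU hne)
  obtain ⟨t, ht⟩ :=
    isCompact_univ.elim_finite_subcover _ (fun n => hU.preimage (hf.iterate n)) hcover
  refine ⟨t.sup id, fun x => ?_⟩
  obtain ⟨j, hjt, hj⟩ := Set.mem_iUnion₂.1 (ht (Set.mem_univ x))
  exact ⟨j, Finset.le_sup (f := id) hjt, hj⟩

theorem exists_eq_univ_of_mapsTo_succ {σ : X ≃ₜ X}
    (hσ : ∀ x, DenseRange fun n : ℕ => σ^[n] x) {W : ℕ → Set X} (hmono : Monotone W)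
    (hmaps : ∀ n, Set.MapsTo σ (W n) (W (n + 1))) {n : ℕ} (hn : (interior (W n)).Nonempty) :
    ∃ N, 1 ≤ N ∧ W N = Set.univ := by
  have hiter : ∀ k, Set.MapsTo σ^[k] (W n) (W (n + k)) := by
    intro k
    induction k with
    | zero => exact Set.mapsTo_id _
    | succ k ih =>
      rw [Function.iterate_succ', ← add_assoc]
      exact (hmaps (n + k)).comp ih
  obtain ⟨K, hK⟩ := exists_forall_exists_le_iterate_mem σ.continuous hσ isOpen_interior hn
  refine ⟨n + K + 1, by omega, Set.eq_univ_of_forall fun x => ?_⟩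
  obtain ⟨j, hjK, hj⟩ := hK (σ.symm^[K] x)
  have hx : σ^[K - j] (σ^[j] (σ.symm^[K] x)) = x := by
    rw [← Function.iterate_add_apply, Nat.sub_add_cancel hjK]
    exact Function.LeftInverse.iterate σ.apply_symm_apply K x
  exact hmono (by omega) (hx ▸ hiter (K - j) (interior_subset hj))

end Minimality

section Semicontinuity

variable {X Y Z : Type*} [TopologicalSpace X]

section Apply

variable [LinearOrder Y] [DenselyOrdered Y] [TopologicalSpace Y] [OrderTopology Y]
  [LinearOrder Z] [TopologicalSpace Z]

theorem exists_lt_eventually_lt_apply [NoMinOrder Y] [ClosedIicTopology Z] {F : X → Y → Z}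
    (hFc : Continuous ↿F) {x : X} {y : Y} {c : Z} (hc : c < F x y) :
    ∃ d < y, ∀ᶠ x' in 𝓝 x, c < F x' d := by
  have hev : ∀ᶠ d in 𝓝[<] y, c < F x d :=
    ((hFc.uncurry_left x).continuousAt.eventually_const_lt hc).filter_mono nhdsWithin_le_nhds
  obtain ⟨d, hdc, hdy⟩ := (hev.and self_mem_nhdsWithin).exists
  exact ⟨d, hdy, (hFc.uncurry_right d).continuousAt.eventually_const_lt hdc⟩

theorem lowerSemicontinuous_apply [NoMinOrder Y] [ClosedIicTopology Z] {F : X → Y → Z}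
    (hFc : Continuous ↿F) (hFm : ∀ x, Monotone (F x)) {h : X → Y}
    (hh : LowerSemicontinuous h) : LowerSemicontinuous fun x => F x (h x) := by
  intro x c hc
  obtain ⟨d, hd, hcd⟩ := exists_lt_eventually_lt_apply hFc hc
  filter_upwards [hcd, hh x d hd] with x' hx' hdx'
  exact hx'.trans_le (hFm x' hdx'.le)

theorem upperSemicontinuous_apply [NoMaxOrder Y] [ClosedIciTopology Z] {F : X → Y → Z}
    (hFc : Continuous ↿F) (hFm : ∀ x, Monotone (F x)) {h : X → Y}
    (hh : UpperSemicontinuous h) : UpperSemicontinuous fun x => F x (h x) :=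
  lowerSemicontinuous_apply (Y := Yᵒᵈ) (Z := Zᵒᵈ) hFc (fun x => (hFm x).dual) hh

end Apply

section Between

variable [LinearOrder Y] [DenselyOrdered Y] {u l : X → Y}

theorem exists_eventually_mem_Ioo (hu : UpperSemicontinuous u) (hl : LowerSemicontinuous l) {x : X}
    (hx : u x < l x) : ∃ c, ∀ᶠ x' in 𝓝 x, c ∈ Set.Ioo (u x') (l x') := by
  obtain ⟨c, huc, hcl⟩ := exists_between hx
  exact ⟨c, (hu x c huc).and (hl x c hcl)⟩

theorem isOpen_setOf_lt_of_semicontinuous (hu : UpperSemicontinuous u)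
    (hl : LowerSemicontinuous l) : IsOpen {x | u x < l x} := by
  refine isOpen_iff_mem_nhds.2 fun x hx => ?_
  obtain ⟨c, hc⟩ := exists_eventually_mem_Ioo hu hl hx
  exact hc.mono fun x' hx' => hx'.1.trans hx'.2

theorem exists_continuousMap_between [NormalSpace X] [ParacompactSpace X] {f g : X → ℝ}
    (hf : UpperSemicontinuous f) (hg : LowerSemicontinuous g) (hfg : ∀ x, f x < g x) :
    ∃ γ : C(X, ℝ), ∀ x, γ x ∈ Set.Ioo (f x) (g x) :=
  exists_continuous_forall_mem_convex_of_local_const (fun _ => convex_Ioo _ _) fun x =>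
    exists_eventually_mem_Ioo hf hg (hfg x)

end Between

end Semicontinuity

section UpperEnvelope

variable {X Y : Type*} [TopologicalSpace X] [ConditionallyCompleteLinearOrder Y]

/-- The upper semicontinuous envelope `x ↦ limsup_{x' → x} h x'` of a function bounded above. The
neighbourhoods are not punctured, so that it lies above `h`. -/
def upperEnvelope (h : X → Y) : X → Y := fun x => limsup h (𝓝 x)

variable {h h' : X → Y}

theorem frequently_apply_le_nhds (h : X → Y) (x : X) : ∃ᶠ x' in 𝓝 x, h x ≤ h x' :=
  fun hev => hev.self_of_nhds le_rfl

theorem isCoboundedUnder_le_nhds (h : X → Y) (x : X) : IsCoboundedUnder (· ≤ ·) (𝓝 x) h :=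
  .of_frequently_ge (frequently_apply_le_nhds h x)

theorem upperEnvelope_mono (hle : h ≤ h') (hb : BddAbove (Set.range h')) :
    upperEnvelope h ≤ upperEnvelope h' := fun x =>
  limsup_le_limsup (.of_forall hle) (isCoboundedUnder_le_nhds h x) hb.isBoundedUnder_of_range

theorem le_upperEnvelope (hb : BddAbove (Set.range h)) : h ≤ upperEnvelope h := fun x =>
  le_limsup_of_frequently_le (frequently_apply_le_nhds h x) hb.isBoundedUnder_of_range

theorem upperEnvelope_le {c : Y} {x : X} (hc : ∀ᶠ x' in 𝓝 x, h x' ≤ c) : upperEnvelope h x ≤ c :=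
  limsup_le_of_le (isCoboundedUnder_le_nhds h x) hc

theorem upperSemicontinuous_upperEnvelope [DenselyOrdered Y] (hb : BddAbove (Set.range h)) :
    UpperSemicontinuous (upperEnvelope h) := by
  intro x c hc
  obtain ⟨d, hxd, hdc⟩ := exists_between hc
  have hd : ∀ᶠ x' in 𝓝 x, h x' < d := eventually_lt_of_limsup_lt hxd hb.isBoundedUnder_of_range
  filter_upwards [hd.eventually_nhds] with x' hx'
  exact (upperEnvelope_le (hx'.mono fun _ => le_of_lt)).trans_lt hdc

theorem apply_upperEnvelope_le [DenselyOrdered Y] [NoMinOrder Y] [TopologicalSpace Y]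
    [OrderTopology Y] {F : X → Y → Y} (hFc : Continuous ↿F) (hFm : ∀ x, Monotone (F x))
    {x : X} (hb : BddAbove (Set.range fun x => F x (h x))) :
    F x (upperEnvelope h x) ≤ upperEnvelope (fun x => F x (h x)) x := by
  refine le_of_forall_lt_imp_le_of_dense fun c hc => ?_
  obtain ⟨d, hd, hcd⟩ := exists_lt_eventually_lt_apply hFc hc
  have hfreq : ∃ᶠ x' in 𝓝 x, d < h x' :=
    frequently_lt_of_lt_limsup (isCoboundedUnder_le_nhds h x) hd
  refine le_limsup_of_frequently_le ((hfreq.and_eventually hcd).mono fun x' hx' => ?_)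
    hb.isBoundedUnder_of_range
  exact hx'.2.le.trans (hFm x' hx'.1.le)

end UpperEnvelope

section SkewProduct

variable {X Y : Type*}

/-- The skew product over the base map `σ` with fibre maps `F x`. -/
def skewProduct (σ : X → X) (F : X → Y → Y) : X × Y → X × Y := fun p => (σ p.1, F p.1 p.2)

variable [TopologicalSpace X]

/-- The graph transform of a skew product with invertible base: the graph of `graphTransform σ F h`
is the image under `skewProduct σ F` of the graph of `h`. -/
def graphTransform (σ : X ≃ₜ X) (F : X → Y → Y) (h : X → Y) : X → Y :=
  fun x => F (σ.symm x) (h (σ.symm x))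

variable {σ : X ≃ₜ X} {F : X → Y → Y} {h : X → Y}

theorem graphTransform_apply_map (x : X) : graphTransform σ F h (σ x) = F x (h x) := by
  simp only [graphTransform, Homeomorph.symm_apply_apply]

theorem skewProduct_iterate_graph (n : ℕ) (x : X) :
    (skewProduct σ F)^[n] (x, h x) = (σ^[n] x, (graphTransform σ F)^[n] h (σ^[n] x)) := by
  induction n with
  | zero => rfl
  | succ n ih =>
    simp only [Function.iterate_succ_apply', ih, skewProduct, graphTransform_apply_map]

theorem graphTransform_mono [Preorder Y] (hFm : ∀ x, Monotone (F x)) :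
    Monotone (graphTransform σ F) := fun _ _ hle x => hFm (σ.symm x) (hle (σ.symm x))

section Semicontinuous

variable [TopologicalSpace Y]

section LinearOrder

variable [LinearOrder Y] [DenselyOrdered Y] [OrderTopology Y]

theorem lowerSemicontinuous_graphTransform_iterate [NoMinOrder Y] (hFc : Continuous ↿F)
    (hFm : ∀ x, Monotone (F x)) (hh : LowerSemicontinuous h) (n : ℕ) :
    LowerSemicontinuous ((graphTransform σ F)^[n] h) := by
  induction n with
  | zero => exact hh
  | succ n ih =>
    rw [Function.iterate_succ_apply']
    exact (lowerSemicontinuous_apply hFc hFm ih).comp σ.symm.continuous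

theorem upperSemicontinuous_graphTransform_iterate [NoMaxOrder Y] (hFc : Continuous ↿F)
    (hFm : ∀ x, Monotone (F x)) (hh : UpperSemicontinuous h) (n : ℕ) :
    UpperSemicontinuous ((graphTransform σ F)^[n] h) := by
  induction n with
  | zero => exact hh
  | succ n ih =>
    rw [Function.iterate_succ_apply']
    exact (upperSemicontinuous_apply hFc hFm ih).comp σ.symm.continuous

end LinearOrder

variable [ConditionallyCompleteLinearOrder Y] [OrderTopology Y]

theorem graphTransform_iSup_iterate_le (hFc : ∀ x, Continuous (F x)) (hFm : ∀ x, Monotone (F x))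
    (hb : ∀ x, BddAbove (Set.range fun n : ℕ => (graphTransform σ F)^[n] h x)) :
    graphTransform σ F (fun x => ⨆ n : ℕ, (graphTransform σ F)^[n] h x) ≤
      fun x => ⨆ n : ℕ, (graphTransform σ F)^[n] h x := by
  intro x
  calc graphTransform σ F (fun x => ⨆ n : ℕ, (graphTransform σ F)^[n] h x) x
      = ⨆ n : ℕ, F (σ.symm x) ((graphTransform σ F)^[n] h (σ.symm x)) :=
        (hFm _).map_ciSup_of_continuousAt (hFc _).continuousAt (hb _)
    _ = ⨆ n : ℕ, (graphTransform σ F)^[n + 1] h x := by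
        simp only [Function.iterate_succ_apply', graphTransform]
    _ ≤ ⨆ n : ℕ, (graphTransform σ F)^[n] h x := ciSup_le fun n => le_ciSup (hb x) (n + 1)

theorem graphTransform_upperEnvelope_le [DenselyOrdered Y] [NoMinOrder Y] (hFc : Continuous ↿F)
    (hFm : ∀ x, Monotone (F x)) (hb : BddAbove (Set.range h)) (hle : graphTransform σ F h ≤ h) :
    graphTransform σ F (upperEnvelope h) ≤ upperEnvelope h := by
  have hb' : BddAbove (Set.range fun x => F x (h x)) := by
    obtain ⟨M, hM⟩ := hb
    refine ⟨M, Set.forall_mem_range.2 fun x => ?_⟩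
    calc F x (h x) = graphTransform σ F h (σ x) := (graphTransform_apply_map x).symm
      _ ≤ h (σ x) := hle (σ x)
      _ ≤ M := hM (Set.mem_range_self (σ x))
  intro x
  calc graphTransform σ F (upperEnvelope h) x
      ≤ upperEnvelope (fun x => F x (h x)) (σ.symm x) := apply_upperEnvelope_le hFc hFm hb'
    _ = upperEnvelope (graphTransform σ F h) x := by
        unfold upperEnvelope
        rw [← σ.symm.map_nhds_eq x]
        rfl
    _ ≤ upperEnvelope h x := upperEnvelope_mono hle hb x

end Semicontinuous

end SkewProduct

theorem isCompact_preimage_prodMk {X Y : Type*} [TopologicalSpace X] [T1Space X]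
    [TopologicalSpace Y] {A : Set (X × Y)} (hA : IsCompact A) (x : X) :
    IsCompact (Prod.mk x ⁻¹' A) := by
  have hslice : Prod.mk x ⁻¹' A = Prod.snd '' (A ∩ Prod.fst ⁻¹' {x}) := by
    ext y
    simp
  rw [hslice]
  exact (hA.inter_right (isClosed_singleton.preimage continuous_fst)).image continuous_snd

section LowerBoundary

variable {X Y : Type*} [ConditionallyCompleteLinearOrder Y]

/-- The lower boundary of a compact set `A` in a product, the function `x ↦ min {y | (x, y) ∈ A}`.
Where the fibre of `A` is empty it takes the junk value `sInf ∅`. -/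
def lowerBoundary (A : Set (X × Y)) : X → Y := fun x => sInf (Prod.mk x ⁻¹' A)

variable [TopologicalSpace X] [TopologicalSpace Y] [OrderTopology Y] {A : Set (X × Y)}

section T1Space

variable [T1Space X]

theorem lowerBoundary_le (hA : IsCompact A) {x : X} {y : Y} (hxy : (x, y) ∈ A) :
    lowerBoundary A x ≤ y :=
  csInf_le (isCompact_preimage_prodMk hA x).bddBelow hxy

theorem lowerBoundary_mem (hA : IsCompact A) {x : X} (hx : x ∈ Prod.fst '' A) :
    (x, lowerBoundary A x) ∈ A := by
  obtain ⟨⟨_, y⟩, hy, rfl⟩ := hx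
  exact (isCompact_preimage_prodMk hA _).sInf_mem ⟨y, hy⟩

theorem bddAbove_range_lowerBoundary [Nonempty Y] (hA : IsCompact A)
    (hfst : Prod.fst '' A = Set.univ) : BddAbove (Set.range (lowerBoundary A)) := by
  refine (hA.image continuous_snd).bddAbove.mono (Set.range_subset_iff.2 fun x => ?_)
  exact ⟨_, lowerBoundary_mem hA (hfst ▸ Set.mem_univ x), rfl⟩

theorem lowerBoundary_le_graphTransform {σ : X ≃ₜ X} {F : X → Y → Y} (hA : IsCompact A)
    (hfst : Prod.fst '' A = Set.univ) (hmaps : Set.MapsTo (skewProduct σ F) A A) :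
    lowerBoundary A ≤ graphTransform σ F (lowerBoundary A) := by
  intro x
  have hmem := hmaps (lowerBoundary_mem hA (hfst ▸ Set.mem_univ (σ.symm x)))
  simp only [skewProduct, Homeomorph.apply_symm_apply] at hmem
  exact lowerBoundary_le hA hmem

end T1Space

theorem lowerSemicontinuous_lowerBoundary [T2Space X] (hA : IsCompact A)
    (hfst : Prod.fst '' A = Set.univ) : LowerSemicontinuous (lowerBoundary A) := by
  refine lowerSemicontinuous_iff_isClosed_preimage.2 fun c => ?_
  have hpre : lowerBoundary A ⁻¹' Set.Iic c = Prod.fst '' (A ∩ {p | p.2 ≤ c}) := by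
    ext x
    constructor
    · intro hx
      exact ⟨(x, lowerBoundary A x), ⟨lowerBoundary_mem hA (hfst ▸ Set.mem_univ x), hx⟩, rfl⟩
    · rintro ⟨⟨x, y⟩, ⟨hxy, hyc⟩, rfl⟩
      exact (lowerBoundary_le hA hxy).trans hyc
  rw [hpre]
  exact ((hA.inter_right (isClosed_le continuous_snd continuous_const)).image
    continuous_fst).isClosed

end LowerBoundary

theorem image_fst_eq_univ_of_mapsTo_skewProduct {X Y : Type*} [TopologicalSpace X] [T2Space X]
    [TopologicalSpace Y] {σ : X → X} (hσ : ∀ x, DenseRange fun n : ℕ => σ^[n] x) {F : X → Y → Y}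
    {A : Set (X × Y)} (hA : IsCompact A) (hne : A.Nonempty)
    (hmaps : Set.MapsTo (skewProduct σ F) A A) : Prod.fst '' A = Set.univ := by
  obtain ⟨⟨x, y⟩, hxy⟩ := hne
  have hsemi : Function.Semiconj Prod.fst (skewProduct σ F) σ := fun _ => rfl
  have horbit : Set.range (fun n : ℕ => σ^[n] x) ⊆ Prod.fst '' A :=
    Set.range_subset_iff.2 fun n =>
      ⟨(skewProduct σ F)^[n] (x, y), hmaps.iterate n hxy, hsemi.iterate_right n (x, y)⟩
  rw [← Set.univ_subset_iff, ← (hσ x).closure_range]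
  exact (hA.image continuous_fst).isClosed.closure_subset_iff.2 horbit

section RotationNumber

variable {X : Type*}

/-- Every orbit of the skew product over `σ` with fibre maps `F x` moves in the fibre with mean
velocity `ρ`. -/
def HasFiberedRotationNumber (σ : X → X) (F : X → ℝ → ℝ) (ρ : ℝ) : Prop :=
  ∀ x y, Tendsto (fun n : ℕ => (((skewProduct σ F)^[n] (x, y)).2 - y) / n) atTop (𝓝 ρ)

variable [TopologicalSpace X] {σ : X ≃ₜ X} {F : X → ℝ → ℝ} {φ : X → ℝ}

theorem graphTransform_commute_add_one (hF1 : ∀ x y, F x (y + 1) = F x y + 1) :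
    Function.Commute (graphTransform σ F) (· + 1) := fun _ => funext fun _ => hF1 _ _

theorem add_natCast_le_graphTransform_iterate (hFm : ∀ x, Monotone (F x))
    (hF1 : ∀ x y, F x (y + 1) = F x y + 1) {L : ℕ} (hle : φ + 1 ≤ (graphTransform σ F)^[L] φ)
    (k : ℕ) : φ + k ≤ (graphTransform σ F)^[L * k] φ := by
  have hcomm := ((graphTransform_commute_add_one (σ := σ) hF1).iterate_left L).symm
  have hiter := hcomm.iterate_le_of_map_le (fun _ _ h => add_le_add_left h 1)
    ((graphTransform_mono hFm).iterate L) hle k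
  rwa [add_right_iterate, nsmul_one, ← Function.iterate_mul] at hiter

theorem one_le_mul_rotationNumber [Nonempty X] (hFm : ∀ x, Monotone (F x))
    (hF1 : ∀ x y, F x (y + 1) = F x y + 1) {ρ : ℝ} (hρ : HasFiberedRotationNumber σ F ρ)
    (hb : BddBelow (Set.range φ)) {L : ℕ} (hL : 0 < L)
    (hle : φ + 1 ≤ (graphTransform σ F)^[L] φ) : 1 ≤ L * ρ := by
  obtain ⟨m, hm⟩ := hb
  let x : X := Classical.arbitrary X
  have hsub : Tendsto (fun k : ℕ => L * k) atTop atTop := tendsto_id.const_mul_atTop' hL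
  have hlower : Tendsto (fun k : ℕ => (m - φ x) / k + 1) atTop (𝓝 1) := by
    simpa using (tendsto_const_div_atTop_nhds_zero_nat (m - φ x)).add_const 1
  refine le_of_tendsto_of_tendsto hlower (((hρ x (φ x)).comp hsub).const_mul (L : ℝ)) ?_
  filter_upwards [eventually_gt_atTop 0] with k hk
  have hgrowth : m + k ≤ ((skewProduct σ F)^[L * k] (x, φ x)).2 := by
    rw [skewProduct_iterate_graph]
    exact (add_le_add_left (hm (Set.mem_range_self _)) (k : ℝ)).trans
      (add_natCast_le_graphTransform_iterate hFm hF1 hle k _)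
  have hk₀ : (k : ℝ) ≠ 0 := Nat.cast_ne_zero.2 hk.ne'
  have hL₀ : (L : ℝ) ≠ 0 := Nat.cast_ne_zero.2 hL.ne'
  calc (m - φ x) / k + 1 = (m + k - φ x) / k := by rw [div_add_one hk₀, sub_add_eq_add_sub]
    _ ≤ (((skewProduct σ F)^[L * k] (x, φ x)).2 - φ x) / k := by gcongr
    _ = L * ((((skewProduct σ F)^[L * k] (x, φ x)).2 - φ x) / (L * k : ℕ)) := by
        rw [Nat.cast_mul, mul_div, mul_div_mul_left _ _ hL₀]

variable [CompactSpace X] (hσ : ∀ x, DenseRange fun n : ℕ => σ^[n] x)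
include hσ

theorem graphTransform_iterate_le_of_rotationNumber_eq_zero (hFc : Continuous ↿F)
    (hFm : ∀ x, Monotone (F x)) (hF1 : ∀ x y, F x (y + 1) = F x y + 1)
    (hρ : HasFiberedRotationNumber σ F 0) (hφ : LowerSemicontinuous φ)
    (hle : φ ≤ graphTransform σ F φ) {M : ℝ} (hM : ∀ x, φ x ≤ M) (n : ℕ) (x : X) :
    (graphTransform σ F)^[n] φ x ≤ M + 1 := by
  by_contra! hlt
  have : Nonempty X := ⟨x⟩
  have hmono := (graphTransform_mono (σ := σ) hFm).monotone_iterate_of_le_map hle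
  let W : ℕ → Set X := fun k => {x | φ x + 1 ≤ (graphTransform σ F)^[k] φ x}
  have hmaps : ∀ k, Set.MapsTo σ (W k) (W (k + 1)) := by
    intro k x hx
    calc φ (σ x) + 1 ≤ graphTransform σ F φ (σ x) + 1 := add_le_add_left (hle (σ x)) 1
      _ = F x (φ x + 1) := by rw [graphTransform_apply_map, hF1]
      _ ≤ F x ((graphTransform σ F)^[k] φ x) := hFm x hx
      _ = (graphTransform σ F)^[k + 1] φ (σ x) := by
          rw [Function.iterate_succ_apply', graphTransform_apply_map]
  have hsubset : (graphTransform σ F)^[n] φ ⁻¹' Set.Ioi (M + 1) ⊆ W n := fun x' hx' =>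
    (add_le_add_left (hM x') 1).trans (le_of_lt hx')
  have hopen : IsOpen ((graphTransform σ F)^[n] φ ⁻¹' Set.Ioi (M + 1)) :=
    (lowerSemicontinuous_graphTransform_iterate hFc hFm hφ n).isOpen_preimage _
  obtain ⟨L, hL, hWL⟩ := exists_eq_univ_of_mapsTo_succ hσ
    (fun _ _ hij x (hx : φ x + 1 ≤ _) => hx.trans (hmono hij x)) hmaps
    ⟨x, interior_maximal hsubset hopen hlt⟩
  have hbelow : BddBelow (Set.range φ) := by
    simpa using (hφ.lowerSemicontinuousOn Set.univ).bddBelow_of_isCompact isCompact_univ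
  have hone := one_le_mul_rotationNumber hFm hF1 hρ hbelow hL
    (Set.eq_univ_iff_forall.1 hWL)
  norm_num at hone

theorem exists_lowerSemicontinuous_graphTransform_le (hFc : Continuous ↿F)
    (hFm : ∀ x, Monotone (F x)) (hF1 : ∀ x y, F x (y + 1) = F x y + 1)
    (hρ : HasFiberedRotationNumber σ F 0) (hφ : LowerSemicontinuous φ)
    (hle : φ ≤ graphTransform σ F φ) (hb : BddAbove (Set.range φ)) :
    ∃ ψ : X → ℝ, LowerSemicontinuous ψ ∧ BddAbove (Set.range ψ) ∧ graphTransform σ F ψ ≤ ψ := by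
  obtain ⟨M, hM⟩ := hb
  have hbound := graphTransform_iterate_le_of_rotationNumber_eq_zero hσ hFc hFm hF1 hρ hφ hle
    (Set.forall_mem_range.1 hM)
  have hbdd : ∀ x, BddAbove (Set.range fun n : ℕ => (graphTransform σ F)^[n] φ x) := fun x =>
    ⟨M + 1, Set.forall_mem_range.2 fun n => hbound n x⟩
  exact ⟨fun x => ⨆ n : ℕ, (graphTransform σ F)^[n] φ x,
    lowerSemicontinuous_ciSup hbdd (lowerSemicontinuous_graphTransform_iterate hFc hFm hφ),
    ⟨M + 1, Set.forall_mem_range.2 fun x => ciSup_le fun n => hbound n x⟩,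
    graphTransform_iSup_iterate_le (fun x => hFc.uncurry_left x) hFm hbdd⟩

end RotationNumber

section Locking

variable {X : Type*} [TopologicalSpace X] [CompactSpace X] {σ : X ≃ₜ X}
  (hσ : ∀ x, DenseRange fun n : ℕ => σ^[n] x) {F : X → ℝ → ℝ} (hFc : Continuous ↿F)
  (hFm : ∀ x, Monotone (F x))
include hσ hFc hFm

theorem exists_graphTransform_iterate_lt {g ψ : X → ℝ} (hg : UpperSemicontinuous g)
    (hle : graphTransform σ F g ≤ g) (hψ : LowerSemicontinuous ψ)
    (hlt : ∀ x, graphTransform σ F ψ x < ψ x) {x : X} (hx : graphTransform σ F g x < ψ x) :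
    ∃ N, 1 ≤ N ∧ ∀ x, (graphTransform σ F)^[N] g x < ψ x := by
  have hanti := (graphTransform_mono (σ := σ) hFm).antitone_iterate_of_map_le hle
  let W : ℕ → Set X := fun k => {x | (graphTransform σ F)^[k] g x < ψ x}
  have hmono : Monotone W := fun _ _ hij x hx => (hanti hij x).trans_lt hx
  have hmaps : ∀ k, Set.MapsTo σ (W k) (W (k + 1)) := by
    intro k x hx
    calc (graphTransform σ F)^[k + 1] g (σ x) = F x ((graphTransform σ F)^[k] g x) := by
          rw [Function.iterate_succ_apply', graphTransform_apply_map]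
      _ ≤ F x (ψ x) := hFm x (le_of_lt hx)
      _ = graphTransform σ F ψ (σ x) := (graphTransform_apply_map x).symm
      _ < ψ (σ x) := hlt (σ x)
  have hopen : IsOpen (W 1) := isOpen_setOf_lt_of_semicontinuous
    (upperSemicontinuous_graphTransform_iterate hFc hFm hg 1) hψ
  obtain ⟨N, hN, hWN⟩ :=
    exists_eq_univ_of_mapsTo_succ hσ hmono hmaps (n := 1) ⟨x, by rwa [hopen.interior_eq]⟩
  exact ⟨N, hN, Set.eq_univ_iff_forall.1 hWN⟩

theorem exists_continuousMap_graphTransform_iterate_lt [NormalSpace X] [Nonempty X] {ψ : X → ℝ}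
    (hψ : LowerSemicontinuous ψ) (hb : BddAbove (Set.range ψ)) {ε : ℝ} (hε : 0 < ε)
    (hle : graphTransform σ (fun x y => F x y + ε) ψ ≤ ψ) :
    ∃ (γ : C(X, ℝ)) (N : ℕ), 1 ≤ N ∧ ∀ x, (graphTransform σ F)^[N] γ x < γ x := by
  let g := upperEnvelope ψ
  have hg : UpperSemicontinuous g := upperSemicontinuous_upperEnvelope hb
  have hTg : ∀ x, graphTransform σ F g x + ε ≤ g x :=
    graphTransform_upperEnvelope_le (hFc.add continuous_const) (fun x => (hFm x).add_const ε)
      hb hle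
  obtain ⟨x, hx⟩ : ∃ x, graphTransform σ F g x < ψ x := by
    obtain ⟨x, hx⟩ := exists_lt_of_lt_ciSup (sub_lt_self (⨆ x, ψ x) hε)
    have hgx : g x ≤ ⨆ x, ψ x := upperEnvelope_le (.of_forall (le_ciSup hb))
    exact ⟨x, by linarith [hTg x]⟩
  obtain ⟨N, hN, hlt⟩ := exists_graphTransform_iterate_lt hσ hFc hFm hg
    (fun x => (le_add_of_nonneg_right hε.le).trans (hTg x)) hψ
    (fun x => (lt_add_of_pos_right _ hε).trans_le (hle x)) hx
  obtain ⟨γ, hγ⟩ := exists_continuousMap_between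
    (upperSemicontinuous_graphTransform_iterate hFc hFm hg N) hψ hlt
  have hγg : ⇑γ ≤ g := fun x => (hγ x).2.le.trans (le_upperEnvelope hb x)
  exact ⟨γ, N, hN, fun x => ((graphTransform_mono hFm).iterate N hγg x).trans_lt (hγ x).1⟩

theorem exists_continuous_skewProduct_iterate_lt [T2Space X]
    (hF1 : ∀ x y, F x (y + 1) = F x y + 1)
    (hA : ∃ A : Set (X × ℝ), A.Nonempty ∧ IsCompact A ∧ Set.MapsTo (skewProduct σ F) A A)
    {ε : ℝ} (hε : 0 < ε) (hρ : HasFiberedRotationNumber σ (fun x y => F x y + ε) 0) :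
    ∃ (γ : X → ℝ) (N : ℕ), Continuous γ ∧ 1 ≤ N ∧
      ∀ x, ((skewProduct σ F)^[N] (x, γ x)).2 < γ (σ^[N] x) := by
  obtain ⟨A, hne, hcomp, hmaps⟩ := hA
  have : Nonempty X := ⟨hne.some.1⟩
  have hfst := image_fst_eq_univ_of_mapsTo_skewProduct hσ hcomp hne hmaps
  have hφ : lowerBoundary A ≤ graphTransform σ (fun x y => F x y + ε) (lowerBoundary A) :=
    fun x => (lowerBoundary_le_graphTransform hcomp hfst hmaps x).trans
      (le_add_of_nonneg_right hε.le)
  obtain ⟨ψ, hψ, hb, hle⟩ := exists_lowerSemicontinuous_graphTransform_le hσ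
    (hFc.add continuous_const) (fun x => (hFm x).add_const ε)
    (fun x y => by rw [hF1, add_right_comm]) hρ
    (lowerSemicontinuous_lowerBoundary hcomp hfst) hφ (bddAbove_range_lowerBoundary hcomp hfst)
  obtain ⟨γ, N, hN, hγ⟩ := exists_continuousMap_graphTransform_iterate_lt hσ hFc hFm hψ hb hε hle
  refine ⟨γ, N, γ.continuous, hN, fun x => ?_⟩
  rw [skewProduct_iterate_graph]
  exact hγ (σ^[N] x)

end Locking

section Reflection

variable {X : Type*} {σ : X → X} {F : X → ℝ → ℝ}

/-- The fibre maps `F x` conjugated by `y ↦ -y`; this exchanges the curves mapped below themselves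
with those mapped above themselves. -/
def fiberReflect (F : X → ℝ → ℝ) : X → ℝ → ℝ := fun x y => -F x (-y)

theorem skewProduct_fiberReflect_semiconj :
    Function.Semiconj (Prod.map id Neg.neg) (skewProduct σ F) (skewProduct σ (fiberReflect F)) :=
  fun p => by simp [skewProduct, fiberReflect]

theorem skewProduct_fiberReflect_iterate (n : ℕ) (x : X) (y : ℝ) :
    (skewProduct σ (fiberReflect F))^[n] (x, y) =
      Prod.map id Neg.neg ((skewProduct σ F)^[n] (x, -y)) := by
  rw [(skewProduct_fiberReflect_semiconj.iterate_right n).eq]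
  simp

theorem HasFiberedRotationNumber.fiberReflect {ρ : ℝ} (hρ : HasFiberedRotationNumber σ F ρ) :
    HasFiberedRotationNumber σ (fiberReflect F) (-ρ) := by
  intro x y
  refine (hρ x (-y)).neg.congr fun n => ?_
  simp only [skewProduct_fiberReflect_iterate, Prod.map_snd]
  ring

theorem continuous_fiberReflect [TopologicalSpace X] (hFc : Continuous ↿F) :
    Continuous ↿(fiberReflect F) :=
  (hFc.comp (continuous_id.prodMap continuous_neg)).neg

theorem monotone_fiberReflect (hFm : ∀ x, Monotone (F x)) (x : X) : Monotone (fiberReflect F x) :=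
  fun _ _ hy => neg_le_neg (hFm x (neg_le_neg hy))

theorem fiberReflect_add_one (hF1 : ∀ x y, F x (y + 1) = F x y + 1) (x : X) (y : ℝ) :
    fiberReflect F x (y + 1) = fiberReflect F x y + 1 := by
  have hstep : F x (-y) = F x (-(y + 1)) + 1 := by rw [← hF1, neg_add, neg_add_cancel_right]
  simp only [fiberReflect, hstep, neg_add, neg_add_cancel_right]

theorem fiberReflect_add_const (c : ℝ) :
    fiberReflect (fun x y => F x y + c) = fun x y => fiberReflect F x y + -c :=
  funext fun _ => funext fun _ => neg_add _ _

end Reflection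

theorem one_sided_locking_curves_general {X : Type*} [TopologicalSpace X] [CompactSpace X]
    [T2Space X] {σ : X ≃ₜ X} (hσ : ∀ x, DenseRange fun n : ℕ => σ^[n] x) {F : X → ℝ → ℝ}
    (hFc : Continuous ↿F) (hFm : ∀ x, Monotone (F x)) (hF1 : ∀ x y, F x (y + 1) = F x y + 1)
    (hA : ∃ A : Set (X × ℝ), A.Nonempty ∧ IsCompact A ∧ Set.MapsTo (skewProduct σ F) A A) :
    ((∃ ε : ℝ, 0 < ε ∧ HasFiberedRotationNumber σ (fun x y => F x y + ε) 0) →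
      ∃ (γ : X → ℝ) (N : ℕ), Continuous γ ∧ 1 ≤ N ∧
        ∀ x, ((skewProduct σ F)^[N] (x, γ x)).2 < γ (σ^[N] x)) ∧
    ((∃ ε : ℝ, 0 < ε ∧ HasFiberedRotationNumber σ (fun x y => F x y + -ε) 0) →
      ∃ (γ : X → ℝ) (N : ℕ), Continuous γ ∧ 1 ≤ N ∧
        ∀ x, γ (σ^[N] x) < ((skewProduct σ F)^[N] (x, γ x)).2) := by
  refine ⟨fun ⟨ε, hε, hρ⟩ => exists_continuous_skewProduct_iterate_lt hσ hFc hFm hF1 hA hε hρ, ?_⟩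
  rintro ⟨ε, hε, hρ⟩
  obtain ⟨A, hne, hcomp, hmaps⟩ := hA
  have hρ' : HasFiberedRotationNumber σ (fun x y => fiberReflect F x y + ε) 0 := by
    simpa only [fiberReflect_add_const, neg_neg, neg_zero] using hρ.fiberReflect
  obtain ⟨γ, N, hγ, hN, hlt⟩ := exists_continuous_skewProduct_iterate_lt hσ
    (continuous_fiberReflect hFc) (monotone_fiberReflect hFm) (fiberReflect_add_one hF1)
    ⟨Prod.map id Neg.neg '' A, hne.image _, hcomp.image (continuous_id.prodMap continuous_neg),
      skewProduct_fiberReflect_semiconj.mapsTo_image hmaps⟩ hε hρ'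
  refine ⟨-γ, N, hγ.neg, hN, fun x => neg_lt.1 ?_⟩
  simpa only [skewProduct_fiberReflect_iterate, Prod.map_snd, Pi.neg_apply] using hlt x

section CircleRotation

theorem denseRange_iterate_addRight {p a : ℝ} [Fact (0 < p)] (ha : Irrational (a / p))
    (x : AddCircle p) : DenseRange fun n : ℕ => (Homeomorph.addRight (a : AddCircle p))^[n] x := by
  have hdense : DenseRange fun n : ℕ => n • (a : AddCircle p) := by
    rwa [← denseRange_zsmul_iff_nsmul, AddCircle.denseRange_zsmul_coe_iff]
  have horbit : (fun n : ℕ => (Homeomorph.addRight (a : AddCircle p))^[n] x) =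
      (fun y => x + y) ∘ fun n : ℕ => n • (a : AddCircle p) := by
    simp only [Homeomorph.coe_addRight, add_right_iterate, Function.comp_def]
  rw [horbit]
  exact (add_left_surjective x).denseRange.comp hdense (continuous_const_add x)

variable {ω : ℝ} {F : T1 → ℝ → ℝ}

theorem fiberIter_eq_skewProduct_iterate (n : ℕ) (θ : T1) (x : ℝ) :
    fiberIter ω F n θ x = ((skewProduct (Homeomorph.addRight (ω : T1)) F)^[n] (θ, x)).2 := by
  induction n generalizing θ x with
  | zero => rfl
  | succ _ ih => exact ih (θ + ω) (F θ x)

theorem hasRotNum_iff {ρ : ℝ} :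
    HasRotNum ω F ρ ↔ HasFiberedRotationNumber (Homeomorph.addRight (ω : T1)) F ρ := by
  simp only [HasRotNum, HasFiberedRotationNumber, fiberIter_eq_skewProduct_iterate]

theorem IsInvStrip.nonempty {A : Set (T1 × ℝ)} (hA : IsInvStrip ω F A) : A.Nonempty := by
  obtain ⟨a, b, hab, hfib⟩ := hA.2.2 0
  exact ⟨(0, a), show a ∈ {x | (0, x) ∈ A} from hfib ▸ Set.left_mem_Icc.2 hab⟩

theorem IsInvStrip.mapsTo {A : Set (T1 × ℝ)} (hA : IsInvStrip ω F A) :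
    Set.MapsTo (skewProduct (Homeomorph.addRight (ω : T1)) F) A A :=
  Set.mapsTo_iff_image_subset.2 hA.2.1.subset

end CircleRotation

/-- Proposition 4.1: one-sided locking of the rotation number at `0`
produces a continuous curve mapped strictly below (resp. strictly above) itself by some
iterate of `F`. -/
theorem one_sided_locking_curves
    (ω : ℝ) (hω : Irrational ω)
    (F : T1 → ℝ → ℝ) (hF : IsQpfLift ω F)
    (hρ : HasRotNum ω F 0)
    (hstrip : ∃ A : Set (T1 × ℝ), IsInvStrip ω F A) :
    ((∃ ε : ℝ, 0 < ε ∧ HasRotNum ω (fun θ x => F θ x + ε) 0) →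
      ∃ (γp : T1 → ℝ) (N : ℕ), Continuous γp ∧ 1 ≤ N ∧
        ∀ θ, fiberIter ω F N θ (γp θ) < γp (θ + N • (ω : T1))) ∧
    ((∃ ε : ℝ, 0 < ε ∧ HasRotNum ω (fun θ x => F θ x + (-ε)) 0) →
      ∃ (γm : T1 → ℝ) (N : ℕ), Continuous γm ∧ 1 ≤ N ∧
        ∀ θ, γm (θ + N • (ω : T1)) < fiberIter ω F N θ (γm θ)) := by
  obtain ⟨A, hA⟩ := hstrip
  have hdense := denseRange_iterate_addRight (p := 1) (a := ω) (by rwa [div_one])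
  simpa only [hasRotNum_iff, fiberIter_eq_skewProduct_iterate, Homeomorph.coe_addRight,
    add_right_iterate] using one_sided_locking_curves_general hdense hF.cont
      (fun θ => (hF.mono θ).monotone) hF.per ⟨A, hA.nonempty, hA.1, hA.mapsTo⟩
end
end

section
/- Let f be a quasiperiodically forced circle homeomorphism over an irrational ω with lift F. Let A ≺ B be minimal F-invariant strips and assume there is no F-invariant strip S with A ≺ S ≺ B. Let C := {(θ,x) ∈ T¹×ℝ : φ⁺_A(θ) < x < φ⁻_B(θ)}. Then either F restricted to C is topologically transitive (for all nonempty open sets U, V ⊆ C there exists n ∈ ℤ with F^n(U) ∩ V ≠ ∅), or there exists a nonempty open wandering set W ⊆ C, i.e. F^n(W) ∩ W = ∅ for all n ≥ 1. -/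
open Filter Topology MeasureTheory
open scoped ENNReal

noncomputable section

/-- Upper bounding graph `φ⁺_A(θ) = sup A_θ`. -/
def phiSup (A : Set (T1 × ℝ)) (θ : T1) : ℝ := sSup {x : ℝ | (θ, x) ∈ A}

/-- Lower bounding graph `φ⁻_A(θ) = inf A_θ`. -/
def phiInf (A : Set (T1 × ℝ)) (θ : T1) : ℝ := sInf {x : ℝ | (θ, x) ∈ A}

/-- `A ≺ B`: the strip `A` lies strictly below the strip `B`. -/
def StripLt (A B : Set (T1 × ℝ)) : Prop := ∀ θ, phiSup A θ < phiInf B θ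

/-- A minimal invariant strip: one not strictly containing another invariant strip. -/
def IsMinimalStrip (ω : ℝ) (F : T1 → ℝ → ℝ) (A : Set (T1 × ℝ)) : Prop :=
  IsInvStrip ω F A ∧ ∀ S : Set (T1 × ℝ), IsInvStrip ω F S → S ⊆ A → S = A

/-!
Lifted to the plane, the iterates of the skew product and the deck transformations form an action
of `ℤ²` in which `(a, b)` translates the first coordinate by `a ω + b`. Suppose that the orbits of
`U` avoid `V` and that no open subset of the region wanders; `U` and `V` may be taken convex in the
plane. If `τ` moves a point `q` of `U` into `U`, the translates of the segment from `q` to `τ q`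
form a continuous graph `g` inside the orbit of `U`; let `h` be such a graph for `V`. No image of
`g` meets the orbit of `V`, so each lies entirely above or entirely below `V` and `h`, and return
times of `V` do not change the side. Since `ω` is irrational, return times of small drift generate
a subgroup of finite index; but an element that moves an image of `g` across `h` does so with all
its positive multiples. Hence all images of `g` lie on the same side of `h`, and the points between
the images of `g` and those of `h` form an invariant strip inside the region.
-/

section Preliminaries

lemma continuous_apply_floor {α β : Type*} [Ring α] [LinearOrder α] [IsStrictOrderedRing α]
    [FloorRing α] [TopologicalSpace α] [OrderTopology α] [TopologicalSpace β] {f : ℤ → α → β}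
    (hf : ∀ k, Continuous (f k)) (hglue : ∀ k : ℤ, f k (k + 1) = f (k + 1) (k + 1)) :
    Continuous fun s => f ⌊s⌋ s := by
  refine continuous_iff_continuousAt.mpr fun x =>
    continuousAt_iff_continuous_left'_right'.mpr ⟨?_, ?_⟩
  · have hval : f (⌈x⌉ - 1) x = f ⌊x⌋ x := by
      rcases eq_or_ne (⌊x⌋ : α) x with hx | hx
      · obtain ⟨k, rfl⟩ : ∃ k : ℤ, (k : α) + 1 = x := ⟨⌊x⌋ - 1, by simp [hx]⟩
        simpa using hglue k
      · rw [Int.ceil_eq_floor_add_one_iff_notMem x |>.mpr fun ⟨k, hk⟩ => hx (by simp [← hk]),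
          add_sub_cancel_right]
    rw [ContinuousWithinAt, ← hval]
    refine ((hf _).tendsto x).mono_left nhdsWithin_le_nhds |>.congr' ?_
    filter_upwards [tendsto_pure.mp (tendsto_floor_left_pure_ceil_sub_one x)] with s hs
    rw [hs]
  · refine ((hf _).tendsto x).mono_left nhdsWithin_le_nhds |>.congr' ?_
    filter_upwards [tendsto_pure.mp ((tendsto_floor_right_pure_floor x).mono_left
      (nhdsWithin_mono x Set.Ioi_subset_Ici_self))] with s hs
    rw [hs]

lemma continuous_orderIso_symm_apply {X α β : Type*} [TopologicalSpace X] [LinearOrder α]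
    [TopologicalSpace α] [OrderTopology α] [LinearOrder β] [TopologicalSpace β]
    [OrderClosedTopology β] {e : X → α ≃o β} (he : ∀ a, Continuous fun x => e x a) :
    Continuous fun p : X × β => (e p.1).symm p.2 := by
  have he_fst (a : α) : Continuous fun p : X × β => e p.1 a := (he a).comp continuous_fst
  refine OrderTopology.continuous_iff.mpr fun a => ⟨?_, ?_⟩
  · simpa only [Set.preimage, Set.mem_Ioi, OrderIso.lt_symm_apply] using
      isOpen_lt (he_fst a) continuous_snd
  · simpa only [Set.preimage, Set.mem_Iio, OrderIso.symm_apply_lt] using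
      isOpen_lt continuous_snd (he_fst a)

lemma above_or_below_graph_of_isPreconnected {X α : Type*} [TopologicalSpace X] [LinearOrder α]
    [TopologicalSpace α] [OrderClosedTopology α] {g : X → α} (hg : Continuous g)
    {S : Set (X × α)} (hS : IsPreconnected S) (hdisj : ∀ p ∈ S, p.2 ≠ g p.1) :
    (∀ p ∈ S, g p.1 < p.2) ∨ ∀ p ∈ S, p.2 < g p.1 := by
  refine hS.subset_or_subset (isOpen_lt (hg.comp continuous_fst) continuous_snd)
    (isOpen_lt continuous_snd (hg.comp continuous_fst)) ?_ fun p hp => (hdisj p hp).lt_or_gt.symm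
  exact Set.disjoint_left.mpr fun p hp hp' => lt_asymm hp hp'

end Preliminaries

section Drift

/-- The translation lengths `a ω + b` of the lattice `ℤ²` acting on the line. -/
def latticeDrift (ω : ℝ) : ℤ × ℤ →+ ℝ :=
  AddMonoidHom.mk' (fun σ => σ.1 * ω + σ.2) fun σ τ => by
    push_cast [Prod.fst_add, Prod.snd_add]; ring

lemma latticeDrift_apply (ω : ℝ) (σ : ℤ × ℤ) : latticeDrift ω σ = σ.1 * ω + σ.2 := rfl

lemma latticeDrift_ne_zero {ω : ℝ} (hω : Irrational ω) {σ : ℤ × ℤ} (hσ : σ.1 ≠ 0) :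
    latticeDrift ω σ ≠ 0 :=
  ((hω.intCast_mul hσ).add_intCast σ.2).ne_zero

lemma natAbs_det_nsmul_mem {R : AddSubgroup (ℤ × ℤ)} {σ τ : ℤ × ℤ} (hσ : σ ∈ R) (hτ : τ ∈ R)
    (δ : ℤ × ℤ) : (σ.1 * τ.2 - τ.1 * σ.2).natAbs • δ ∈ R := by
  have cramer : (σ.1 * τ.2 - τ.1 * σ.2) • δ =
      (τ.2 * δ.1 - τ.1 * δ.2) • σ + (σ.1 * δ.2 - σ.2 * δ.1) • τ := by
    ext <;> simp <;> ring
  have hmem : (σ.1 * τ.2 - τ.1 * σ.2) • δ ∈ R :=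
    cramer ▸ R.add_mem (R.zsmul_mem hσ _) (R.zsmul_mem hτ _)
  rcases Int.natAbs_eq (σ.1 * τ.2 - τ.1 * σ.2) with h | h <;> rw [h] at hmem
  · rwa [natCast_zsmul] at hmem
  · rwa [neg_zsmul, natCast_zsmul, R.neg_mem_iff] at hmem

-- An element `τ` proportional to `σ` with `τ.1 ≠ 0` has drift at least `|drift σ| / |σ.1|`, so one
-- of smaller drift is independent of `σ`, and the two generate a subgroup of finite index.
lemma exists_nsmul_mem_of_small_drift {ω : ℝ} (hω : Irrational ω) {R : AddSubgroup (ℤ × ℤ)}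
    (hR : ∀ ε > 0, ∃ τ ∈ R, τ.1 ≠ 0 ∧ |latticeDrift ω τ| < ε) (δ : ℤ × ℤ) :
    ∃ N : ℕ, 0 < N ∧ N • δ ∈ R := by
  obtain ⟨σ, hσR, hσ, -⟩ := hR 1 one_pos
  have hσ_pos : (0 : ℝ) < |(σ.1 : ℝ)| := by simpa using hσ
  have hdrift_pos : 0 < |latticeDrift ω σ| := abs_pos.mpr (latticeDrift_ne_zero hω hσ)
  obtain ⟨τ, hτR, hτ, hτ_lt⟩ := hR _ (div_pos hdrift_pos hσ_pos)
  refine ⟨_, Int.natAbs_pos.mpr fun hdet => hτ_lt.not_ge ?_, natAbs_det_nsmul_mem hσR hτR δ⟩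
  have hdet' : (σ.1 : ℝ) * τ.2 = τ.1 * σ.2 := by exact_mod_cast sub_eq_zero.mp hdet
  have hprop : σ.1 * latticeDrift ω τ = τ.1 * latticeDrift ω σ := by
    simp only [latticeDrift_apply]; linear_combination hdet'
  have hτ_one : (1 : ℝ) ≤ |(τ.1 : ℝ)| := by exact_mod_cast Int.one_le_abs hτ
  rw [div_le_iff₀' hσ_pos, ← abs_mul, hprop, abs_mul]
  exact le_mul_of_one_le_left hdrift_pos.le hτ_one

end Drift

/-! ### Fibred actions on the plane -/

/-- An action of `Γ` on the plane `ℝ × ℝ` by homeomorphisms that cover translations of the first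
coordinate and are strictly increasing on the vertical lines. -/
structure FibredAction (Γ : Type*) [AddGroup Γ] where
  drift : Γ →+ ℝ
  fiber : Γ → ℝ → ℝ → ℝ
  fiber_zero : ∀ t x, fiber 0 t x = x
  fiber_add : ∀ σ ρ t x, fiber (σ + ρ) t x = fiber σ (t + drift ρ) (fiber ρ t x)
  continuous_fiber : ∀ σ, Continuous fun p : ℝ × ℝ => fiber σ p.1 p.2
  strictMono_fiber : ∀ σ t, StrictMono (fiber σ t)

namespace FibredAction

variable {Γ : Type*} [AddGroup Γ] (𝒜 : FibredAction Γ)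

section Basic

/-- The homeomorphism of the plane by which `σ` acts. -/
def act (σ : Γ) (p : ℝ × ℝ) : ℝ × ℝ := (p.1 + 𝒜.drift σ, 𝒜.fiber σ p.1 p.2)

/-- The function whose graph is the image under `σ` of the graph of `g`. -/
def push (σ : Γ) (g : ℝ → ℝ) (t : ℝ) : ℝ :=
  𝒜.fiber σ (t - 𝒜.drift σ) (g (t - 𝒜.drift σ))

/-- The union of the orbits that meet `U`. -/
def saturation (U : Set (ℝ × ℝ)) : Set (ℝ × ℝ) := ⋃ σ, 𝒜.act σ '' U

/-- The return times of `U`: the elements that move `U` to a set meeting `U`. -/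
def returns (U : Set (ℝ × ℝ)) : Set Γ := {τ | ∃ u ∈ U, 𝒜.act τ u ∈ U}

variable {g h : ℝ → ℝ} {U V : Set (ℝ × ℝ)} {p : ℝ × ℝ}

lemma act_zero (p : ℝ × ℝ) : 𝒜.act 0 p = p := by
  simp [act, 𝒜.fiber_zero]

lemma act_add (σ ρ : Γ) (p : ℝ × ℝ) : 𝒜.act (σ + ρ) p = 𝒜.act σ (𝒜.act ρ p) := by
  ext
  · simp only [act, map_add]; ring
  · exact 𝒜.fiber_add σ ρ p.1 p.2

lemma act_neg_act (σ : Γ) (p : ℝ × ℝ) : 𝒜.act (-σ) (𝒜.act σ p) = p := by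
  rw [← act_add, neg_add_cancel, act_zero]

lemma continuous_act (σ : Γ) : Continuous (𝒜.act σ) :=
  (continuous_fst.add_const _).prodMk (𝒜.continuous_fiber σ)

lemma push_zero (g : ℝ → ℝ) : 𝒜.push 0 g = g := by
  ext t; simp [push, 𝒜.fiber_zero]

lemma push_add (σ ρ : Γ) (g : ℝ → ℝ) : 𝒜.push (σ + ρ) g = 𝒜.push σ (𝒜.push ρ g) := by
  ext t
  simp only [push, map_add, 𝒜.fiber_add, ← sub_sub, sub_add_cancel]

lemma continuous_push (σ : Γ) (hg : Continuous g) : Continuous (𝒜.push σ g) := by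
  have hsub : Continuous fun t : ℝ => t - 𝒜.drift σ := by fun_prop
  exact (𝒜.continuous_fiber σ).comp (hsub.prodMk (hg.comp hsub))

lemma push_mono (σ : Γ) : Monotone (𝒜.push σ) := fun _ _ hgh _ =>
  (𝒜.strictMono_fiber σ _).monotone (hgh _)

lemma push_strongLT (σ : Γ) (hgh : StrongLT g h) : StrongLT (𝒜.push σ g) (𝒜.push σ h) :=
  fun _ => 𝒜.strictMono_fiber σ _ (hgh _)

lemma push_add_act_fst (τ σ : Γ) (g : ℝ → ℝ) (p : ℝ × ℝ) :
    𝒜.push (τ + σ) g (𝒜.act τ p).1 = 𝒜.fiber τ p.1 (𝒜.push σ g p.1) := by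
  rw [push_add, push, act, add_sub_cancel_right]

lemma push_add_lt_act_iff (τ σ : Γ) :
    𝒜.push (τ + σ) g (𝒜.act τ p).1 < (𝒜.act τ p).2 ↔ 𝒜.push σ g p.1 < p.2 := by
  rw [push_add_act_fst]; exact (𝒜.strictMono_fiber τ p.1).lt_iff_lt

lemma subset_saturation : U ⊆ 𝒜.saturation U := fun u hu =>
  Set.mem_iUnion.mpr ⟨0, u, hu, 𝒜.act_zero u⟩

lemma saturation_mono (hUV : U ⊆ V) : 𝒜.saturation U ⊆ 𝒜.saturation V :=
  Set.iUnion_mono fun _ => Set.image_mono hUV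

lemma act_mem_saturation (σ : Γ) (hp : p ∈ 𝒜.saturation U) : 𝒜.act σ p ∈ 𝒜.saturation U := by
  obtain ⟨ρ, u, hu, rfl⟩ := Set.mem_iUnion.mp hp
  exact Set.mem_iUnion.mpr ⟨σ + ρ, u, hu, 𝒜.act_add σ ρ u⟩

lemma disjoint_saturation (hUV : ∀ σ, ∀ u ∈ U, 𝒜.act σ u ∉ V) :
    Disjoint (𝒜.saturation U) (𝒜.saturation V) := by
  refine Set.disjoint_left.mpr fun p hpU hpV => ?_
  obtain ⟨ρ, v, hv, rfl⟩ := Set.mem_iUnion.mp hpV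
  obtain ⟨σ, u, hu, huv⟩ := Set.mem_iUnion.mp (𝒜.act_mem_saturation (-ρ) hpU)
  exact hUV σ u hu (by rwa [huv, act_neg_act])

lemma graph_push_mem_saturation (hg : ∀ t, (t, g t) ∈ 𝒜.saturation U) (σ : Γ) (t : ℝ) :
    (t, 𝒜.push σ g t) ∈ 𝒜.saturation U := by
  simpa [act, push] using 𝒜.act_mem_saturation σ (hg (t - 𝒜.drift σ))

end Basic

section Graphs

variable {g h : ℝ → ℝ} {U V : Set (ℝ × ℝ)}

-- The segment from `q` to `τ q` is a fundamental domain: its images under the multiples of `τ`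
-- concatenate to a curve that crosses every vertical line exactly once.
lemma exists_graph_in_saturation (hU : Convex ℝ U) {τ : Γ} (hτ : 𝒜.drift τ ≠ 0) {q : ℝ × ℝ}
    (hq : q ∈ U) (hτq : 𝒜.act τ q ∈ U) :
    ∃ g : ℝ → ℝ, Continuous g ∧ g q.1 = q.2 ∧ ∀ t, (t, g t) ∈ 𝒜.saturation U := by
  let chord : ℝ → ℝ × ℝ := AffineMap.lineMap q (𝒜.act τ q)
  let curve : ℝ → ℝ × ℝ := fun s => 𝒜.act (⌊s⌋ • τ) (chord (s - ⌊s⌋))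
  have hcurve_cont : Continuous curve := by
    refine continuous_apply_floor (f := fun k s => 𝒜.act (k • τ) (chord (s - k)))
      (fun k => (𝒜.continuous_act _).comp (AffineMap.lineMap_continuous.comp (by fun_prop)))
      fun k => ?_
    simp [chord, add_zsmul, act_add]
  have hcurve_fst (s : ℝ) : (curve s).1 = q.1 + s * 𝒜.drift τ := by
    simp only [curve, chord, act, AffineMap.fst_lineMap, AffineMap.lineMap_apply_ring',
      map_zsmul, zsmul_eq_mul]
    ring
  have hcurve_mem (s : ℝ) : curve s ∈ 𝒜.saturation U :=
    𝒜.act_mem_saturation _ <| 𝒜.subset_saturation <| hU.lineMap_mem hq hτq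
      ⟨Int.fract_nonneg s, (Int.fract_lt_one s).le⟩
  refine ⟨fun t => (curve ((t - q.1) / 𝒜.drift τ)).2, by fun_prop, ?_, fun t => ?_⟩
  · simp [curve, chord, act_zero]
  · have hfst : (curve ((t - q.1) / 𝒜.drift τ)).1 = t := by
      rw [hcurve_fst, div_mul_cancel₀ _ hτ, add_sub_cancel]
    nth_rw 1 [← hfst]
    exact hcurve_mem _

lemma push_nsmul_le_push {δ σ : Γ} (hδ : 𝒜.push σ g ≤ 𝒜.push (δ + σ) g) {N : ℕ} (hN : 0 < N) :
    𝒜.push (δ + σ) g ≤ 𝒜.push (N • δ + σ) g := by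
  induction N, hN using Nat.le_induction with
  | base => rw [one_nsmul]
  | succ N _ ih =>
    calc 𝒜.push (δ + σ) g ≤ 𝒜.push δ (𝒜.push (δ + σ) g) := by
          rw [push_add]; exact 𝒜.push_mono δ (by rwa [← push_add])
      _ ≤ 𝒜.push δ (𝒜.push (N • δ + σ) g) := 𝒜.push_mono δ ih
      _ = 𝒜.push ((N + 1) • δ + σ) g := by rw [← push_add, succ_nsmul', add_assoc]

-- If `push σ g < h < push ρ g`, then `δ = ρ - σ` moves `push σ g` upwards, so every positive
-- multiple of `δ` moves it above `h`; but some positive multiple of `δ` is a period.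
open scoped Pointwise in
lemma forall_push_strongLT_or_forall_strongLT_push
    (hside : ∀ σ, StrongLT (𝒜.push σ g) h ∨ StrongLT h (𝒜.push σ g))
    (hper : ∀ δ : Γ, ∃ N : ℕ, 0 < N ∧
      N • δ ∈ AddAction.stabilizer Γ {σ | StrongLT (𝒜.push σ g) h}) :
    (∀ σ, StrongLT (𝒜.push σ g) h) ∨ ∀ σ, StrongLT h (𝒜.push σ g) := by
  by_contra! hmixed
  obtain ⟨⟨ρ, hρ⟩, σ, hσ⟩ := hmixed
  replace hρ : StrongLT h (𝒜.push ρ g) := (hside ρ).resolve_left hρ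
  replace hσ : StrongLT (𝒜.push σ g) h := (hside σ).resolve_right hσ
  obtain ⟨N, hN, hperiod⟩ := hper (ρ - σ)
  have hbelow : StrongLT (𝒜.push (N • (ρ - σ) + σ) g) h :=
    (AddAction.mem_stabilizer_set.mp hperiod σ).mpr hσ
  have habove : 𝒜.push ρ g ≤ 𝒜.push (N • (ρ - σ) + σ) g := by
    simpa only [sub_add_cancel] using 𝒜.push_nsmul_le_push (δ := ρ - σ) (σ := σ)
      (by rw [sub_add_cancel]; exact (hσ.trans_le hρ.le).le) hN
  exact lt_asymm (hbelow 0) ((hρ.trans_le habove) 0)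

open scoped Pointwise in
lemma returns_subset_stabilizer
    (hside : ∀ σ, (∀ v ∈ V, 𝒜.push σ g v.1 < v.2) ∨ ∀ v ∈ V, v.2 < 𝒜.push σ g v.1) :
    𝒜.returns V ⊆ AddAction.stabilizer Γ {σ | ∀ v ∈ V, 𝒜.push σ g v.1 < v.2} := by
  have hpoint {v : ℝ × ℝ} (hv : v ∈ V) (σ : Γ) :
      (∀ w ∈ V, 𝒜.push σ g w.1 < w.2) ↔ 𝒜.push σ g v.1 < v.2 :=
    ⟨fun hσ => hσ v hv, fun hlt => (hside σ).resolve_right fun hσ => lt_asymm hlt (hσ v hv)⟩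
  rintro τ ⟨v, hv, hτv⟩
  refine AddAction.mem_stabilizer_set.mpr fun σ => ?_
  exact (hpoint hτv _).trans <| (𝒜.push_add_lt_act_iff τ σ).trans (hpoint hv σ).symm

lemma forall_push_comparable_of_returns (hV : IsPreconnected V)
    (hUV : Disjoint (𝒜.saturation U) (𝒜.saturation V))
    (hper : ∀ δ : Γ, ∃ N : ℕ, 0 < N ∧ N • δ ∈ AddSubgroup.closure (𝒜.returns V))
    (hg : Continuous g) (hgU : ∀ t, (t, g t) ∈ 𝒜.saturation U)
    (hh : Continuous h) (hhV : ∀ t, (t, h t) ∈ 𝒜.saturation V) (hmeet : ∃ t, (t, h t) ∈ V) :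
    (∀ σ, StrongLT (𝒜.push σ g) h) ∨ ∀ σ, StrongLT h (𝒜.push σ g) := by
  obtain ⟨t₀, ht₀⟩ := hmeet
  have hconn : IsPreconnected (V ∪ Set.range fun t => (t, h t)) :=
    hV.union (t₀, h t₀) ht₀ ⟨t₀, rfl⟩ (isPreconnected_range (by fun_prop))
  have hdisj (σ : Γ) : ∀ p ∈ V ∪ Set.range fun t => (t, h t), p.2 ≠ 𝒜.push σ g p.1 := by
    intro p hp heq
    have hpV : p ∈ 𝒜.saturation V :=
      hp.elim (fun hp => 𝒜.subset_saturation hp) (by rintro ⟨t, rfl⟩; exact hhV t)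
    refine Set.disjoint_left.mp hUV ?_ hpV
    simpa only [← heq] using 𝒜.graph_push_mem_saturation hgU σ p.1
  have hside (σ : Γ) :=
    above_or_below_graph_of_isPreconnected (𝒜.continuous_push σ hg) hconn (hdisj σ)
  simp only [Set.mem_union, or_imp, forall_and, Set.forall_mem_range] at hside
  have hiff (σ : Γ) : (∀ v ∈ V, 𝒜.push σ g v.1 < v.2) ↔ StrongLT (𝒜.push σ g) h := by
    rcases hside σ with ⟨hσV, hσh⟩ | ⟨hσV, hσh⟩
    · exact iff_of_true hσV hσh
    · exact iff_of_false (fun hσ => lt_asymm (hσ _ ht₀) (hσV _ ht₀))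
        fun hσ => lt_asymm (hσ 0) (hσh 0)
  have hclosure := (AddSubgroup.closure_le _).mpr <| 𝒜.returns_subset_stabilizer fun σ =>
    (hside σ).imp And.left And.left
  simp only [hiff] at hclosure
  exact 𝒜.forall_push_strongLT_or_forall_strongLT_push
    (fun σ => (hside σ).imp And.right And.right)
    fun δ => (hper δ).imp fun N hN => ⟨hN.1, hclosure hN.2⟩

theorem exists_graphs_forall_push_strongLT (hU : Convex ℝ U) (hV : Convex ℝ V)
    (hUV : ∀ σ, ∀ u ∈ U, 𝒜.act σ u ∉ V)
    (hUret : ∃ τ ∈ 𝒜.returns U, 𝒜.drift τ ≠ 0) (hVret : ∃ τ ∈ 𝒜.returns V, 𝒜.drift τ ≠ 0)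
    (hper : ∀ δ : Γ, ∃ N : ℕ, 0 < N ∧ N • δ ∈ AddSubgroup.closure (𝒜.returns V)) :
    ∃ g h : ℝ → ℝ, Continuous g ∧ Continuous h ∧ (∀ t, (t, g t) ∈ 𝒜.saturation (U ∪ V)) ∧
      (∀ t, (t, h t) ∈ 𝒜.saturation (U ∪ V)) ∧ ∀ σ, StrongLT (𝒜.push σ g) h := by
  obtain ⟨τ, ⟨u, hu, hτu⟩, hτ⟩ := hUret
  obtain ⟨g, hg, -, hgU⟩ := 𝒜.exists_graph_in_saturation hU hτ hu hτu
  obtain ⟨ρ, ⟨v, hv, hρv⟩, hρ⟩ := hVret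
  obtain ⟨h, hh, hhv, hhV⟩ := 𝒜.exists_graph_in_saturation hV hρ hv hρv
  have hgUV (t : ℝ) : (t, g t) ∈ 𝒜.saturation (U ∪ V) :=
    𝒜.saturation_mono Set.subset_union_left (hgU t)
  have hhUV (t : ℝ) : (t, h t) ∈ 𝒜.saturation (U ∪ V) :=
    𝒜.saturation_mono Set.subset_union_right (hhV t)
  rcases 𝒜.forall_push_comparable_of_returns hV.isPreconnected (𝒜.disjoint_saturation hUV) hper
    hg hgU hh hhV ⟨v.1, by rwa [hhv]⟩ with hlt | hlt
  · exact ⟨g, h, hg, hh, hgUV, hhUV, hlt⟩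
  · refine ⟨h, g, hh, hg, hhUV, hgUV, fun σ => ?_⟩
    simpa only [← push_add, add_neg_cancel, push_zero] using 𝒜.push_strongLT σ (hlt (-σ))

end Graphs

section Trapped

variable {g h : ℝ → ℝ}

/-- The points that lie above every image of the graph of `g` and below every image of the graph
of `h`: the largest invariant set between the two graphs. -/
def trapped (g h : ℝ → ℝ) : Set (ℝ × ℝ) :=
  {p | ∀ σ, p.2 ∈ Set.Icc (𝒜.push σ g p.1) (𝒜.push σ h p.1)}

lemma act_mem_trapped (ρ : Γ) {p : ℝ × ℝ} (hp : p ∈ 𝒜.trapped g h) :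
    𝒜.act ρ p ∈ 𝒜.trapped g h := by
  intro σ
  have hmono := (𝒜.strictMono_fiber ρ p.1).monotone
  rw [← add_neg_cancel_left ρ σ, push_add_act_fst, push_add_act_fst]
  exact ⟨hmono (hp _).1, hmono (hp _).2⟩

lemma mem_Icc_of_mem_trapped {t x : ℝ} (hx : (t, x) ∈ 𝒜.trapped g h) :
    x ∈ Set.Icc (g t) (h t) := by
  simpa only [push_zero] using hx 0

lemma isClosed_trapped (hg : Continuous g) (hh : Continuous h) : IsClosed (𝒜.trapped g h) := by
  have hgσ (σ : Γ) := 𝒜.continuous_push σ hg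
  have hhσ (σ : Γ) := 𝒜.continuous_push σ hh
  simp only [trapped, Set.ofPred_forall, Set.mem_Icc]
  exact isClosed_iInter fun σ => (isClosed_le (by fun_prop) (by fun_prop)).and
    (isClosed_le (by fun_prop) (by fun_prop))

lemma isCompact_trapped_inter_Icc (hg : Continuous g) (hh : Continuous h) (a b : ℝ) :
    IsCompact (𝒜.trapped g h ∩ {p | p.1 ∈ Set.Icc a b}) := by
  obtain ⟨m, hm⟩ := (isCompact_Icc (a := a) (b := b)).bddBelow_image hg.continuousOn
  obtain ⟨M, hM⟩ := (isCompact_Icc (a := a) (b := b)).bddAbove_image hh.continuousOn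
  refine (isCompact_Icc.prod isCompact_Icc : IsCompact (Set.Icc a b ×ˢ Set.Icc m M))
    |>.of_isClosed_subset ((𝒜.isClosed_trapped hg hh).inter
      (isClosed_Icc.preimage continuous_fst)) fun p hp => ⟨hp.2, ?_⟩
  have hbounds := 𝒜.mem_Icc_of_mem_trapped hp.1
  exact ⟨(hm ⟨_, hp.2, rfl⟩).trans hbounds.1, hbounds.2.trans (hM ⟨_, hp.2, rfl⟩)⟩

lemma exists_trapped_fiber_eq_Icc (hgh : ∀ σ, StrongLT (𝒜.push σ g) h) (t : ℝ) :
    ∃ a b, a ≤ b ∧ {x | (t, x) ∈ 𝒜.trapped g h} = Set.Icc a b := by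
  have hle (σ ρ : Γ) : 𝒜.push σ g t ≤ 𝒜.push ρ h t := by
    simpa only [← push_add, add_neg_cancel_left] using 𝒜.push_mono ρ (hgh (-ρ + σ)).le t
  have hbddg : BddAbove (Set.range fun σ => 𝒜.push σ g t) :=
    ⟨𝒜.push 0 h t, Set.forall_mem_range.mpr fun σ => hle σ 0⟩
  have hbddh : BddBelow (Set.range fun σ => 𝒜.push σ h t) :=
    ⟨𝒜.push 0 g t, Set.forall_mem_range.mpr fun σ => hle 0 σ⟩
  refine ⟨⨆ σ, 𝒜.push σ g t, ⨅ σ, 𝒜.push σ h t, ciSup_le fun σ => le_ciInf (hle σ), ?_⟩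
  ext x
  simp only [trapped, Set.mem_ofPred_eq, Set.mem_Icc, forall_and, ciSup_le_iff hbddg,
    le_ciInf_iff hbddh]

end Trapped

end FibredAction

/-! ### Skew products on the annulus -/

section SkewProduct

/-- `F` is the fibre part of a skew product by increasing homeomorphisms of the line: a lift of a
qpf circle homeomorphism without the periodicity in the fibre. -/
structure IsFibredHomeo (F : T1 → ℝ → ℝ) : Prop where
  continuous : Continuous fun p : T1 × ℝ => F p.1 p.2
  strictMono : ∀ θ, StrictMono (F θ)
  surjective : ∀ θ, Function.Surjective (F θ)

variable {ω : ℝ} {F : T1 → ℝ → ℝ}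

lemma IsQpfLift.isFibredHomeo (hF : IsQpfLift ω F) : IsFibredHomeo F :=
  ⟨hF.cont, hF.mono, hF.surj⟩

namespace IsFibredHomeo

/-- The fibre map over `θ` as an order isomorphism of the line. -/
def orderIso (hF : IsFibredHomeo F) (θ : T1) : ℝ ≃o ℝ :=
  (hF.strictMono θ).orderIsoOfSurjective (F θ) (hF.surjective θ)

/-- The homeomorphism of the annulus `T¹ × ℝ` that acts by `F θ` on the fibre over `θ`. -/
def fiberHomeo (hF : IsFibredHomeo F) : T1 × ℝ ≃ₜ T1 × ℝ where
  toFun p := (p.1, F p.1 p.2)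
  invFun p := (p.1, (hF.orderIso p.1).symm p.2)
  left_inv p := Prod.ext rfl ((hF.orderIso p.1).symm_apply_apply p.2)
  right_inv p := Prod.ext rfl ((hF.orderIso p.1).apply_symm_apply p.2)
  continuous_toFun := continuous_fst.prodMk hF.continuous
  continuous_invFun := continuous_fst.prodMk <| continuous_orderIso_symm_apply fun _ =>
    hF.continuous.comp (continuous_id.prodMk continuous_const)

/-- The skew product `skew ω F` as a homeomorphism of the annulus `T¹ × ℝ`. -/
def skewHomeo (hF : IsFibredHomeo F) (ω : ℝ) : T1 × ℝ ≃ₜ T1 × ℝ :=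
  hF.fiberHomeo.trans ((Homeomorph.addRight (ω : T1)).prodCongr (Homeomorph.refl ℝ))

variable (hF : IsFibredHomeo F)

lemma coe_skewHomeo_pow (ω : ℝ) (n : ℕ) : ⇑(hF.skewHomeo ω ^ n) = (skew ω F)^[n] :=
  hom_coe_pow _ rfl (fun _ _ => rfl) _ _

lemma skewHomeo_zpow_apply_fst (ω : ℝ) (a : ℤ) (p : T1 × ℝ) :
    ((hF.skewHomeo ω ^ a) p).1 = p.1 + a • (ω : T1) := by
  induction a using Int.induction_on generalizing p with
  | zero => simp
  | succ a ih =>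
    rw [zpow_add_one, Homeomorph.mul_apply, ih, add_comm (a : ℤ) 1, one_add_zsmul]
    exact add_assoc _ _ _
  | pred a ih =>
    rw [zpow_sub_one, Homeomorph.mul_apply, ih, sub_zsmul, one_zsmul, add_comm (-(a : ℤ) • _)]
    exact add_assoc _ _ _

lemma strictMono_skewHomeo_zpow (ω : ℝ) (a : ℤ) (θ : T1) :
    StrictMono fun x => ((hF.skewHomeo ω ^ a) (θ, x)).2 := by
  induction a using Int.induction_on generalizing θ with
  | zero => exact strictMono_id
  | succ a ih =>
    simp only [zpow_add_one, Homeomorph.mul_apply]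
    exact (ih (θ + (ω : T1))).comp (hF.strictMono θ)
  | pred a ih =>
    simp only [zpow_sub_one, Homeomorph.mul_apply]
    exact (ih (θ + -(ω : T1))).comp (hF.orderIso (θ + -(ω : T1))).symm.strictMono

end IsFibredHomeo

/-- The covering map from the plane to the annulus `T¹ × ℝ`. -/
def toAnnulus : ℝ × ℝ → T1 × ℝ := Prod.map (↑) id

lemma continuous_toAnnulus : Continuous toAnnulus :=
  (AddCircle.continuous_mk' 1).prodMap continuous_id

lemma isOpenMap_toAnnulus : IsOpenMap toAnnulus :=
  QuotientAddGroup.isOpenMap_coe.prodMap .id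

lemma surjective_toAnnulus : Function.Surjective toAnnulus :=
  QuotientAddGroup.mk_surjective.prodMap Function.surjective_id

lemma toAnnulus_fract (p : ℝ × ℝ) : toAnnulus (Int.fract p.1, p.2) = toAnnulus p :=
  Prod.ext (AddCircle.coe_fract p.1) rfl

lemma exists_convex_subset_preimage_toAnnulus {U : Set (T1 × ℝ)} (hU : IsOpen U)
    (hUne : U.Nonempty) :
    ∃ U' : Set (ℝ × ℝ), IsOpen U' ∧ U'.Nonempty ∧ Convex ℝ U' ∧ U' ⊆ toAnnulus ⁻¹' U := by
  obtain ⟨p, hp⟩ := hUne.preimage surjective_toAnnulus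
  obtain ⟨ε, hε, hball⟩ := Metric.isOpen_iff.mp (hU.preimage continuous_toAnnulus) p hp
  exact ⟨_, Metric.isOpen_ball, Metric.nonempty_ball.mpr hε, convex_ball p ε, hball⟩

lemma exists_of_toAnnulus_eq {p q : ℝ × ℝ} (hpq : toAnnulus p = toAnnulus q) :
    ∃ b : ℤ, q = (p.1 + b, p.2) := by
  obtain ⟨h₁, h₂⟩ := Prod.ext_iff.mp hpq
  obtain ⟨b, hb⟩ := (AddCircle.coe_eq_zero_iff 1).mp
    (show ((q.1 - p.1 : ℝ) : T1) = 0 by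
      rw [AddCircle.coe_sub, sub_eq_zero]; exact h₁.symm)
  exact ⟨b, Prod.ext (by rw [zsmul_one] at hb; linarith) h₂.symm⟩

/-- The action of `ℤ²` on the plane that lifts the iterates of the skew product: the first factor
acts by the iterates themselves, the second one by deck transformations. -/
def IsFibredHomeo.liftedAction (hF : IsFibredHomeo F) (ω : ℝ) : FibredAction (ℤ × ℤ) where
  drift := latticeDrift ω
  fiber σ t x := ((hF.skewHomeo ω ^ σ.1) (toAnnulus (t, x))).2
  fiber_zero t x := by simp [toAnnulus]
  fiber_add σ ρ t x := by
    rw [Prod.fst_add, zpow_add, Homeomorph.mul_apply]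
    congr 2
    refine Prod.ext ?_ rfl
    rw [hF.skewHomeo_zpow_apply_fst]
    simp [toAnnulus, latticeDrift_apply]
  continuous_fiber σ := continuous_snd.comp <|
    (hF.skewHomeo ω ^ σ.1).continuous.comp continuous_toAnnulus
  strictMono_fiber σ t := hF.strictMono_skewHomeo_zpow ω σ.1 t

namespace IsFibredHomeo

variable (hF : IsFibredHomeo F)

lemma toAnnulus_act (σ : ℤ × ℤ) (p : ℝ × ℝ) :
    toAnnulus ((hF.liftedAction ω).act σ p) = (hF.skewHomeo ω ^ σ.1) (toAnnulus p) := by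
  refine Prod.ext ?_ rfl
  rw [hF.skewHomeo_zpow_apply_fst]
  simp [toAnnulus, FibredAction.act, liftedAction, latticeDrift_apply]

lemma exists_act_eq {a : ℤ} {p q : ℝ × ℝ} (hpq : (hF.skewHomeo ω ^ a) (toAnnulus p) = toAnnulus q) :
    ∃ b : ℤ, (hF.liftedAction ω).act (a, b) p = q := by
  rw [← hF.toAnnulus_act (a, 0)] at hpq
  obtain ⟨b, rfl⟩ := exists_of_toAnnulus_eq hpq
  refine ⟨b, Prod.ext ?_ rfl⟩
  simp [FibredAction.act, liftedAction, latticeDrift_apply, add_assoc]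

lemma toAnnulus_mem_image_iff {T : Set (ℝ × ℝ)}
    (hT : ∀ σ, ∀ p ∈ T, (hF.liftedAction ω).act σ p ∈ T) {p : ℝ × ℝ} :
    toAnnulus p ∈ toAnnulus '' T ↔ p ∈ T := by
  refine ⟨?_, Set.mem_image_of_mem _⟩
  rintro ⟨q, hq, hqp⟩
  obtain ⟨b, rfl⟩ := hF.exists_act_eq (ω := ω) (a := 0) (by simpa using hqp)
  exact hT _ q hq

end IsFibredHomeo

end SkewProduct

section BoundingGraphs

variable {ω : ℝ} {F : T1 → ℝ → ℝ} {A B S : Set (T1 × ℝ)}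

namespace IsInvStrip

lemma isGreatest_phiSup (hA : IsInvStrip ω F A) (θ : T1) :
    IsGreatest {x | (θ, x) ∈ A} (phiSup A θ) := by
  obtain ⟨a, b, hab, hfiber⟩ := hA.2.2 θ
  rw [phiSup, hfiber, csSup_Icc hab]
  exact isGreatest_Icc hab

lemma isLeast_phiInf (hA : IsInvStrip ω F A) (θ : T1) :
    IsLeast {x | (θ, x) ∈ A} (phiInf A θ) := by
  obtain ⟨a, b, hab, hfiber⟩ := hA.2.2 θ
  rw [phiInf, hfiber, csInf_Icc hab]
  exact isLeast_Icc hab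

lemma image_fiber (hA : IsInvStrip ω F A) (θ : T1) :
    F θ '' {x | (θ, x) ∈ A} = {x | (θ + (ω : T1), x) ∈ A} := by
  ext y
  constructor
  · rintro ⟨x, hx, rfl⟩
    exact hA.2.1 ▸ Set.mem_image_of_mem (skew ω F) hx
  · intro hy
    rw [Set.mem_ofPred_eq, ← hA.2.1] at hy
    obtain ⟨⟨θ', x⟩, hx, hxy⟩ := hy
    obtain ⟨hθ, rfl⟩ := Prod.mk_inj.mp hxy
    obtain rfl := add_right_cancel hθ
    exact ⟨x, hx, rfl⟩

lemma phiSup_add (hA : IsInvStrip ω F A) {θ : T1} (hθ : Monotone (F θ)) :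
    phiSup A (θ + (ω : T1)) = F θ (phiSup A θ) := by
  refine (hA.isGreatest_phiSup _).unique ?_
  rw [← hA.image_fiber]
  exact hθ.map_isGreatest (hA.isGreatest_phiSup _)

lemma phiInf_add (hA : IsInvStrip ω F A) {θ : T1} (hθ : Monotone (F θ)) :
    phiInf A (θ + (ω : T1)) = F θ (phiInf A θ) := by
  refine (hA.isLeast_phiInf _).unique ?_
  rw [← hA.image_fiber]
  exact hθ.map_isLeast (hA.isLeast_phiInf _)

end IsInvStrip

/-- The open region between the strips `A` and `B`. -/
def stripGap (A B : Set (T1 × ℝ)) : Set (T1 × ℝ) :=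
  {p | phiSup A p.1 < p.2 ∧ p.2 < phiInf B p.1}

lemma ordConnected_fiber_stripGap (A B : Set (T1 × ℝ)) (θ : T1) :
    (Prod.mk θ ⁻¹' stripGap A B).OrdConnected :=
  (Set.ordConnected_Ioo : (Set.Ioo (phiSup A θ) (phiInf B θ)).OrdConnected)

lemma skew_preimage_stripGap (hF : ∀ θ, StrictMono (F θ)) (hA : IsInvStrip ω F A)
    (hB : IsInvStrip ω F B) : skew ω F ⁻¹' stripGap A B = stripGap A B := by
  ext p
  simp only [stripGap, skew, Set.mem_preimage, Set.mem_ofPred_eq,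
    hA.phiSup_add (hF p.1).monotone, hB.phiInf_add (hF p.1).monotone, (hF p.1).lt_iff_lt]

lemma IsInvStrip.stripLt_of_subset_stripGap (hS : IsInvStrip ω F S)
    (hSAB : S ⊆ stripGap A B) : StripLt A S ∧ StripLt S B :=
  ⟨fun θ => (hSAB (hS.isLeast_phiInf θ).1).1, fun θ => (hSAB (hS.isGreatest_phiSup θ).1).2⟩

end BoundingGraphs

section Strips

variable {ω : ℝ} {F : T1 → ℝ → ℝ} {C : Set (T1 × ℝ)}

namespace IsFibredHomeo

lemma isInvStrip_toAnnulus_image_trapped (hF : IsFibredHomeo F) {g h : ℝ → ℝ} (hg : Continuous g)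
    (hh : Continuous h) (hgh : ∀ σ, StrongLT ((hF.liftedAction ω).push σ g) h) :
    IsInvStrip ω F (toAnnulus '' (hF.liftedAction ω).trapped g h) := by
  set T := (hF.liftedAction ω).trapped g h
  have hinv (σ : ℤ × ℤ) : ∀ p ∈ T, (hF.liftedAction ω).act σ p ∈ T := fun _ hp =>
    (hF.liftedAction ω).act_mem_trapped σ hp
  have hmem (p : ℝ × ℝ) : toAnnulus p ∈ toAnnulus '' T ↔ p ∈ T := hF.toAnnulus_mem_image_iff hinv
  have hperiod : toAnnulus '' T = toAnnulus '' (T ∩ {p | p.1 ∈ Set.Icc 0 1}) := by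
    refine (Set.image_mono Set.inter_subset_left).antisymm' ?_
    rintro _ ⟨p, hp, rfl⟩
    have hfract : (Int.fract p.1, p.2) ∈ T := (hmem _).mp (by rwa [toAnnulus_fract, hmem])
    exact ⟨_, ⟨hfract, Int.fract_nonneg _, (Int.fract_lt_one _).le⟩, toAnnulus_fract p⟩
  have himage : skew ω F '' (toAnnulus '' T) = toAnnulus '' T := by
    refine Set.Subset.antisymm ?_ ?_
    · rintro _ ⟨_, ⟨p, hp, rfl⟩, rfl⟩
      exact ⟨_, hinv (1, 0) p hp, by rw [hF.toAnnulus_act, zpow_one]; rfl⟩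
    · rintro _ ⟨p, hp, rfl⟩
      refine ⟨_, ⟨_, hinv (-1, 0) p hp, rfl⟩, ?_⟩
      rw [hF.toAnnulus_act, zpow_neg_one]
      exact (hF.skewHomeo ω).apply_symm_apply (toAnnulus p)
  refine ⟨?_, himage, fun θ => ?_⟩
  · rw [hperiod]
    exact ((hF.liftedAction ω).isCompact_trapped_inter_Icc hg hh 0 1).image continuous_toAnnulus
  · obtain ⟨t, rfl⟩ := QuotientAddGroup.mk_surjective θ
    obtain ⟨a, b, hab, hfiber⟩ := (hF.liftedAction ω).exists_trapped_fiber_eq_Icc hgh t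
    exact ⟨a, b, hab, hfiber ▸ Set.ext fun x => hmem (t, x)⟩

lemma skewHomeo_zpow_mem_iff (hF : IsFibredHomeo F) (hC : skew ω F ⁻¹' C = C) (a : ℤ)
    (p : T1 × ℝ) : (hF.skewHomeo ω ^ a) p ∈ C ↔ p ∈ C := by
  have hone (q : T1 × ℝ) : hF.skewHomeo ω q ∈ C ↔ q ∈ C := Set.ext_iff.mp hC q
  induction a using Int.induction_on generalizing p with
  | zero => rfl
  | succ a ih =>
    rw [zpow_add_one, Homeomorph.mul_apply]
    exact (ih _).trans (hone p)
  | pred a ih =>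
    rw [zpow_sub_one, Homeomorph.mul_apply]
    refine (ih _).trans ((hone _).symm.trans ?_)
    rw [← Homeomorph.mul_apply, mul_inv_cancel, Homeomorph.one_apply]

lemma saturation_subset_preimage (hF : IsFibredHomeo F) (hC : skew ω F ⁻¹' C = C)
    {U : Set (ℝ × ℝ)} (hU : U ⊆ toAnnulus ⁻¹' C) :
    (hF.liftedAction ω).saturation U ⊆ toAnnulus ⁻¹' C := by
  refine Set.iUnion_subset fun σ => ?_
  rintro _ ⟨u, hu, rfl⟩
  rw [Set.mem_preimage, hF.toAnnulus_act, hF.skewHomeo_zpow_mem_iff hC]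
  exact hU hu

lemma exists_small_returns (hF : IsFibredHomeo F)
    (hret : ∀ W ⊆ C, IsOpen W → W.Nonempty → ∃ n : ℕ, 1 ≤ n ∧ ((skew ω F)^[n] '' W ∩ W).Nonempty)
    {U : Set (ℝ × ℝ)} (hU : IsOpen U) (hUne : U.Nonempty) (hUC : U ⊆ toAnnulus ⁻¹' C) {ε : ℝ}
    (hε : 0 < ε) :
    ∃ τ ∈ (hF.liftedAction ω).returns U, τ.1 ≠ 0 ∧ |latticeDrift ω τ| < ε := by
  obtain ⟨v, hv⟩ := hUne
  let W : Set (ℝ × ℝ) := U ∩ {p | |p.1 - v.1| < ε / 2}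
  have hWopen : IsOpen W := hU.inter (isOpen_lt (by fun_prop) continuous_const)
  have hWC : toAnnulus '' W ⊆ C := Set.image_subset_iff.mpr (Set.inter_subset_left.trans hUC)
  obtain ⟨n, hn, -, ⟨-, ⟨w, hw, rfl⟩, rfl⟩, w', hw', hww'⟩ :=
    hret _ hWC (isOpenMap_toAnnulus W hWopen) (Set.Nonempty.image _ ⟨v, hv, by simpa using hε⟩)
  rw [← hF.coe_skewHomeo_pow, ← zpow_natCast] at hww'
  obtain ⟨b, hb⟩ := hF.exists_act_eq hww'.symm
  refine ⟨(n, b), ⟨w, hw.1, hb ▸ hw'.1⟩, by simpa using Nat.one_le_iff_ne_zero.mp hn, ?_⟩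
  have hdrift : latticeDrift ω (n, b) = w'.1 - w.1 := by
    rw [← hb, FibredAction.act, add_sub_cancel_left]; rfl
  rw [hdrift]
  calc |w'.1 - w.1| ≤ |w'.1 - v.1| + |w.1 - v.1| := by
        simpa only [abs_sub_comm w.1] using abs_sub_le w'.1 v.1 w.1
    _ < ε / 2 + ε / 2 := add_lt_add hw'.2 hw.2
    _ = ε := add_halves ε

theorem exists_isInvStrip_subset (hF : IsFibredHomeo F) (hω : Irrational ω)
    (hC : skew ω F ⁻¹' C = C) (hfiber : ∀ θ, (Prod.mk θ ⁻¹' C).OrdConnected)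
    (hret : ∀ W ⊆ C, IsOpen W → W.Nonempty → ∃ n : ℕ, 1 ≤ n ∧ ((skew ω F)^[n] '' W ∩ W).Nonempty)
    {U V : Set (T1 × ℝ)} (hU : IsOpen U) (hV : IsOpen V) (hUne : U.Nonempty) (hVne : V.Nonempty)
    (hUC : U ⊆ C) (hVC : V ⊆ C) (hUV : ∀ a : ℤ, ∀ p ∈ U, (hF.skewHomeo ω ^ a) p ∉ V) :
    ∃ S ⊆ C, IsInvStrip ω F S := by
  obtain ⟨U', hU'open, hU'ne, hU'conv, hU'U⟩ := exists_convex_subset_preimage_toAnnulus hU hUne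
  obtain ⟨V', hV'open, hV'ne, hV'conv, hV'V⟩ := exists_convex_subset_preimage_toAnnulus hV hVne
  have hU'C : U' ⊆ toAnnulus ⁻¹' C := hU'U.trans (Set.preimage_mono hUC)
  have hV'C : V' ⊆ toAnnulus ⁻¹' C := hV'V.trans (Set.preimage_mono hVC)
  have hdisj (σ : ℤ × ℤ) : ∀ u ∈ U', (hF.liftedAction ω).act σ u ∉ V' := fun u hu hmem =>
    hUV σ.1 _ (hU'U hu) (hF.toAnnulus_act σ u ▸ hV'V hmem)
  have hdrift {W : Set (ℝ × ℝ)} (hW : IsOpen W) (hWne : W.Nonempty) (hWC : W ⊆ toAnnulus ⁻¹' C) :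
      ∃ τ ∈ (hF.liftedAction ω).returns W, (hF.liftedAction ω).drift τ ≠ 0 := by
    obtain ⟨τ, hτW, hτ, -⟩ := hF.exists_small_returns hret hW hWne hWC one_pos
    exact ⟨τ, hτW, latticeDrift_ne_zero hω hτ⟩
  have hperiod := exists_nsmul_mem_of_small_drift hω
    (R := AddSubgroup.closure ((hF.liftedAction ω).returns V')) fun ε hε => by
      obtain ⟨τ, hτV, hτ⟩ := hF.exists_small_returns hret hV'open hV'ne hV'C hε
      exact ⟨τ, AddSubgroup.subset_closure hτV, hτ⟩
  obtain ⟨g, h, hg, hh, hgUV, hhUV, hgh⟩ := (hF.liftedAction ω).exists_graphs_forall_push_strongLT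
    hU'conv hV'conv hdisj (hdrift hU'open hU'ne hU'C) (hdrift hV'open hV'ne hV'C) hperiod
  have hsat := hF.saturation_subset_preimage hC (Set.union_subset hU'C hV'C)
  refine ⟨_, Set.image_subset_iff.mpr fun p hp => ?_,
    hF.isInvStrip_toAnnulus_image_trapped hg hh hgh⟩
  have hgC : (↑p.1, g p.1) ∈ C := hsat (hgUV p.1)
  have hhC : (↑p.1, h p.1) ∈ C := hsat (hhUV p.1)
  exact (hfiber p.1).out hgC hhC ((hF.liftedAction ω).mem_Icc_of_mem_trapped hp)

end IsFibredHomeo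

theorem between_strips_transitive_or_wandering_general (hω : Irrational ω) (hF : IsFibredHomeo F)
    (hC : skew ω F ⁻¹' C = C) (hfiber : ∀ θ, (Prod.mk θ ⁻¹' C).OrdConnected)
    (hgap : ¬ ∃ S ⊆ C, IsInvStrip ω F S) :
    (∀ U V : Set (T1 × ℝ), IsOpen U → IsOpen V → U.Nonempty → V.Nonempty →
      U ⊆ C → V ⊆ C → ∃ n : ℕ,
        (((skew ω F)^[n] '' U) ∩ V).Nonempty ∨ (((skew ω F)^[n] ⁻¹' U) ∩ V).Nonempty) ∨
    (∃ W : Set (T1 × ℝ), IsOpen W ∧ W.Nonempty ∧ W ⊆ C ∧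
      ∀ n : ℕ, 1 ≤ n → ((skew ω F)^[n] '' W) ∩ W = ∅) := by
  refine or_iff_not_imp_right.mpr fun hwandering U V hU hV hUne hVne hUC hVC => ?_
  by_contra! hdisj
  refine hgap <| hF.exists_isInvStrip_subset hω hC hfiber (fun W hWC hW hWne => ?_)
    hU hV hUne hVne hUC hVC fun a p hpU hpV => ?_
  · by_contra! hreturn
    exact hwandering ⟨W, hW, hWne, hWC, hreturn⟩
  · obtain ⟨n, rfl | rfl⟩ := a.eq_nat_or_neg
    · rw [zpow_natCast, hF.coe_skewHomeo_pow] at hpV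
      exact Set.eq_empty_iff_forall_notMem.mp (hdisj n).1 _ ⟨⟨p, hpU, rfl⟩, hpV⟩
    · refine Set.eq_empty_iff_forall_notMem.mp (hdisj n).2 _ ⟨?_, hpV⟩
      rw [Set.mem_preimage, ← hF.coe_skewHomeo_pow, ← zpow_natCast, ← Homeomorph.mul_apply,
        ← zpow_add, add_neg_cancel]
      exact hpU

end Strips

/-- Lemma 4.3: between two neighboring minimal invariant strips, the
dynamics is either topologically transitive or admits a nonempty open wandering set.
(For `n ∈ ℤ`, the image `F^n(U)` is the forward image for `n ≥ 0` and the preimage under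
`F^{|n|}` for `n < 0`.) -/
theorem between_strips_transitive_or_wandering
    (ω : ℝ) (hω : Irrational ω)
    (F : T1 → ℝ → ℝ) (hF : IsQpfLift ω F)
    (A B : Set (T1 × ℝ))
    (hA : IsMinimalStrip ω F A) (hB : IsMinimalStrip ω F B) (hAB : StripLt A B)
    (hgap : ¬ ∃ S : Set (T1 × ℝ), IsInvStrip ω F S ∧ StripLt A S ∧ StripLt S B)
    (C : Set (T1 × ℝ))
    (hC : C = {p : T1 × ℝ | phiSup A p.1 < p.2 ∧ p.2 < phiInf B p.1}) :
    (∀ U V : Set (T1 × ℝ), IsOpen U → IsOpen V → U.Nonempty → V.Nonempty →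
      U ⊆ C → V ⊆ C → ∃ n : ℕ,
        (((skew ω F)^[n] '' U) ∩ V).Nonempty ∨ (((skew ω F)^[n] ⁻¹' U) ∩ V).Nonempty) ∨
    (∃ W : Set (T1 × ℝ), IsOpen W ∧ W.Nonempty ∧ W ⊆ C ∧
      ∀ n : ℕ, 1 ≤ n → ((skew ω F)^[n] '' W) ∩ W = ∅) := by
  subst hC
  exact between_strips_transitive_or_wandering_general hω hF.isFibredHomeo
    (skew_preimage_stripGap hF.mono hA.1 hB.1) (ordConnected_fiber_stripGap A B)
    fun ⟨S, hSAB, hS⟩ => hgap ⟨S, hS, hS.stripLt_of_subset_stripGap hSAB⟩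
end
end

section
/- Let f be a quasiperiodically forced circle homeomorphism over an irrational ω with lift F. Let A ≺ B be minimal F-invariant strips with no F-invariant strip S satisfying A ≺ S ≺ B, let C := {(θ,x) ∈ T¹×ℝ : φ⁺_A(θ) < x < φ⁻_B(θ)}, and suppose there exists a nonempty open wandering set W ⊆ C (i.e. F^n(W) ∩ W = ∅ for all n ≥ 1). Then there exist a continuous curve γ : T¹ → ℝ whose graph {(θ,γ(θ)) : θ ∈ T¹} is contained in C and an integer N ≥ 1 such that either F^N_θ(γ(θ)) > γ(θ+Nω) for all θ, or F^N_θ(γ(θ)) < γ(θ+Nω) for all θ (γ is mapped strictly above, respectively strictly below, itself by the N-th iterate of F). -/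
open Filter Topology MeasureTheory
open scoped ENNReal

noncomputable section

/-!
Take a box in `W`, an arc times a height interval, and lift the base to `ℝ`: its images are boxes
indexed by `g = (n, p) ∈ ℤ²`, centered at `α g = n ω - p`. Since `W` wanders, distinct boxes are
disjoint, so any two whose bases overlap are ordered, and translation by `ℤ²` preserves this order.
The boxes that lie above the box `0` thus form a local positive cone `P` in `{g | |α g| < R}`.

If `P` contains `g₁` and `g₂` with `α g₁ > 0 > α g₂`, then by Cramer's rule a fixed multiple of
every `g` with `n` large and `|α g|` small is a positive combination of `g₁` and `g₂`. Hence all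
such `g` lie in `P`, or all in `-P`: at late times the orbit of the box is always above, or always
below, its earlier part. Pasting local curves inside the boxes by a partition of unity gives `γ`.

Otherwise the order of the boxes is given by the sign of `α`. Splitting the box into a left and a
right half, all images of one half lie below all images of the other, and the points between the
two families form an invariant strip in `C`, which does not exist.
-/

/-! ### Local positive cones -/

section LocalCone

variable {G : Type*} [AddCommGroup G] {α : G →+ ℝ} {R : ℝ} {P : Set G} {g h : G}

/-- The positive cone of a translation-invariant relation on `G` which compares `g` and `h` exactly
when `|α (h - g)| < R`, and which is only transitive as long as the outer terms are comparable. -/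
structure IsLocalCone (α : G →+ ℝ) (R : ℝ) (P : Set G) : Prop where
  zero_notMem : 0 ∉ P
  abs_map_lt : ∀ g ∈ P, |α g| < R
  add_mem : ∀ g ∈ P, ∀ h ∈ P, |α (g + h)| < R → g + h ∈ P
  mem_or_neg_mem : ∀ g, g ≠ 0 → |α g| < R → g ∈ P ∨ -g ∈ P

namespace IsLocalCone

theorem pos_of_mem (hP : IsLocalCone α R P) (hg : g ∈ P) : 0 < R :=
  (abs_nonneg _).trans_lt (hP.abs_map_lt g hg)

theorem neg_notMem (hP : IsLocalCone α R P) (hg : g ∈ P) : -g ∉ P := fun hg' =>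
  hP.zero_notMem <| by
    simpa using hP.add_mem g hg (-g) hg' (by simpa using hP.pos_of_mem hg)

theorem nsmul_mem (hP : IsLocalCone α R P) (hg : g ∈ P) {k : ℕ} (hk : k ≠ 0)
    (hR : |α (k • g)| < R) : k • g ∈ P := by
  induction k, Nat.one_le_iff_ne_zero.2 hk using Nat.le_induction with
  | base => simpa using hg
  | succ k hk ih =>
    have hkR : |α (k • g)| < R := by
      refine lt_of_le_of_lt ?_ hR
      simp only [map_nsmul, nsmul_eq_mul, abs_mul, Nat.abs_cast]
      gcongr
      simp
    rw [succ_nsmul] at hR ⊢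
    exact hP.add_mem _ (ih (by lia) hkR) g hg hR

theorem mem_of_nsmul_mem (hP : IsLocalCone α R P) {k : ℕ} (hg : k • g ∈ P) : g ∈ P := by
  have hk : k ≠ 0 := by
    rintro rfl
    exact hP.zero_notMem (by simpa using hg)
  have hg0 : g ≠ 0 := by
    rintro rfl
    exact hP.zero_notMem (by simpa using hg)
  have hkR : |α (k • g)| < R := hP.abs_map_lt _ hg
  have hle : |α g| ≤ |α (k • g)| := by
    simp only [map_nsmul, nsmul_eq_mul, abs_mul, Nat.abs_cast]
    exact le_mul_of_one_le_left (abs_nonneg _) (by exact_mod_cast Nat.one_le_iff_ne_zero.2 hk)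
  refine (hP.mem_or_neg_mem g hg0 (hle.trans_lt hkR)).resolve_right fun hneg => ?_
  refine hP.neg_notMem hg ?_
  rw [← smul_neg]
  exact hP.nsmul_mem hneg hk (by simpa using hkR)

/-- Adding `g` whenever the current value of `α` is nonpositive and `h` otherwise keeps all partial
sums inside the window `|α| < R`. -/
theorem nsmul_add_nsmul_mem (hP : IsLocalCone α R P) (hg : g ∈ P) (hh : h ∈ P) (hαg : 0 < α g)
    (hαh : α h < 0) {a b : ℕ} (hab : 0 < a + b) (hR : |α (a • g + b • h)| < R) :
    a • g + b • h ∈ P := by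
  obtain ⟨n, hn⟩ : ∃ n, a + b = n + 1 := Nat.exists_eq_add_one.2 hab
  clear hab
  have hgR := abs_lt.1 (hP.abs_map_lt g hg)
  have hhR := abs_lt.1 (hP.abs_map_lt h hh)
  induction n generalizing a b with
  | zero =>
    obtain ⟨rfl, rfl⟩ | ⟨rfl, rfl⟩ : a = 1 ∧ b = 0 ∨ a = 0 ∧ b = 1 := by lia
    · simpa using hg
    · simpa using hh
  | succ n ih =>
    have hR' := abs_lt.1 hR
    rcases lt_or_ge 0 (α (a • g + b • h)) with hpos | hnonpos
    · obtain _ | c := a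
      · exact absurd hpos (by simpa using mul_nonpos_of_nonneg_of_nonpos b.cast_nonneg hαh.le)
      have hsplit : (c + 1) • g + b • h = c • g + b • h + g := by rw [succ_nsmul]; abel
      rw [hsplit] at hR hR' hpos ⊢
      refine hP.add_mem _ (ih (abs_lt.2 ?_) (by lia)) g hg hR
      rw [map_add] at hR' hpos
      constructor <;> linarith
    · obtain _ | c := b
      · have ha : (0 : ℝ) < a := by exact_mod_cast (by lia : 0 < a)
        exact absurd hnonpos (by simpa using mul_pos ha hαg)
      have hsplit : a • g + (c + 1) • h = a • g + c • h + h := by rw [succ_nsmul]; abel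
      rw [hsplit] at hR hR' hnonpos ⊢
      refine hP.add_mem _ (ih (abs_lt.2 ?_) (by lia)) h hh hR
      rw [map_add] at hR' hnonpos
      constructor <;> linarith

end IsLocalCone

end LocalCone

section RotForm

variable {ω R : ℝ} {P : Set (ℤ × ℤ)} {g h : ℤ × ℤ}

/-- The displacement `n ω - p` on `ℝ` of the `n`-th iterate of the rotation by `ω`, lifted with
the deck translation by `-p`. -/
def rotForm (ω : ℝ) : ℤ × ℤ →+ ℝ where
  toFun g := g.1 * ω - g.2
  map_zero' := by simp
  map_add' g h := by simp only [Prod.fst_add, Prod.snd_add]; push_cast; ring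

theorem rotForm_apply (ω : ℝ) (g : ℤ × ℤ) : rotForm ω g = g.1 * ω - g.2 := rfl

/-- The determinant of the matrix with rows `g` and `h`, whose sign says on which side of the line
through `h` the lattice point `g` lies. -/
def latticeDet (g h : ℤ × ℤ) : ℤ := g.1 * h.2 - g.2 * h.1

theorem latticeDet_smul_add_latticeDet_smul (g₁ g₂ g : ℤ × ℤ) :
    latticeDet g g₂ • g₁ + latticeDet g₁ g • g₂ = latticeDet g₁ g₂ • g := by
  ext <;> simp only [latticeDet, Prod.fst_add, Prod.snd_add, Prod.smul_fst, Prod.smul_snd,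
    smul_eq_mul] <;> ring

theorem latticeDet_eq_rotForm (ω : ℝ) (g h : ℤ × ℤ) :
    (latticeDet g h : ℝ) = h.1 * rotForm ω g - g.1 * rotForm ω h := by
  simp only [latticeDet, rotForm_apply]; push_cast; ring

theorem exists_forall_latticeDet_pos (hh : rotForm ω h < 0) :
    ∃ N : ℕ, ∀ g : ℤ × ℤ, (N : ℤ) ≤ g.1 → |rotForm ω g| < 1 → 0 < latticeDet g h := by
  obtain ⟨N, hN⟩ := exists_nat_gt (|(h.1 : ℝ)| / -rotForm ω h)
  refine ⟨N, fun g hNg hg => ?_⟩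
  rw [div_lt_iff₀ (neg_pos.2 hh)] at hN
  have hfirst : |(h.1 : ℝ) * rotForm ω g| ≤ |(h.1 : ℝ)| := by
    rw [abs_mul]
    exact mul_le_of_le_one_right (abs_nonneg _) hg.le
  have hsecond : N * -rotForm ω h ≤ g.1 * -rotForm ω h := by
    gcongr
    · exact (neg_pos.2 hh).le
    · exact_mod_cast hNg
  have hpos : (0 : ℝ) < latticeDet g h := by
    rw [latticeDet_eq_rotForm ω]
    linarith [(abs_le.1 hfirst).1]
  exact_mod_cast hpos

theorem exists_abs_rotForm_lt_one (ω : ℝ) (n : ℤ) : ∃ p : ℤ, |rotForm ω (n, p)| < 1 := by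
  refine ⟨⌊n * ω⌋, ?_⟩
  rw [rotForm_apply, Int.self_sub_floor, abs_of_nonneg (Int.fract_nonneg _)]
  exact Int.fract_lt_one _

namespace IsLocalCone

/-- By Cramer's rule, `latticeDet g₁ g₂ • g` is a positive combination of `g₁` and `g₂` once `g` is
far enough in the direction of the kernel of `rotForm ω`. -/
theorem exists_forall_latticeDet_smul_mem (hP : IsLocalCone (rotForm ω) R P) {g₁ g₂ : ℤ × ℤ}
    (h₁ : g₁ ∈ P) (h₂ : g₂ ∈ P) (hα₁ : 0 < rotForm ω g₁) (hα₂ : rotForm ω g₂ < 0) :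
    ∃ N : ℕ, ∀ g : ℤ × ℤ, (N : ℤ) ≤ g.1 → |rotForm ω g| < 1 →
      |rotForm ω (latticeDet g₁ g₂ • g)| < R → latticeDet g₁ g₂ • g ∈ P := by
  obtain ⟨N₁, hN₁⟩ := exists_forall_latticeDet_pos hα₂
  obtain ⟨N₂, hN₂⟩ := exists_forall_latticeDet_pos (h := -g₁) (by simpa using hα₁)
  refine ⟨max N₁ N₂, fun g hN hg hR => ?_⟩
  have ha : 0 < latticeDet g g₂ := hN₁ g (by lia) hg
  have hb : 0 < latticeDet g₁ g := by
    have := hN₂ g (by lia) hg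
    simp only [latticeDet, Prod.fst_neg, Prod.snd_neg] at this ⊢
    linarith
  rw [← latticeDet_smul_add_latticeDet_smul] at hR ⊢
  lift latticeDet g g₂ to ℕ using ha.le with a
  lift latticeDet g₁ g to ℕ using hb.le with b
  simp only [natCast_zsmul] at hR ⊢
  exact hP.nsmul_add_nsmul_mem h₁ h₂ hα₁ hα₂ (by lia) hR

theorem latticeDet_ne_zero (hP : IsLocalCone (rotForm ω) R P) {g₁ g₂ : ℤ × ℤ}
    (h₁ : g₁ ∈ P) (h₂ : g₂ ∈ P) (hα₁ : 0 < rotForm ω g₁) (hα₂ : rotForm ω g₂ < 0) :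
    latticeDet g₁ g₂ ≠ 0 := by
  intro hdet
  obtain ⟨N, hN⟩ := hP.exists_forall_latticeDet_smul_mem h₁ h₂ hα₁ hα₂
  obtain ⟨p, hp⟩ := exists_abs_rotForm_lt_one ω N
  have := hN (N, p) le_rfl hp (by simpa [hdet] using hP.pos_of_mem h₁)
  exact hP.zero_notMem (by simpa [hdet] using this)

theorem eventually_mem_or_eventually_neg_mem (hP : IsLocalCone (rotForm ω) R P) {g₁ g₂ : ℤ × ℤ}
    (h₁ : g₁ ∈ P) (h₂ : g₂ ∈ P) (hα₁ : 0 < rotForm ω g₁) (hα₂ : rotForm ω g₂ < 0) :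
    ∃ R' ∈ Set.Ioc 0 R, ∃ N : ℕ,
      (∀ g : ℤ × ℤ, (N : ℤ) ≤ g.1 → |rotForm ω g| < R' → g ∈ P) ∨
      (∀ g : ℤ × ℤ, (N : ℤ) ≤ g.1 → |rotForm ω g| < R' → -g ∈ P) := by
  obtain ⟨N, hN⟩ := hP.exists_forall_latticeDet_smul_mem h₁ h₂ hα₁ hα₂
  set D := latticeDet g₁ g₂
  have hD0 : D ≠ 0 := hP.latticeDet_ne_zero h₁ h₂ hα₁ hα₂
  have hD : (1 : ℝ) ≤ |(D : ℝ)| := by exact_mod_cast Int.one_le_abs hD0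
  have hR : 0 < R := hP.pos_of_mem h₁
  have hmem : ∀ g : ℤ × ℤ, (N : ℤ) ≤ g.1 → |rotForm ω g| < min 1 R / |(D : ℝ)| → D • g ∈ P := by
    intro g hNg hg
    have hg1 : |rotForm ω g| < 1 :=
      hg.trans_le ((div_le_self (by positivity) hD).trans (min_le_left _ _))
    rw [lt_div_iff₀ (by positivity)] at hg
    refine hN g hNg hg1 ?_
    rw [map_zsmul, zsmul_eq_mul, abs_mul, mul_comm]
    exact hg.trans_le (min_le_right _ _)
  refine ⟨min 1 R / |(D : ℝ)|, ⟨by positivity, (div_le_self (by positivity) hD).trans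
    (min_le_right _ _)⟩, N, ?_⟩
  obtain ⟨d, hd | hd⟩ := D.eq_nat_or_neg
  · refine Or.inl fun g hNg hg => hP.mem_of_nsmul_mem (k := d) ?_
    simpa [hd] using hmem g hNg hg
  · refine Or.inr fun g hNg hg => hP.mem_of_nsmul_mem (k := d) ?_
    simpa [hd] using hmem g hNg hg

theorem rotForm_trichotomy (hP : IsLocalCone (rotForm ω) R P) :
    (∀ g ∈ P, 0 ≤ rotForm ω g) ∨ (∀ g ∈ P, rotForm ω g ≤ 0) ∨
    ∃ R' ∈ Set.Ioc 0 R, ∃ N : ℕ,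
      (∀ g : ℤ × ℤ, (N : ℤ) ≤ g.1 → |rotForm ω g| < R' → g ∈ P) ∨
      (∀ g : ℤ × ℤ, (N : ℤ) ≤ g.1 → |rotForm ω g| < R' → -g ∈ P) := by
  refine or_iff_not_imp_left.2 fun hneg => or_iff_not_imp_left.2 fun hpos => ?_
  push Not at hneg hpos
  obtain ⟨g₂, h₂, hα₂⟩ := hneg
  obtain ⟨g₁, h₁, hα₁⟩ := hpos
  exact hP.eventually_mem_or_eventually_neg_mem h₁ h₂ hα₁ hα₂

end IsLocalCone

end RotForm

/-! ### Fibered homeomorphisms -/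

section Iterates

variable {Z : Type*} [TopologicalSpace Z] {T : Z ≃ₜ Z} {C W : Set Z}

theorem image_eq_self_iff : T '' C = C ↔ ∀ q, T q ∈ C ↔ q ∈ C := by
  refine ⟨fun hC q => ?_, fun hC => ?_⟩
  · conv_lhs => rw [← hC]
    exact T.injective.mem_set_image
  · have hpre : T ⁻¹' C = C := Set.ext hC
    simpa only [hpre] using T.image_preimage C

theorem zpow_apply_mem_iff (hC : T '' C = C) (n : ℤ) (q : Z) : (T ^ n) q ∈ C ↔ q ∈ C := by
  induction n generalizing q with
  | zero => rfl
  | succ n ih => exact zpow_add_one T n ▸ (ih _).trans (image_eq_self_iff.1 hC q)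
  | pred n ih =>
    rw [zpow_sub_one, Homeomorph.mul_apply]
    refine (ih _).trans ?_
    rw [← image_eq_self_iff.1 hC, Homeomorph.inv_apply, Homeomorph.apply_symm_apply]

theorem zpow_apply_ne_of_disjoint_image (hW : ∀ n : ℕ, 1 ≤ n → Disjoint ((T ^ n) '' W) W)
    {m n : ℤ} (hmn : m ≠ n) {p q : Z} (hp : p ∈ W) (hq : q ∈ W) : (T ^ m) p ≠ (T ^ n) q := by
  wlog hlt : m < n generalizing m n p q
  · exact (this hmn.symm hq hp (by lia)).symm
  intro h
  obtain ⟨k, rfl⟩ := Int.le.dest hlt.le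
  refine Set.disjoint_left.1 (hW k (by lia)) ⟨q, hq, rfl⟩ ?_
  rw [zpow_add, Homeomorph.mul_apply] at h
  rwa [← zpow_natCast, ← (T ^ m).injective h]

end Iterates

section Fibered

variable {X Y : Type*} [AddCommGroup X] [TopologicalSpace X] [TopologicalSpace Y]

/-- A homeomorphism of `X × Y` fibered over the translation by `a` on the base `X`, with strictly
increasing fiber maps. Passing from the fiber maps to a homeomorphism of the total space gives
access to negative iterates. -/
structure IsFiberedOver [LinearOrder Y] (a : X) (T : X × Y ≃ₜ X × Y) : Prop where
  fst_apply : ∀ q, (T q).1 = q.1 + a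
  strictMono : ∀ θ, StrictMono fun x => (T (θ, x)).2

/-- The height over `θ` of the image under `T ^ n` of the horizontal line at height `x`. -/
def iterHeight (a : X) (T : X × Y ≃ₜ X × Y) (x : Y) (n : ℤ) (θ : X) : Y :=
  ((T ^ n) (θ - n • a, x)).2

namespace IsFiberedOver

variable [LinearOrder Y] {a b : X} {S T : X × Y ≃ₜ X × Y}

theorem one : IsFiberedOver (0 : X) (1 : X × Y ≃ₜ X × Y) :=
  ⟨fun q => (add_zero q.1).symm, fun _ _ _ h => h⟩

theorem apply_eq (hT : IsFiberedOver a T) (θ : X) (x : Y) : T (θ, x) = (θ + a, (T (θ, x)).2) :=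
  Prod.ext (hT.fst_apply _) rfl

theorem mul (hS : IsFiberedOver b S) (hT : IsFiberedOver a T) : IsFiberedOver (a + b) (S * T) where
  fst_apply q := by rw [Homeomorph.mul_apply, hS.fst_apply, hT.fst_apply, add_assoc]
  strictMono θ x y hxy := by
    have := hS.strictMono (θ + a) (hT.strictMono θ hxy)
    simpa only [Homeomorph.mul_apply, ← hT.apply_eq] using this

theorem inv (hT : IsFiberedOver a T) : IsFiberedOver (-a) T⁻¹ := by
  have hfst : ∀ q, (T⁻¹ q).1 = q.1 + -a := fun q => by
    rw [← sub_eq_add_neg, eq_sub_iff_add_eq, ← hT.fst_apply, ← Homeomorph.mul_apply,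
      mul_inv_cancel, Homeomorph.one_apply]
  refine ⟨hfst, fun θ x y hxy => ?_⟩
  have hT_inv : ∀ z, (T (θ + -a, (T⁻¹ (θ, z)).2)).2 = z := fun z => by
    rw [← hfst (θ, z), Prod.mk.eta, ← Homeomorph.mul_apply, mul_inv_cancel, Homeomorph.one_apply]
  rwa [← (hT.strictMono (θ + -a)).lt_iff_lt, hT_inv, hT_inv]

theorem zpow (hT : IsFiberedOver a T) (n : ℤ) : IsFiberedOver (n • a) (T ^ n) := by
  induction n with
  | zero => simpa only [zero_zsmul, zpow_zero] using one
  | succ n ih =>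
    rw [zpow_add_one, add_zsmul, one_zsmul, add_comm]
    exact ih.mul hT
  | pred n ih =>
    rw [zpow_sub_one, sub_zsmul, one_zsmul, add_comm]
    exact ih.mul hT.inv

theorem zpow_apply_sub (hT : IsFiberedOver a T) (n : ℤ) (θ : X) (x : Y) :
    (T ^ n) (θ - n • a, x) = (θ, iterHeight a T x n θ) := by
  rw [(hT.zpow n).apply_eq, sub_add_cancel, iterHeight]

theorem iterHeight_strictMono (hT : IsFiberedOver a T) (n : ℤ) (θ : X) :
    StrictMono fun x => iterHeight a T x n θ :=
  (hT.zpow n).strictMono _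

theorem snd_zpow_iterHeight (hT : IsFiberedOver a T) (x : Y) (n m : ℤ) (θ : X) :
    ((T ^ m) (θ, iterHeight a T x n θ)).2 = iterHeight a T x (n + m) (θ + m • a) := by
  rw [← hT.zpow_apply_sub, ← Homeomorph.mul_apply, ← zpow_add, add_comm m, iterHeight, add_zsmul,
    add_sub_add_right_eq_sub]

theorem iterHeight_add_lt_iff (hT : IsFiberedOver a T) (x y : Y) (n n' m : ℤ) (θ : X) :
    iterHeight a T x (n + m) (θ + m • a) < iterHeight a T y (n' + m) (θ + m • a) ↔
      iterHeight a T x n θ < iterHeight a T y n' θ := by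
  simp only [← hT.snd_zpow_iterHeight]
  exact ((hT.zpow m).strictMono θ).lt_iff_lt

theorem mk_iterHeight_mem (hT : IsFiberedOver a T) {C : Set (X × Y)}
    (hC : T '' C = C) {n : ℤ} {θ : X} {x : Y} (h : (θ - n • a, x) ∈ C) :
    (θ, iterHeight a T x n θ) ∈ C := by
  rwa [← hT.zpow_apply_sub, zpow_apply_mem_iff hC]

theorem exists_mem_Icc_zpow_apply_eq (hT : IsFiberedOver a T) {n : ℤ} {θ : X} {x₁ x₂ y : Y}
    (hy : y ∈ Set.Icc (iterHeight a T x₁ n θ) (iterHeight a T x₂ n θ)) :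
    ∃ x ∈ Set.Icc x₁ x₂, (T ^ n) (θ - n • a, x) = (θ, y) := by
  obtain ⟨⟨θ', x⟩, hx⟩ := (T ^ n).surjective (θ, y)
  obtain rfl : θ' = θ - n • a := by
    rw [eq_sub_iff_add_eq, ← (hT.zpow n).fst_apply (θ', x), hx]
  have hmono := hT.iterHeight_strictMono n θ
  obtain rfl : iterHeight a T x n θ = y := congrArg Prod.snd hx
  exact ⟨x, ⟨hmono.le_iff_le.1 hy.1, hmono.le_iff_le.1 hy.2⟩, hx⟩

end IsFiberedOver

theorem iterHeight_neg_inv (a : X) (T : X × Y ≃ₜ X × Y) (x : Y) (n : ℤ) (θ : X) :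
    iterHeight (-a) T⁻¹ x n θ = iterHeight a T x (-n) θ := by
  simp [iterHeight]

@[fun_prop]
theorem continuous_iterHeight [IsTopologicalAddGroup X] (a : X) (T : X × Y ≃ₜ X × Y) (x : Y)
    (n : ℤ) : Continuous (iterHeight a T x n) := by
  unfold iterHeight
  fun_prop

theorem exists_forall_abs_iterHeight_le [IsTopologicalAddGroup X] [CompactSpace X] (a : X)
    (T : X × ℝ ≃ₜ X × ℝ) (x : ℝ) (M : ℕ) :
    ∃ c, ∀ n : ℤ, |n| ≤ M → ∀ θ, |iterHeight a T x n θ| ≤ c := by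
  obtain ⟨c, hc⟩ := ((Set.finite_Icc (-M : ℤ) M).isCompact_biUnion fun n _ =>
    isCompact_range (continuous_iterHeight a T x n)).isBounded.exists_norm_le
  exact ⟨c, fun n hn θ => hc _ (Set.mem_biUnion (abs_le.1 hn) ⟨θ, rfl⟩)⟩

end Fibered

/-! ### Strips and curves from ordered families of graphs -/

section DenseTranslation

variable {X : Type*} [AddCommGroup X] [TopologicalSpace X] [IsTopologicalAddGroup X]
  {a : X} {U : Set X}

theorem exists_sub_zsmul_mem (ha : DenseRange fun n : ℤ => n • a) (hU : IsOpen U)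
    (hU' : U.Nonempty) (θ : X) : ∃ n : ℤ, θ - n • a ∈ U :=
  ha.exists_mem_open (hU.preimage (continuous_const.sub continuous_id))
    (hU'.elim fun u hu => ⟨θ - u, by simpa using hu⟩)

theorem exists_nat_forall_exists_sub_zsmul_mem [CompactSpace X] (ha : DenseRange fun n : ℤ => n • a)
    (hU : IsOpen U) (hU' : U.Nonempty) :
    ∃ M : ℕ, ∀ θ, ∃ n : ℤ, |n| ≤ M ∧ θ - n • a ∈ U := by
  have hopen (n : ℤ) : IsOpen {θ | θ - n • a ∈ U} :=
    hU.preimage (continuous_id.sub continuous_const)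
  obtain ⟨t, ht⟩ := isCompact_univ.elim_finite_subcover _ hopen fun θ _ =>
    Set.mem_iUnion.2 (exists_sub_zsmul_mem ha hU hU' θ)
  refine ⟨t.sup Int.natAbs, fun θ => ?_⟩
  obtain ⟨n, hn, hθ⟩ := Set.mem_iUnion₂.1 (ht (Set.mem_univ θ))
  exact ⟨n, n.abs_eq_natAbs ▸ mod_cast Finset.le_sup (f := Int.natAbs) hn, hθ⟩

end DenseTranslation

/-- A compact set invariant under `T` all of whose fibers are nonempty compact intervals. -/
def IsInvariantStrip {X : Type*} [TopologicalSpace X] (T : X × ℝ → X × ℝ) (S : Set (X × ℝ)) :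
    Prop :=
  IsCompact S ∧ T '' S = S ∧ ∀ θ, ∃ y z : ℝ, y ≤ z ∧ {x | (θ, x) ∈ S} = Set.Icc y z

/-- The points lying weakly above all images under powers of `T` of the segment `U₁ × {x₁}` and
weakly below all images of the segment `U₂ × {x₂}`. -/
def orbitStrip {X : Type*} [AddCommGroup X] [TopologicalSpace X] (a : X) (T : X × ℝ ≃ₜ X × ℝ)
    (U₁ : Set X) (x₁ : ℝ) (U₂ : Set X) (x₂ : ℝ) : Set (X × ℝ) :=
  {q | (∀ n : ℤ, q.1 - n • a ∈ U₁ → iterHeight a T x₁ n q.1 ≤ q.2) ∧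
    ∀ n : ℤ, q.1 - n • a ∈ U₂ → q.2 ≤ iterHeight a T x₂ n q.1}

section OrbitStrip

variable {X : Type*} [AddCommGroup X] [TopologicalSpace X] [IsTopologicalAddGroup X] {a : X}
  {T : X × ℝ ≃ₜ X × ℝ} {U₁ U₂ : Set X} {x₁ x₂ : ℝ}

theorem isClosed_orbitStrip (hU₁ : IsOpen U₁) (hU₂ : IsOpen U₂) :
    IsClosed (orbitStrip a T U₁ x₁ U₂ x₂) := by
  have hbase {U : Set X} (hU : IsOpen U) (n : ℤ) : IsOpen {q : X × ℝ | q.1 - n • a ∈ U} :=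
    hU.preimage (by fun_prop)
  simp only [orbitStrip, Set.ofPred_and, Set.ofPred_forall]
  exact (isClosed_iInter fun n => isClosed_imp (hbase hU₁ n)
      (isClosed_le (by fun_prop) continuous_snd)).inter
    (isClosed_iInter fun n => isClosed_imp (hbase hU₂ n)
      (isClosed_le continuous_snd (by fun_prop)))

theorem isCompact_orbitStrip [CompactSpace X] (ha : DenseRange fun n : ℤ => n • a)
    (hU₁ : IsOpen U₁) (hU₁' : U₁.Nonempty) (hU₂ : IsOpen U₂) (hU₂' : U₂.Nonempty) :
    IsCompact (orbitStrip a T U₁ x₁ U₂ x₂) := by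
  obtain ⟨M₁, hM₁⟩ := exists_nat_forall_exists_sub_zsmul_mem ha hU₁ hU₁'
  obtain ⟨M₂, hM₂⟩ := exists_nat_forall_exists_sub_zsmul_mem ha hU₂ hU₂'
  obtain ⟨c₁, hc₁⟩ := exists_forall_abs_iterHeight_le a T x₁ M₁
  obtain ⟨c₂, hc₂⟩ := exists_forall_abs_iterHeight_le a T x₂ M₂
  refine (isCompact_univ.prod (isCompact_Icc (a := -c₁) (b := c₂))).of_isClosed_subset
    (isClosed_orbitStrip hU₁ hU₂) ?_
  rintro ⟨θ, y⟩ ⟨hlow, hupp⟩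
  obtain ⟨n, hn, hθn⟩ := hM₁ θ
  obtain ⟨m, hm, hθm⟩ := hM₂ θ
  exact ⟨trivial, (neg_le_of_abs_le (hc₁ n hn θ)).trans (hlow n hθn),
    (hupp m hθm).trans (le_of_abs_le (hc₂ m hm θ))⟩

theorem exists_fiber_orbitStrip_eq_Icc (ha : DenseRange fun n : ℤ => n • a)
    (hU₁ : IsOpen U₁) (hU₁' : U₁.Nonempty) (hU₂ : IsOpen U₂) (hU₂' : U₂.Nonempty)
    (hsep : ∀ θ (n m : ℤ), θ - n • a ∈ U₁ → θ - m • a ∈ U₂ →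
      iterHeight a T x₁ n θ ≤ iterHeight a T x₂ m θ) (θ : X) :
    ∃ y z : ℝ, y ≤ z ∧ {x | (θ, x) ∈ orbitStrip a T U₁ x₁ U₂ x₂} = Set.Icc y z := by
  set L := (iterHeight a T x₁ · θ) '' {n | θ - n • a ∈ U₁}
  set H := (iterHeight a T x₂ · θ) '' {n | θ - n • a ∈ U₂}
  have hL : L.Nonempty := Set.Nonempty.image _ (exists_sub_zsmul_mem ha hU₁ hU₁' θ)
  have hH : H.Nonempty := Set.Nonempty.image _ (exists_sub_zsmul_mem ha hU₂ hU₂' θ)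
  have hLH : ∀ l ∈ L, ∀ h ∈ H, l ≤ h :=
    Set.forall_mem_image.2 fun n hn => Set.forall_mem_image.2 fun m hm => hsep θ n m hn hm
  have hLbdd : BddAbove L := hH.imp fun h hh l hl => hLH l hl h hh
  have hHbdd : BddBelow H := hL.imp fun l hl h hh => hLH l hl h hh
  refine ⟨sSup L, sInf H, csSup_le hL fun l hl => le_csInf hH (hLH l hl), Set.ext fun y => ?_⟩
  rw [Set.mem_Icc, csSup_le_iff hLbdd hL, le_csInf_iff hHbdd hH]
  simp only [L, H, Set.forall_mem_image]
  rfl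

end OrbitStrip

namespace IsFiberedOver

variable {X : Type*} [AddCommGroup X] [TopologicalSpace X] {a : X} {T : X × ℝ ≃ₜ X × ℝ}
  {C : Set (X × ℝ)} {U₁ U₂ : Set X} {x₁ x₂ : ℝ}

theorem apply_mem_orbitStrip_iff (hT : IsFiberedOver a T) (q : X × ℝ) :
    T q ∈ orbitStrip a T U₁ x₁ U₂ x₂ ↔ q ∈ orbitStrip a T U₁ x₁ U₂ x₂ := by
  obtain ⟨θ, y⟩ := q
  have hbase (n : ℤ) : θ + a - (n + 1) • a = θ - n • a := by
    rw [add_zsmul, one_zsmul, add_sub_add_right_eq_sub]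
  have hshift (x : ℝ) (n : ℤ) :
      iterHeight a T x (n + 1) (θ + a) = (T (θ, iterHeight a T x n θ)).2 := by
    simpa using (hT.snd_zpow_iterHeight x n 1 θ).symm
  rw [hT.apply_eq]
  refine (and_congr ?_ ?_).symm <;>
  · refine (Equiv.addRight (1 : ℤ)).forall_congr fun n => ?_
    simp only [Equiv.coe_addRight, hbase, hshift, (hT.strictMono θ).le_iff_le]

theorem image_orbitStrip (hT : IsFiberedOver a T) :
    T '' orbitStrip a T U₁ x₁ U₂ x₂ = orbitStrip a T U₁ x₁ U₂ x₂ :=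
  image_eq_self_iff.2 hT.apply_mem_orbitStrip_iff

variable [IsTopologicalAddGroup X]

theorem orbitStrip_subset (hT : IsFiberedOver a T) (ha : DenseRange fun n : ℤ => n • a)
    (hU₁ : IsOpen U₁) (hU₁' : U₁.Nonempty) (hU₂ : IsOpen U₂) (hU₂' : U₂.Nonempty)
    (hC : T '' C = C) (hCconn : ∀ θ, {x | (θ, x) ∈ C}.OrdConnected)
    (hUC₁ : ∀ θ ∈ U₁, (θ, x₁) ∈ C) (hUC₂ : ∀ θ ∈ U₂, (θ, x₂) ∈ C) :
    orbitStrip a T U₁ x₁ U₂ x₂ ⊆ C := by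
  rintro ⟨θ, y⟩ ⟨hlow, hupp⟩
  obtain ⟨n, hn⟩ := exists_sub_zsmul_mem ha hU₁ hU₁' θ
  obtain ⟨m, hm⟩ := exists_sub_zsmul_mem ha hU₂ hU₂' θ
  exact (hCconn θ).out (hT.mk_iterHeight_mem hC (hUC₁ _ hn)) (hT.mk_iterHeight_mem hC (hUC₂ _ hm))
    ⟨hlow n hn, hupp m hm⟩

theorem isInvariantStrip_orbitStrip [CompactSpace X] (hT : IsFiberedOver a T)
    (ha : DenseRange fun n : ℤ => n • a) (hU₁ : IsOpen U₁) (hU₁' : U₁.Nonempty) (hU₂ : IsOpen U₂)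
    (hU₂' : U₂.Nonempty)
    (hsep : ∀ θ (n m : ℤ), θ - n • a ∈ U₁ → θ - m • a ∈ U₂ →
      iterHeight a T x₁ n θ ≤ iterHeight a T x₂ m θ) :
    IsInvariantStrip T (orbitStrip a T U₁ x₁ U₂ x₂) :=
  ⟨isCompact_orbitStrip ha hU₁ hU₁' hU₂ hU₂', hT.image_orbitStrip,
    exists_fiber_orbitStrip_eq_Icc ha hU₁ hU₁' hU₂ hU₂' hsep⟩

end IsFiberedOver

/-- The heights `y` over `θ` that stay in `C`, lie above some `T ^ n`-image of the segment
`U × {x}` with `-M ≤ n`, and lie below all those with `N + M ≤ n`. -/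
def risingHeights {X : Type*} [AddCommGroup X] [TopologicalSpace X] (a : X) (T : X × ℝ ≃ₜ X × ℝ)
    (C : Set (X × ℝ)) (U : Set X) (x : ℝ) (N M : ℕ) (θ : X) : Set ℝ :=
  {y | (θ, y) ∈ C ∧ (∃ n : ℤ, -M ≤ n ∧ θ - n • a ∈ U ∧ iterHeight a T x n θ < y) ∧
    ∀ n : ℤ, N + M ≤ n → θ - n • a ∈ U → y < iterHeight a T x n θ}

theorem convex_risingHeights {X : Type*} [AddCommGroup X] [TopologicalSpace X] {a : X}
    {T : X × ℝ ≃ₜ X × ℝ} {C : Set (X × ℝ)} {U : Set X} {x : ℝ} {N M : ℕ} {θ : X}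
    (hC : {x | (θ, x) ∈ C}.OrdConnected) : Convex ℝ (risingHeights a T C U x N M θ) := by
  refine Set.OrdConnected.convex ⟨?_⟩
  rintro y ⟨hyC, ⟨n, hn, hθ, hny⟩, -⟩ z ⟨hzC, -, hz⟩ w ⟨hyw, hwz⟩
  exact ⟨hC.out hyC hzC ⟨hyw, hwz⟩, ⟨n, hn, hθ, hny.trans_le hyw⟩,
    fun m hm hθm => hwz.trans_lt (hz m hm hθm)⟩

namespace IsFiberedOver

variable {X : Type*} [AddCommGroup X] [TopologicalSpace X] {a : X} {T : X × ℝ ≃ₜ X × ℝ}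
  {C : Set (X × ℝ)} {U : Set X} {x₁ x₂ : ℝ} {N M : ℕ} {θ : X}

theorem midpoint_mem_risingHeights (hT : IsFiberedOver a T) (hC : T '' C = C)
    (hCconn : ∀ θ, {x | (θ, x) ∈ C}.OrdConnected) (hx : x₁ < x₂) (hUC₁ : ∀ θ ∈ U, (θ, x₁) ∈ C)
    (hUC₂ : ∀ θ ∈ U, (θ, x₂) ∈ C)
    (hsep : ∀ θ (k n : ℤ), θ - k • a ∈ U → θ - n • a ∈ U → k + N ≤ n →
      iterHeight a T x₂ k θ < iterHeight a T x₁ n θ)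
    {k : ℤ} (hk : |k| ≤ M) (hθ : θ - k • a ∈ U) :
    (iterHeight a T x₁ k θ + iterHeight a T x₂ k θ) / 2 ∈ risingHeights a T C U x₁ N M θ := by
  have hlt : iterHeight a T x₁ k θ < iterHeight a T x₂ k θ := hT.iterHeight_strictMono k θ hx
  refine ⟨(hCconn θ).out (hT.mk_iterHeight_mem hC (hUC₁ _ hθ))
    (hT.mk_iterHeight_mem hC (hUC₂ _ hθ)) ⟨by linarith, by linarith⟩,
    ⟨k, (abs_le.1 hk).1, hθ, by linarith⟩, fun n hn hθn => ?_⟩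
  linarith [hsep θ k n hθ hθn (by linarith [(abs_le.1 hk).2])]

theorem lt_of_mem_risingHeights (hT : IsFiberedOver a T) {K : ℕ} (hK : N + 2 * M ≤ K) {y z : ℝ}
    (hy : y ∈ risingHeights a T C U x₁ N M θ)
    (hz : z ∈ risingHeights a T C U x₁ N M (θ + K • a)) : z < ((T ^ K) (θ, y)).2 := by
  obtain ⟨-, ⟨n, hn, hθ, hny⟩, -⟩ := hy
  have hmove : iterHeight a T x₁ (n + K) (θ + K • a) < ((T ^ K) (θ, y)).2 := by
    rw [← natCast_zsmul, ← zpow_natCast, ← hT.snd_zpow_iterHeight]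
    exact (hT.zpow K).strictMono θ hny
  refine (hz.2.2 (n + K) (by lia) ?_).trans hmove
  rwa [add_zsmul, natCast_zsmul, add_sub_add_right_eq_sub]

variable [IsTopologicalAddGroup X] [CompactSpace X] [T2Space X]

theorem exists_curve_lt_zpow (hT : IsFiberedOver a T) (ha : DenseRange fun n : ℤ => n • a)
    (hC : T '' C = C) (hCconn : ∀ θ, {x | (θ, x) ∈ C}.OrdConnected) (hU : IsOpen U)
    (hU' : U.Nonempty) (hx : x₁ < x₂) (hUC₁ : ∀ θ ∈ U, (θ, x₁) ∈ C) (hUC₂ : ∀ θ ∈ U, (θ, x₂) ∈ C)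
    (hsep : ∀ θ (k n : ℤ), θ - k • a ∈ U → θ - n • a ∈ U → k + N ≤ n →
      iterHeight a T x₂ k θ < iterHeight a T x₁ n θ) :
    ∃ γ : X → ℝ, Continuous γ ∧ (∀ θ, (θ, γ θ) ∈ C) ∧
      ∃ K : ℕ, 1 ≤ K ∧ ∀ θ, γ (θ + K • a) < ((T ^ K) (θ, γ θ)).2 := by
  obtain ⟨M, hM⟩ := exists_nat_forall_exists_sub_zsmul_mem ha hU hU'
  obtain ⟨γ, hγ⟩ := exists_continuous_forall_mem_convex_of_local
    (t := risingHeights a T C U x₁ N M) (fun θ => convex_risingHeights (hCconn θ)) fun θ => by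
      obtain ⟨k, hk, hθ⟩ := hM θ
      exact ⟨(fun θ => θ - k • a) ⁻¹' U, (hU.preimage (by fun_prop)).mem_nhds hθ,
        fun θ => (iterHeight a T x₁ k θ + iterHeight a T x₂ k θ) / 2, by fun_prop,
        fun θ' hθ' => hT.midpoint_mem_risingHeights hC hCconn hx hUC₁ hUC₂ hsep hk hθ'⟩
  exact ⟨γ, γ.continuous, fun θ => (hγ θ).1, N + 2 * M + 1, by lia, fun θ =>
    hT.lt_of_mem_risingHeights (by lia) (hγ θ) (hγ _)⟩

theorem exists_curve_zpow_lt (hT : IsFiberedOver a T) (ha : DenseRange fun n : ℤ => n • a)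
    (hC : T '' C = C) (hCconn : ∀ θ, {x | (θ, x) ∈ C}.OrdConnected) (hU : IsOpen U)
    (hU' : U.Nonempty) (hx : x₁ < x₂) (hUC₁ : ∀ θ ∈ U, (θ, x₁) ∈ C) (hUC₂ : ∀ θ ∈ U, (θ, x₂) ∈ C)
    (hsep : ∀ θ (k n : ℤ), θ - k • a ∈ U → θ - n • a ∈ U → k + N ≤ n →
      iterHeight a T x₂ n θ < iterHeight a T x₁ k θ) :
    ∃ γ : X → ℝ, Continuous γ ∧ (∀ θ, (θ, γ θ) ∈ C) ∧
      ∃ K : ℕ, 1 ≤ K ∧ ∀ θ, ((T ^ K) (θ, γ θ)).2 < γ (θ + K • a) := by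
  have hCinv : ⇑T⁻¹ '' C = C := image_eq_self_iff.2 fun q => by
    simpa using zpow_apply_mem_iff hC (-1) q
  have ha' : DenseRange fun n : ℤ => n • -a := by
    simpa only [smul_neg, Function.comp_def] using
      neg_surjective.denseRange.comp ha continuous_neg
  obtain ⟨γ, hγ, hγC, K, hK, hlt⟩ := hT.inv.exists_curve_lt_zpow ha' hCinv hCconn hU hU' hx hUC₁
    hUC₂ (N := N) fun θ k n hk hn hkn => by
      rw [iterHeight_neg_inv, iterHeight_neg_inv]
      exact hsep θ (-n) (-k) (by simpa using hn) (by simpa using hk) (by lia)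
  refine ⟨γ, hγ, hγC, K, hK, fun θ => ?_⟩
  set q := (T ^ K).symm (θ + K • a, γ (θ + K • a))
  have hq : (θ, q.2) = q :=
    Prod.ext (by simpa using ((hT.zpow (-K)).fst_apply (θ + K • a, γ (θ + K • a))).symm) rfl
  have hγq : γ θ < q.2 := by simpa using hlt (θ + K • a)
  calc ((T ^ K) (θ, γ θ)).2 < ((T ^ K) (θ, q.2)).2 := (hT.zpow K).strictMono θ hγq
    _ = γ (θ + K • a) := by rw [hq, (T ^ K).apply_symm_apply]

end IsFiberedOver

/-! ### Ordered systems of boxes -/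

/-- A family of boxes `{(t, y) | |t - α g| < r, lo g t ≤ y ≤ hi g t}`, indexed by a group `G`
acting on the plane by fibered increasing maps over the translations `t ↦ t + α g`, in which
distinct boxes are disjoint. The action enters only through its effect on the relation that one
box lies below another. -/
structure IsBoxSystem {G : Type*} [AddCommGroup G] (α : G →+ ℝ) (r : ℝ) (lo hi : G → ℝ → ℝ) :
    Prop where
  lo_lt_hi : ∀ g t, lo g t < hi g t
  continuous_lo : ∀ g, Continuous (lo g)
  continuous_hi : ∀ g, Continuous (hi g)
  hi_add_lt_lo_add : ∀ g h k t, hi g t < lo h t → hi (g + k) (t + α k) < lo (h + k) (t + α k)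
  lt_or_lt : ∀ g h t, g ≠ h → |t - α g| < r → |t - α h| < r → hi g t < lo h t ∨ hi h t < lo g t

/-- The box with index `g` lies below the box with index `h` wherever their bases overlap. -/
def BoxBelow {G : Type*} [AddCommGroup G] (α : G →+ ℝ) (r : ℝ) (lo hi : G → ℝ → ℝ) (g h : G) :
    Prop :=
  ∀ t, |t - α g| < r → |t - α h| < r → hi g t < lo h t

/-- The indices of the boxes whose base overlaps that of the box `0` and which lie above it. -/
def boxCone {G : Type*} [AddCommGroup G] (α : G →+ ℝ) (r : ℝ) (lo hi : G → ℝ → ℝ) : Set G :=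
  {g | |α g| < 2 * r ∧ BoxBelow α r lo hi 0 g}

theorem exists_abs_sub_lt_three {r a b : ℝ} (ha : |a| < 2 * r) (hb : |b| < 2 * r)
    (hab : |a + b| < 2 * r) : ∃ t : ℝ, |t| < r ∧ |t - a| < r ∧ |t - (a + b)| < r := by
  -- The witness is the midpoint of the smallest interval containing `0`, `a` and `a + b`.
  refine ⟨(max 0 (max a (a + b)) + min 0 (min a (a + b))) / 2, ?_, ?_, ?_⟩ <;> grind

namespace IsBoxSystem

variable {G : Type*} [AddCommGroup G] {α : G →+ ℝ} {r : ℝ} {lo hi : G → ℝ → ℝ} {g h : G} {t : ℝ}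

theorem boxBelow_or_boxBelow (H : IsBoxSystem α r lo hi) (hgh : g ≠ h) :
    BoxBelow α r lo hi g h ∨ BoxBelow α r lo hi h g := by
  have hconn : IsPreconnected (Metric.ball (α g) r ∩ Metric.ball (α h) r) :=
    ((convex_ball _ _).inter (convex_ball _ _)).isPreconnected
  have hopen : ∀ i j, IsOpen {t | hi i t < lo j t} := fun i j =>
    isOpen_lt (H.continuous_hi i) (H.continuous_lo j)
  have hdisj : Disjoint {t | hi g t < lo h t} {t | hi h t < lo g t} :=
    Set.disjoint_left.2 fun t hgt hht => lt_asymm (hgt.trans (H.lo_lt_hi h t))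
      (hht.trans (H.lo_lt_hi g t))
  refine (hconn.subset_or_subset (hopen g h) (hopen h g) hdisj fun t ht =>
    H.lt_or_lt g h t hgh ht.1 ht.2).imp ?_ ?_
  · exact fun hsub t hg hh => hsub ⟨hg, hh⟩
  · exact fun hsub t hh hg => hsub ⟨hg, hh⟩

theorem boxBelow_add (H : IsBoxSystem α r lo hi) (hgh : BoxBelow α r lo hi g h) (k : G) :
    BoxBelow α r lo hi (g + k) (h + k) := fun t hg hh => by
  rw [map_add, add_comm, ← sub_sub] at hg hh
  simpa using H.hi_add_lt_lo_add g h k _ (hgh _ hg hh)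

theorem hi_lt_lo_of_sub_mem_boxCone (H : IsBoxSystem α r lo hi) (hgh : h - g ∈ boxCone α r lo hi)
    (hg : |t - α g| < r) (hh : |t - α h| < r) : hi g t < lo h t := by
  simpa using H.boxBelow_add hgh.2 g t (by simpa using hg) (by simpa using hh)

theorem isLocalCone_boxCone (H : IsBoxSystem α r lo hi) :
    IsLocalCone α (2 * r) (boxCone α r lo hi) where
  zero_notMem := fun ⟨hr, h0⟩ => by
    have hr' : |(0 : ℝ) - α 0| < r := by simp at hr ⊢; linarith
    exact (H.lo_lt_hi 0 0).not_gt (h0 0 hr' hr')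
  abs_map_lt _ hg := hg.1
  add_mem g hg h hh hgh := by
    obtain ⟨t, ht0, htg, hth⟩ := exists_abs_sub_lt_three hg.1 hh.1 (by simpa using hgh)
    rw [← map_add] at hth
    have hlt : hi 0 t < lo (g + h) t := calc
      hi 0 t < lo g t := hg.2 t (by simpa using ht0) htg
      _ < hi g t := H.lo_lt_hi g t
      _ < lo (g + h) t := H.hi_lt_lo_of_sub_mem_boxCone (by simpa using hh) htg hth
    have hne : 0 ≠ g + h := fun h0 => (H.lo_lt_hi 0 t).not_gt (h0 ▸ hlt)
    refine ⟨hgh, (H.boxBelow_or_boxBelow hne).resolve_right fun hbelow => ?_⟩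
    exact (hlt.trans (H.lo_lt_hi _ t)).not_gt
      ((hbelow t hth (by simpa using ht0)).trans (H.lo_lt_hi 0 t))
  mem_or_neg_mem g hg hgr := by
    refine (H.boxBelow_or_boxBelow hg.symm).imp (⟨hgr, ·⟩) fun hbelow => ⟨by simpa using hgr, ?_⟩
    simpa using H.boxBelow_add hbelow (-g)

theorem hi_lt_lo_of_sub_notMem_boxCone (H : IsBoxSystem α r lo hi) (hne : g ≠ h)
    (hgh : g - h ∉ boxCone α r lo hi) (hg : |t - α g| < r) (hh : |t - α h| < r) :
    hi g t < lo h t :=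
  have hα : |α (h - g)| < 2 * r := by
    rw [map_sub]
    calc |α h - α g| = |(t - α g) - (t - α h)| := by ring_nf
      _ ≤ |t - α g| + |t - α h| := abs_sub _ _
      _ < 2 * r := by linarith
  H.hi_lt_lo_of_sub_mem_boxCone ((H.isLocalCone_boxCone.mem_or_neg_mem _
    (sub_ne_zero.2 hne.symm) hα).resolve_right (by rwa [neg_sub])) hg hh

end IsBoxSystem

/-! ### Wandering boxes over an irrational rotation -/

/-- The open arc of the circle that is the image of `(a, b)` under `t ↦ θ₀ + t`. -/
def arc (θ₀ : T1) (a b : ℝ) : Set T1 :=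
  (fun t : ℝ => θ₀ + (t : T1)) '' Set.Ioo a b

section Lifting

variable {ω a b c d : ℝ} {θ₀ θ : T1} {n m : ℤ}

theorem isOpen_arc (θ₀ : T1) (a b : ℝ) : IsOpen (arc θ₀ a b) := by
  have hopen := (Homeomorph.addLeft θ₀).isOpenMap _
    (QuotientAddGroup.isOpenMap_coe (N := AddSubgroup.zmultiples (1 : ℝ)) _ (isOpen_Ioo (a := a)
      (b := b)))
  rwa [Set.image_image] at hopen

theorem nonempty_arc (θ₀ : T1) (hab : a < b) : (arc θ₀ a b).Nonempty :=
  (Set.nonempty_Ioo.2 hab).image _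

theorem coe_rotForm (ω : ℝ) (g : ℤ × ℤ) : ((rotForm ω g : ℝ) : T1) = g.1 • (ω : T1) := by
  have hint : ((g.2 : ℝ) : T1) = 0 := AddCircle.coe_eq_zero_iff 1 |>.2 ⟨g.2, by simp⟩
  rw [rotForm_apply, AddCircle.coe_sub, hint, sub_zero, ← zsmul_eq_mul, AddCircle.coe_zsmul]

theorem exists_sub_rotForm_mem_Ioo {t : ℝ} (h : θ₀ + (t : T1) - n • (ω : T1) ∈ arc θ₀ a b) :
    ∃ p : ℤ, t - rotForm ω (n, p) ∈ Set.Ioo a b := by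
  obtain ⟨s, hs, hst⟩ := h
  have hzero : ((t - rotForm ω (n, 0) - s : ℝ) : T1) = 0 := by
    rw [add_sub_assoc] at hst
    rw [AddCircle.coe_sub, AddCircle.coe_sub, coe_rotForm, add_left_cancel hst, sub_self]
  obtain ⟨p, hp⟩ := (AddCircle.coe_eq_zero_iff 1).1 hzero
  refine ⟨-p, ?_⟩
  convert hs using 1
  simp only [rotForm_apply, zsmul_eq_mul] at hp ⊢
  push_cast at hp ⊢
  linarith

theorem exists_lift_mem_Ioo (hn : θ - n • (ω : T1) ∈ arc θ₀ a b)
    (hm : θ - m • (ω : T1) ∈ arc θ₀ c d) :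
    ∃ (t : ℝ) (p q : ℤ), θ = θ₀ + (t : T1) ∧ t - rotForm ω (n, p) ∈ Set.Ioo a b ∧
      t - rotForm ω (m, q) ∈ Set.Ioo c d := by
  obtain ⟨t, ht⟩ := QuotientAddGroup.mk_surjective (θ - θ₀)
  obtain rfl : θ = θ₀ + (t : T1) := (add_eq_of_eq_sub' ht).symm
  obtain ⟨p, hp⟩ := exists_sub_rotForm_mem_Ioo hn
  obtain ⟨q, hq⟩ := exists_sub_rotForm_mem_Ioo hm
  exact ⟨t, p, q, rfl, hp, hq⟩

theorem exists_box_subset {W : Set (T1 × ℝ)} (hWo : IsOpen W) (hWne : W.Nonempty) :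
    ∃ (θ₀ : T1) (x₁ x₂ r : ℝ), x₁ < x₂ ∧ 0 < r ∧ r ≤ 1 / 2 ∧
      ∀ t : ℝ, |t| < r → ∀ x ∈ Set.Icc x₁ x₂, (θ₀ + (t : T1), x) ∈ W := by
  obtain ⟨⟨θ₀, x₀⟩, h₀⟩ := hWne
  have hcont : Continuous fun q : ℝ × ℝ => (θ₀ + (q.1 : T1), q.2) :=
    (continuous_const.add ((AddCircle.continuous_mk' 1).comp continuous_fst)).prodMk continuous_snd
  obtain ⟨ε, hε, hball⟩ := Metric.isOpen_iff.1 (hWo.preimage hcont) (0, x₀) (by simpa using h₀)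
  refine ⟨θ₀, x₀ - ε / 2, x₀ + ε / 2, min ε (1 / 2), by linarith, by positivity,
    min_le_right _ _, fun t ht x hx => ?_⟩
  suffices hmem : (t, x) ∈ Metric.ball ((0 : ℝ), x₀) ε from hball hmem
  rw [← ball_prod_same, Set.mem_prod, mem_ball_zero_iff, Real.ball_eq_Ioo]
  exact ⟨ht.trans_le (min_le_left _ _), by linarith [hx.1], by linarith [hx.2]⟩

end Lifting

/-- The height over `θ₀ + t` of the image under `T ^ g.1` of the horizontal line at height `x`.
With the index `g : ℤ × ℤ` meant as the lift `t ↦ t + rotForm ω g` of the `g.1`-th iterate of the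
rotation, this bounds the box centered at `rotForm ω g`. -/
def boxHeight (ω : ℝ) (T : T1 × ℝ ≃ₜ T1 × ℝ) (θ₀ : T1) (x : ℝ) (g : ℤ × ℤ) (t : ℝ) : ℝ :=
  iterHeight (ω : T1) T x g.1 (θ₀ + (t : T1))

section Boxes

variable {ω x₁ x₂ r : ℝ} {T : T1 × ℝ ≃ₜ T1 × ℝ} {θ₀ : T1} {W : Set (T1 × ℝ)}

theorem boxHeight_lt_or_lt (hT : IsFiberedOver (ω : T1) T) (hx : x₁ ≤ x₂) (hr : r ≤ 1 / 2)
    (hbox : ∀ t : ℝ, |t| < r → ∀ x ∈ Set.Icc x₁ x₂, (θ₀ + (t : T1), x) ∈ W)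
    (hW : ∀ n : ℕ, 1 ≤ n → Disjoint ((T ^ n) '' W) W) {g h : ℤ × ℤ} {t : ℝ} (hgh : g ≠ h)
    (hg : |t - rotForm ω g| < r) (hh : |t - rotForm ω h| < r) :
    boxHeight ω T θ₀ x₂ g t < boxHeight ω T θ₀ x₁ h t ∨
      boxHeight ω T θ₀ x₂ h t < boxHeight ω T θ₀ x₁ g t := by
  have hne : g.1 ≠ h.1 := fun h1 => hgh <| Prod.ext h1 <| by
    have hlt : |((g.2 - h.2 : ℤ) : ℝ)| < 1 := by
      rw [rotForm_apply, abs_lt] at hg hh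
      rw [h1] at hg
      push_cast
      exact abs_lt.2 ⟨by linarith, by linarith⟩
    exact sub_eq_zero.1 (Int.abs_lt_one_iff.1 (mod_cast hlt))
  by_contra! hoverlap
  have hmem {k : ℤ × ℤ} (hk : |t - rotForm ω k| < r) {x : ℝ} (hx : x ∈ Set.Icc x₁ x₂) :
      (θ₀ + (t : T1) - k.1 • (ω : T1), x) ∈ W := by
    simpa only [AddCircle.coe_sub, coe_rotForm, add_sub_assoc] using hbox _ hk x hx
  have hle (k : ℤ × ℤ) : boxHeight ω T θ₀ x₁ k t ≤ boxHeight ω T θ₀ x₂ k t :=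
    (hT.iterHeight_strictMono k.1 _).monotone hx
  set y := max (boxHeight ω T θ₀ x₁ g t) (boxHeight ω T θ₀ x₁ h t)
  obtain ⟨x, hx, hxy⟩ := hT.exists_mem_Icc_zpow_apply_eq (n := g.1) (y := y)
    ⟨le_max_left _ _, max_le (hle g) hoverlap.1⟩
  obtain ⟨z, hz, hzy⟩ := hT.exists_mem_Icc_zpow_apply_eq (n := h.1) (y := y)
    ⟨le_max_right _ _, max_le hoverlap.2 (hle h)⟩
  exact zpow_apply_ne_of_disjoint_image hW hne (hmem hg hx) (hmem hh hz) (hxy.trans hzy.symm)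

theorem isBoxSystem_boxHeight (hT : IsFiberedOver (ω : T1) T) (hx : x₁ < x₂) (hr : r ≤ 1 / 2)
    (hbox : ∀ t : ℝ, |t| < r → ∀ x ∈ Set.Icc x₁ x₂, (θ₀ + (t : T1), x) ∈ W)
    (hW : ∀ n : ℕ, 1 ≤ n → Disjoint ((T ^ n) '' W) W) :
    IsBoxSystem (rotForm ω) r (boxHeight ω T θ₀ x₁) (boxHeight ω T θ₀ x₂) where
  lo_lt_hi g t := hT.iterHeight_strictMono g.1 _ hx
  continuous_lo g := (continuous_iterHeight _ T x₁ g.1).comp <|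
    continuous_const.add (AddCircle.continuous_mk' 1)
  continuous_hi g := (continuous_iterHeight _ T x₂ g.1).comp <|
    continuous_const.add (AddCircle.continuous_mk' 1)
  hi_add_lt_lo_add g h k t hgh := by
    simpa only [boxHeight, Prod.fst_add, AddCircle.coe_add, coe_rotForm, ← add_assoc] using
      (hT.iterHeight_add_lt_iff x₂ x₁ g.1 h.1 k.1 _).2 hgh
  lt_or_lt _ _ _ := boxHeight_lt_or_lt hT hx.le hr hbox hW

end Boxes

section Curves

variable {ω x₁ x₂ r : ℝ} {T : T1 × ℝ ≃ₜ T1 × ℝ} {θ₀ : T1} {C W : Set (T1 × ℝ)}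

theorem denseRange_zsmul_coe_of_irrational (hω : Irrational ω) :
    DenseRange fun n : ℤ => n • (ω : T1) :=
  AddCircle.denseRange_zsmul_coe_iff.2 (by simpa using hω)

theorem mem_of_mem_arc {x a b : ℝ}
    (hbox : ∀ t : ℝ, |t| < r → (θ₀ + (t : T1), x) ∈ C) (ha : -r ≤ a) (hb : b ≤ r) :
    ∀ θ ∈ arc θ₀ a b, (θ, x) ∈ C :=
  Set.forall_mem_image.2 fun _ ht => hbox _ (abs_lt.2 ⟨ha.trans_lt ht.1, ht.2.trans_le hb⟩)

theorem exists_isInvariantStrip_subset (hω : Irrational ω) (hT : IsFiberedOver (ω : T1) T)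
    (hC : T '' C = C) (hCconn : ∀ θ, {x | (θ, x) ∈ C}.OrdConnected) (hx : x₁ ≤ x₂)
    (hbox : ∀ t : ℝ, |t| < r → ∀ x ∈ Set.Icc x₁ x₂, (θ₀ + (t : T1), x) ∈ C)
    (H : IsBoxSystem (rotForm ω) r (boxHeight ω T θ₀ x₁) (boxHeight ω T θ₀ x₂))
    {a b c d : ℝ} (hra : -r ≤ a) (hab : a < b) (hbr : b ≤ r) (hrc : -r ≤ c) (hcd : c < d)
    (hdr : d ≤ r)
    (hP : ∀ u ∈ Set.Ioo a b, ∀ v ∈ Set.Ioo c d, ∀ g, rotForm ω g = v - u →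
      g ≠ 0 ∧ g ∉ boxCone (rotForm ω) r (boxHeight ω T θ₀ x₁) (boxHeight ω T θ₀ x₂)) :
    ∃ S ⊆ C, IsInvariantStrip T S := by
  have hω := denseRange_zsmul_coe_of_irrational hω
  refine ⟨orbitStrip (ω : T1) T (arc θ₀ a b) x₂ (arc θ₀ c d) x₁, ?_, ?_⟩
  · exact hT.orbitStrip_subset hω (isOpen_arc _ _ _) (nonempty_arc _ hab) (isOpen_arc _ _ _)
      (nonempty_arc _ hcd) hC hCconn
      (mem_of_mem_arc (fun t ht => hbox t ht x₂ ⟨hx, le_rfl⟩) hra hbr)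
      (mem_of_mem_arc (fun t ht => hbox t ht x₁ ⟨le_rfl, hx⟩) hrc hdr)
  · refine hT.isInvariantStrip_orbitStrip hω (isOpen_arc _ _ _) (nonempty_arc _ hab)
      (isOpen_arc _ _ _) (nonempty_arc _ hcd) fun θ n m hn hm => ?_
    obtain ⟨t, p, q, rfl, hp, hq⟩ := exists_lift_mem_Ioo hn hm
    obtain ⟨hne, hnP⟩ := hP _ hp _ hq ((n, p) - (m, q)) (by rw [map_sub]; ring)
    exact (H.hi_lt_lo_of_sub_notMem_boxCone (sub_ne_zero.1 hne) hnP
      (abs_lt.2 ⟨hra.trans_lt hp.1, hp.2.trans_le hbr⟩)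
      (abs_lt.2 ⟨hrc.trans_lt hq.1, hq.2.trans_le hdr⟩)).le

theorem exists_curve_lt_zpow_of_eventually_mem (hω : Irrational ω) (hT : IsFiberedOver (ω : T1) T)
    (hC : T '' C = C) (hCconn : ∀ θ, {x | (θ, x) ∈ C}.OrdConnected) (hx : x₁ < x₂)
    (hbox : ∀ t : ℝ, |t| < r → ∀ x ∈ Set.Icc x₁ x₂, (θ₀ + (t : T1), x) ∈ C)
    (H : IsBoxSystem (rotForm ω) r (boxHeight ω T θ₀ x₁) (boxHeight ω T θ₀ x₂))
    {R : ℝ} (hR : R ∈ Set.Ioc 0 (2 * r)) {N : ℕ}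
    (hP : ∀ g : ℤ × ℤ, (N : ℤ) ≤ g.1 → |rotForm ω g| < R →
      g ∈ boxCone (rotForm ω) r (boxHeight ω T θ₀ x₁) (boxHeight ω T θ₀ x₂)) :
    ∃ γ : T1 → ℝ, Continuous γ ∧ (∀ θ, (θ, γ θ) ∈ C) ∧
      ∃ K : ℕ, 1 ≤ K ∧ ∀ θ, γ (θ + K • (ω : T1)) < ((T ^ K) (θ, γ θ)).2 := by
  obtain ⟨hR₀, hRr⟩ := hR
  refine hT.exists_curve_lt_zpow (denseRange_zsmul_coe_of_irrational hω) hC hCconn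
    (isOpen_arc θ₀ (-(R / 2)) (R / 2)) (nonempty_arc _ (by linarith)) hx
    (mem_of_mem_arc (fun t ht => hbox t ht x₁ ⟨le_rfl, hx.le⟩) (by linarith) (by linarith))
    (mem_of_mem_arc (fun t ht => hbox t ht x₂ ⟨hx.le, le_rfl⟩) (by linarith) (by linarith))
    (N := N) fun θ k n hk hn hkn => ?_
  obtain ⟨t, p, q, rfl, hp, hq⟩ := exists_lift_mem_Ioo hk hn
  refine H.hi_lt_lo_of_sub_mem_boxCone (g := (k, p)) (h := (n, q)) (hP _ ?_ ?_)
    ((abs_lt.2 hp).trans_le (by linarith)) ((abs_lt.2 hq).trans_le (by linarith))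
  · exact le_sub_iff_add_le'.2 hkn
  · rw [map_sub]
    exact abs_lt.2 ⟨by linarith [hp.1, hq.2], by linarith [hp.2, hq.1]⟩

theorem exists_curve_zpow_lt_of_eventually_neg_mem (hω : Irrational ω)
    (hT : IsFiberedOver (ω : T1) T)
    (hC : T '' C = C) (hCconn : ∀ θ, {x | (θ, x) ∈ C}.OrdConnected) (hx : x₁ < x₂)
    (hbox : ∀ t : ℝ, |t| < r → ∀ x ∈ Set.Icc x₁ x₂, (θ₀ + (t : T1), x) ∈ C)
    (H : IsBoxSystem (rotForm ω) r (boxHeight ω T θ₀ x₁) (boxHeight ω T θ₀ x₂))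
    {R : ℝ} (hR : R ∈ Set.Ioc 0 (2 * r)) {N : ℕ}
    (hP : ∀ g : ℤ × ℤ, (N : ℤ) ≤ g.1 → |rotForm ω g| < R →
      -g ∈ boxCone (rotForm ω) r (boxHeight ω T θ₀ x₁) (boxHeight ω T θ₀ x₂)) :
    ∃ γ : T1 → ℝ, Continuous γ ∧ (∀ θ, (θ, γ θ) ∈ C) ∧
      ∃ K : ℕ, 1 ≤ K ∧ ∀ θ, ((T ^ K) (θ, γ θ)).2 < γ (θ + K • (ω : T1)) := by
  obtain ⟨hR₀, hRr⟩ := hR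
  refine hT.exists_curve_zpow_lt (denseRange_zsmul_coe_of_irrational hω) hC hCconn
    (isOpen_arc θ₀ (-(R / 2)) (R / 2)) (nonempty_arc _ (by linarith)) hx
    (mem_of_mem_arc (fun t ht => hbox t ht x₁ ⟨le_rfl, hx.le⟩) (by linarith) (by linarith))
    (mem_of_mem_arc (fun t ht => hbox t ht x₂ ⟨hx.le, le_rfl⟩) (by linarith) (by linarith))
    (N := N) fun θ k n hk hn hkn => ?_
  obtain ⟨t, p, q, rfl, hp, hq⟩ := exists_lift_mem_Ioo hk hn
  refine H.hi_lt_lo_of_sub_mem_boxCone (g := (n, q)) (h := (k, p)) ?_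
    ((abs_lt.2 hq).trans_le (by linarith)) ((abs_lt.2 hp).trans_le (by linarith))
  rw [← neg_sub]
  refine hP _ (le_sub_iff_add_le'.2 hkn) ?_
  rw [map_sub]
  exact abs_lt.2 ⟨by linarith [hp.1, hq.2], by linarith [hp.2, hq.1]⟩

theorem wandering_set_gives_curve_general (hω : Irrational ω) (hT : IsFiberedOver (ω : T1) T)
    (hC : T '' C = C) (hCconn : ∀ θ, {x | (θ, x) ∈ C}.OrdConnected)
    (hCstrip : ∀ S ⊆ C, ¬ IsInvariantStrip T S) (hWo : IsOpen W) (hWne : W.Nonempty)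
    (hWC : W ⊆ C) (hWand : ∀ n : ℕ, 1 ≤ n → Disjoint ((T ^ n) '' W) W) :
    ∃ γ : T1 → ℝ, Continuous γ ∧ (∀ θ, (θ, γ θ) ∈ C) ∧
      ∃ N : ℕ, 1 ≤ N ∧
        ((∀ θ, γ (θ + N • (ω : T1)) < ((T ^ N) (θ, γ θ)).2) ∨
         (∀ θ, ((T ^ N) (θ, γ θ)).2 < γ (θ + N • (ω : T1)))) := by
  obtain ⟨θ₀, x₁, x₂, r, hx, hr, hr', hbox⟩ := exists_box_subset hWo hWne
  have H := isBoxSystem_boxHeight hT hx hr' hbox hWand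
  replace hbox := fun t ht x hx => hWC (hbox t ht x hx)
  rcases H.isLocalCone_boxCone.rotForm_trichotomy with
    hP | hP | ⟨R, hR, N, hP | hP⟩
  · obtain ⟨S, hSC, hS⟩ := exists_isInvariantStrip_subset hω hT hC hCconn hx.le hbox H
      (by linarith) hr le_rfl le_rfl (neg_lt_zero.2 hr) hr.le fun u hu v hv g hg =>
        ⟨by rintro rfl; linarith [map_zero (rotForm ω), hu.1, hv.2],
          fun hgP => by linarith [hP g hgP, hu.1, hv.2]⟩
    exact (hCstrip S hSC hS).elim
  · obtain ⟨S, hSC, hS⟩ := exists_isInvariantStrip_subset hω hT hC hCconn hx.le hbox H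
      le_rfl (neg_lt_zero.2 hr) hr.le (by linarith) hr le_rfl fun u hu v hv g hg =>
        ⟨by rintro rfl; linarith [map_zero (rotForm ω), hu.2, hv.1],
          fun hgP => by linarith [hP g hgP, hu.2, hv.1]⟩
    exact (hCstrip S hSC hS).elim
  · obtain ⟨γ, hγ, hγC, K, hK, hlt⟩ :=
      exists_curve_lt_zpow_of_eventually_mem hω hT hC hCconn hx hbox H hR hP
    exact ⟨γ, hγ, hγC, K, hK, Or.inl hlt⟩
  · obtain ⟨γ, hγ, hγC, K, hK, hlt⟩ :=
      exists_curve_zpow_lt_of_eventually_neg_mem hω hT hC hCconn hx hbox H hR hP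
    exact ⟨γ, hγ, hγC, K, hK, Or.inr hlt⟩

end Curves

/-! ### Skew products over a rotation -/

theorem continuous_of_strictMono_apply_eq {Z : Type*} [TopologicalSpace Z] {φ : Z → ℝ → ℝ}
    {u v : Z → ℝ} (hφ : ∀ x, Continuous fun z => φ z x) (hmono : ∀ z, StrictMono (φ z))
    (hv : Continuous v) (huv : ∀ z, φ z (u z) = v z) : Continuous u := by
  refine continuous_iff_continuousAt.2 fun z => tendsto_order.2 ⟨fun x hx => ?_, fun x hx => ?_⟩
  · have hlt : φ z x < v z := huv z ▸ hmono z hx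
    filter_upwards [(hφ x).continuousAt.eventually_lt hv.continuousAt hlt] with z' hz'
    rwa [← huv z', (hmono z').lt_iff_lt] at hz'
  · have hlt : v z < φ z x := huv z ▸ hmono z hx
    filter_upwards [hv.continuousAt.eventually_lt (hφ x).continuousAt hlt] with z' hz'
    rwa [← huv z', (hmono z').lt_iff_lt] at hz'

section Skew

variable {ω : ℝ} {F : T1 → ℝ → ℝ}

/-- The fiber map `F_θ` as an order isomorphism, which provides its inverse. -/
def fiberIso (hF : IsQpfLift ω F) (θ : T1) : ℝ ≃o ℝ :=
  (hF.mono θ).orderIsoOfSurjective _ (hF.surj θ)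

theorem apply_fiberIso_symm (hF : IsQpfLift ω F) (θ : T1) (y : ℝ) :
    F θ ((fiberIso hF θ).symm y) = y :=
  (fiberIso hF θ).apply_symm_apply y

theorem continuous_fiberIso_symm (hF : IsQpfLift ω F) :
    Continuous fun q : T1 × ℝ => (fiberIso hF (q.1 - (ω : T1))).symm q.2 :=
  continuous_of_strictMono_apply_eq (φ := fun (q : T1 × ℝ) x => F (q.1 - (ω : T1)) x)
    (fun _ => hF.cont.comp ((continuous_fst.sub continuous_const).prodMk continuous_const))
    (fun _ => hF.mono _) continuous_snd fun _ => apply_fiberIso_symm hF _ _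

/-- The skew product of a quasiperiodically forced lift, as a homeomorphism of `T¹ × ℝ`. -/
def skewHomeo (hF : IsQpfLift ω F) : T1 × ℝ ≃ₜ T1 × ℝ where
  toFun := skew ω F
  invFun q := (q.1 - (ω : T1), (fiberIso hF (q.1 - (ω : T1))).symm q.2)
  left_inv q := Prod.ext (add_sub_cancel_right _ _) <| by
    dsimp only [skew]
    rw [add_sub_cancel_right]
    exact (fiberIso hF q.1).symm_apply_apply q.2
  right_inv q := Prod.ext (sub_add_cancel _ _) (apply_fiberIso_symm hF _ _)
  continuous_toFun := (continuous_fst.add continuous_const).prodMk hF.cont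
  continuous_invFun := (continuous_fst.sub continuous_const).prodMk (continuous_fiberIso_symm hF)

theorem isFiberedOver_skewHomeo (hF : IsQpfLift ω F) :
    IsFiberedOver (ω : T1) (skewHomeo hF) :=
  ⟨fun _ => rfl, hF.mono⟩

theorem coe_skewHomeo_pow (hF : IsQpfLift ω F) (n : ℕ) : ⇑(skewHomeo hF ^ n) = (skew ω F)^[n] := by
  induction n with
  | zero => rfl
  | succ n ih =>
    rw [pow_succ, Function.iterate_succ, ← ih]
    rfl

theorem skew_iterate_apply (n : ℕ) (θ : T1) (x : ℝ) :
    (skew ω F)^[n] (θ, x) = (θ + n • (ω : T1), fiberIter ω F n θ x) := by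
  induction n generalizing θ x with
  | zero => simp [fiberIter]
  | succ n ih =>
    rw [Function.iterate_succ_apply, skew, ih, fiberIter, succ_nsmul' (ω : T1) n, add_assoc]

end Skew

/-- The region strictly between the upper bounding graph of `A` and the lower one of `B`. -/
def gap (A B : Set (T1 × ℝ)) : Set (T1 × ℝ) :=
  {p | phiSup A p.1 < p.2 ∧ p.2 < phiInf B p.1}

theorem ordConnected_fiber_gap (A B : Set (T1 × ℝ)) (θ : T1) :
    {x | (θ, x) ∈ gap A B}.OrdConnected :=
  Set.ordConnected_Ioo (a := phiSup A θ) (b := phiInf B θ)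

namespace IsInvStrip

variable {ω : ℝ} {F : T1 → ℝ → ℝ} {A B S : Set (T1 × ℝ)}

theorem phiInf_le_phiSup (hA : IsInvStrip ω F A) (θ : T1) : phiInf A θ ≤ phiSup A θ := by
  obtain ⟨y, z, hyz, h⟩ := hA.2.2 θ
  rwa [phiInf, phiSup, h, csInf_Icc hyz, csSup_Icc hyz]

theorem fiber_eq_Icc (hA : IsInvStrip ω F A) (θ : T1) :
    {x | (θ, x) ∈ A} = Set.Icc (phiInf A θ) (phiSup A θ) := by
  obtain ⟨y, z, hyz, h⟩ := hA.2.2 θ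
  rw [phiInf, phiSup, h, csInf_Icc hyz, csSup_Icc hyz]

theorem mk_phiInf_mem (hA : IsInvStrip ω F A) (θ : T1) : (θ, phiInf A θ) ∈ A :=
  (hA.fiber_eq_Icc θ).ge ⟨le_rfl, hA.phiInf_le_phiSup θ⟩

theorem mk_phiSup_mem (hA : IsInvStrip ω F A) (θ : T1) : (θ, phiSup A θ) ∈ A :=
  (hA.fiber_eq_Icc θ).ge ⟨hA.phiInf_le_phiSup θ, le_rfl⟩

theorem apply_phiInf_and_apply_phiSup (hF : IsQpfLift ω F) (hA : IsInvStrip ω F A) (θ : T1) :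
    F θ (phiInf A θ) = phiInf A (θ + (ω : T1)) ∧ F θ (phiSup A θ) = phiSup A (θ + (ω : T1)) := by
  have hmem := image_eq_self_iff (T := skewHomeo hF).1 hA.2.1
  have hfiber : fiberIso hF θ '' {x | (θ, x) ∈ A} = {x | (θ + (ω : T1), x) ∈ A} := by
    refine Set.Subset.antisymm (Set.image_subset_iff.2 fun x hx => (hmem (θ, x)).2 hx)
      fun y hy => ?_
    obtain ⟨x, rfl⟩ := (fiberIso hF θ).surjective y
    exact ⟨x, (hmem (θ, x)).1 hy, rfl⟩
  rw [hA.fiber_eq_Icc, hA.fiber_eq_Icc, OrderIso.image_Icc] at hfiber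
  exact (Set.Icc_eq_Icc_iff ((fiberIso hF θ).monotone (hA.phiInf_le_phiSup θ))).1 hfiber

theorem image_gap (hF : IsQpfLift ω F) (hA : IsInvStrip ω F A) (hB : IsInvStrip ω F B) :
    skewHomeo hF '' gap A B = gap A B := by
  refine image_eq_self_iff.2 fun q => ?_
  change phiSup A (q.1 + (ω : T1)) < F q.1 q.2 ∧ F q.1 q.2 < phiInf B (q.1 + (ω : T1)) ↔ _
  rw [← (apply_phiInf_and_apply_phiSup hF hA q.1).2, ← (apply_phiInf_and_apply_phiSup hF hB q.1).1,
    (hF.mono _).lt_iff_lt, (hF.mono _).lt_iff_lt]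
  rfl

theorem stripLt_and_stripLt_of_subset_gap (hS : IsInvStrip ω F S) (h : S ⊆ gap A B) :
    StripLt A S ∧ StripLt S B :=
  ⟨fun θ => (h (hS.mk_phiInf_mem θ)).1, fun θ => (h (hS.mk_phiSup_mem θ)).2⟩

end IsInvStrip

/-- Lemma 4.4: a wandering open set between two neighboring minimal
invariant strips produces a continuous curve in the gap that is mapped strictly above or
strictly below itself by some iterate of `F`. -/
theorem wandering_set_gives_curve
    (ω : ℝ) (hω : Irrational ω)
    (F : T1 → ℝ → ℝ) (hF : IsQpfLift ω F)
    (A B : Set (T1 × ℝ))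
    (hA : IsMinimalStrip ω F A) (hB : IsMinimalStrip ω F B) (hAB : StripLt A B)
    (hgap : ¬ ∃ S : Set (T1 × ℝ), IsInvStrip ω F S ∧ StripLt A S ∧ StripLt S B)
    (C : Set (T1 × ℝ))
    (hC : C = {p : T1 × ℝ | phiSup A p.1 < p.2 ∧ p.2 < phiInf B p.1})
    (W : Set (T1 × ℝ)) (hWo : IsOpen W) (hWne : W.Nonempty) (hWC : W ⊆ C)
    (hWand : ∀ n : ℕ, 1 ≤ n → ((skew ω F)^[n] '' W) ∩ W = ∅) :
    ∃ γ : T1 → ℝ, Continuous γ ∧ (∀ θ, (θ, γ θ) ∈ C) ∧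
      ∃ N : ℕ, 1 ≤ N ∧
        ((∀ θ, γ (θ + N • (ω : T1)) < fiberIter ω F N θ (γ θ)) ∨
         (∀ θ, fiberIter ω F N θ (γ θ) < γ (θ + N • (ω : T1)))) := by
  subst hC
  have hcurve := wandering_set_gives_curve_general hω (isFiberedOver_skewHomeo hF)
    (hA.1.image_gap hF hB.1) (ordConnected_fiber_gap A B)
    (fun S hSC hS => hgap ⟨S, hS, IsInvStrip.stripLt_and_stripLt_of_subset_gap hS hSC⟩) hWo hWne
    hWC fun n hn => by rw [coe_skewHomeo_pow, Set.disjoint_iff_inter_eq_empty, hWand n hn]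
  simp only [coe_skewHomeo_pow, skew_iterate_apply] at hcurve
  exact hcurve
end
end
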